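/- arXiv:math/0702277 — 6 statements merged into one kernel-verified Lean document; each statement's English description precedes it below -/
import Mathlib

section
/- For every positive integer k, Σ_{σ∈S_k} ∏_{1≤i<j≤k} (s_{σ(i)} − s_{σ(j)} − 1)/(s_{σ(i)} − s_{σ(j)}) = k!, as an identity of rational functions in s_1,…,s_k (equivalently, for all pairwise distinct complex numbers s_1,…,s_k). -/
open Polynomial in
theorem sym_aux_lagrange (n : ℕ) (s : Fin (n + 1) → ℂ) (hs : Function.Injective s) :
    ∑ p, ∏ j ∈ Finset.univ.erase p, (s p - s j - 1) / (s p - s j) = ((n + 1 : ℕ) : ℂ) := by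
  set f : ℂ[X] := ∏ j, (X - C (s j + 1)) with hf
  set g : ℂ[X] := ∏ j, (X - C (s j)) with hg
  have hfm : f.Monic := monic_prod_X_sub_C _ _
  have hgm : g.Monic := monic_prod_X_sub_C _ _
  have hfd : f.degree = ((n + 1 : ℕ) : WithBot ℕ) := by
    rw [hf, degree_prod]; simp only [degree_X_sub_C]; simp
  have hgd : g.degree = ((n + 1 : ℕ) : WithBot ℕ) := by
    rw [hg, degree_prod]; simp
  have hdeg : (f - g).degree < ((Finset.univ : Finset (Fin (n + 1))).card : WithBot ℕ) := by
    have := degree_sub_lt_left (hfd.trans hgd.symm) hfm.ne_zero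
      (by rw [hfm.leadingCoeff, hgm.leadingCoeff])
    rw [hfd] at this
    simpa using this
  have hc := Lagrange.coeff_eq_sum (s := Finset.univ) (v := s) hs.injOn hdeg
  rw [coeff_sub, hf, hg, prod_X_sub_C_coeff_card_pred _ _ (by simp),
    prod_X_sub_C_coeff_card_pred _ _ (by simp)] at hc
  have h2 : ∀ p, (f - g).eval (s p) / ∏ j ∈ Finset.univ.erase p, (s p - s j)
      = - ∏ j ∈ Finset.univ.erase p, (s p - s j - 1) / (s p - s j) := by
    intro p
    have e1 : g.eval (s p) = 0 := by
      rw [hg, eval_prod]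
      exact Finset.prod_eq_zero (Finset.mem_univ p) (by simp)
    have e2 : f.eval (s p) = - ∏ j ∈ Finset.univ.erase p, (s p - s j - 1) := by
      rw [hf, eval_prod, ← Finset.mul_prod_erase _ _ (Finset.mem_univ p)]
      simp [sub_sub]
    rw [eval_sub, e1, e2, Finset.prod_div_distrib, sub_zero, neg_div]
  rw [← hf, ← hg, Finset.sum_congr rfl (fun p _ => h2 p), Finset.sum_neg_distrib,
    Finset.sum_add_distrib] at hc
  simp [-Finset.prod_div_distrib] at hc
  push_cast
  linear_combination hc

theorem sym_aux (k : ℕ) : ∀ (s : Fin k → ℂ), Function.Injective s →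
    ∑ σ : Equiv.Perm (Fin k), ∏ i : Fin k, ∏ j ∈ Finset.Ioi i,
      (s (σ i) - s (σ j) - 1) / (s (σ i) - s (σ j)) = (Nat.factorial k : ℂ) := by
  induction k with
  | zero => intro s _; simp
  | succ n ih =>
    intro s hs
    rw [← Equiv.sum_comp Equiv.Perm.decomposeFin.symm, Fintype.sum_prod_type]
    have key : ∀ p : Fin (n + 1), ∑ e : Equiv.Perm (Fin n), ∏ i : Fin (n + 1),
        ∏ j ∈ Finset.Ioi i,
          (s (Equiv.Perm.decomposeFin.symm (p, e) i) - s (Equiv.Perm.decomposeFin.symm (p, e) j) - 1)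
          / (s (Equiv.Perm.decomposeFin.symm (p, e) i) - s (Equiv.Perm.decomposeFin.symm (p, e) j))
        = (∏ j ∈ Finset.univ.erase p, (s p - s j - 1) / (s p - s j)) * (Nat.factorial n : ℂ) := by
      intro p
      rw [← ih (fun i => s (Equiv.swap 0 p i.succ))
        (fun a b h => Fin.succ_injective _ ((Equiv.swap 0 p).injective (hs h))), Finset.mul_sum]
      refine Finset.sum_congr rfl fun e _ => ?_
      rw [Fin.prod_univ_succ, Fin.prod_Ioi_zero]
      simp only [Fin.prod_Ioi_succ, Equiv.Perm.decomposeFin_symm_apply_zero,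
        Equiv.Perm.decomposeFin_symm_apply_succ]
      congr 1
      rw [Equiv.prod_comp e (fun j => (s p - s (Equiv.swap 0 p j.succ) - 1)
        / (s p - s (Equiv.swap 0 p j.succ)))]
      refine Finset.prod_bij (fun j _ => Equiv.swap 0 p j.succ) ?_ ?_ ?_ ?_
      · intro j _
        rw [Finset.mem_erase]
        refine ⟨fun h => ?_, Finset.mem_univ _⟩
        have h' : Equiv.swap 0 p j.succ = Equiv.swap 0 p 0 := by
          rw [h, Equiv.swap_apply_left]
        exact Fin.succ_ne_zero j ((Equiv.swap 0 p).injective h')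
      · intro a _ b _ h
        exact Fin.succ_injective _ ((Equiv.swap 0 p).injective h)
      · intro b hb
        have hne : Equiv.swap 0 p b ≠ 0 := fun h => by
          have : b = p := by
            have := congrArg (Equiv.swap 0 p) h
            simpa using this
          exact (Finset.mem_erase.1 hb).1 this
        obtain ⟨j, hj⟩ := Fin.exists_succ_eq.2 hne
        exact ⟨j, Finset.mem_univ _, by rw [hj]; simp⟩
      · intro _ _; rfl
    rw [Finset.sum_congr rfl (fun p _ => key p), ← Finset.sum_mul, sym_aux_lagrange n s hs,
      Nat.factorial_succ, Nat.cast_mul]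

/-- For every positive integer `k`,
`∑_{σ ∈ S_k} ∏_{1 ≤ i < j ≤ k} (s_{σ(i)} − s_{σ(j)} − 1)/(s_{σ(i)} − s_{σ(j)}) = k!`
for all pairwise distinct complex numbers `s_1, …, s_k`. -/
theorem sym_factorial_identity (k : ℕ) (hk : 0 < k) (s : Fin k → ℂ)
    (hs : Function.Injective s) :
    ∑ σ : Equiv.Perm (Fin k), ∏ i : Fin k, ∏ j ∈ Finset.Ioi i,
      (s (σ i) - s (σ j) - 1) / (s (σ i) - s (σ j)) = (Nat.factorial k : ℂ) := by
  exact sym_aux k s hs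
end

section
/- For every positive integer k, Σ_{σ∈S_k} ∏_{1≤i<j≤k} (q^{-1} s_{σ(i)} − q s_{σ(j)})/(s_{σ(i)} − s_{σ(j)}) = [k]_q!, as an identity of rational functions in q, s_1,…,s_k (equivalently, for every nonzero complex number q and all pairwise distinct complex numbers s_1,…,s_k). -/
/-- The q-number `[n]_q = q^{n−1} + q^{n−3} + … + q^{1−n}`. -/
noncomputable def qInt (q : ℂ) (n : ℕ) : ℂ :=
  ∑ i ∈ Finset.range n, q ^ (n - 1 - i) * q⁻¹ ^ i

/-- The q-factorial `[k]_q! = ∏_{r=1}^k [r]_q`. -/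
noncomputable def qFact (q : ℂ) (k : ℕ) : ℂ :=
  ∏ r ∈ Finset.range k, qInt q (r + 1)

open Polynomial in
/-- An interpolating polynomial for `∏_{j ≠ p} (a s_p - b s_j)`. -/
lemma exists_interp {ι : Type*} [DecidableEq ι] (a b : ℂ) (s : ι → ℂ) (S : Finset ι) :
    ∃ Q : ℂ[X], (∀ n, S.card ≤ n → Q.coeff n = 0) ∧
      (X * Q).coeff S.card = ∑ i ∈ Finset.range S.card, a ^ (S.card - 1 - i) * b ^ i ∧
      (∀ x, (a - b) * x * Q.eval x + b ^ S.card * ∏ j ∈ S, (x - s j) =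
        ∏ j ∈ S, (a * x - b * s j)) ∧
      ∀ p ∈ S, Q.eval (s p) = ∏ j ∈ S.erase p, (a * s p - b * s j) := by
  induction S using Finset.induction_on with
  | empty => exact ⟨0, by simp⟩
  | insert t S ht ih =>
    obtain ⟨Q, h1, h2, h3, h4⟩ := ih
    have hdeg : (Lagrange.nodal S s).natDegree = S.card := Lagrange.natDegree_nodal
    have hmon : (Lagrange.nodal S s).coeff S.card = 1 := by
      have := (Lagrange.nodal_monic (s := S) (v := s)).coeff_natDegree
      rwa [hdeg] at this
    refine ⟨C a * (X * Q) - C (b * s t) * Q + C (b ^ S.card) * Lagrange.nodal S s, ?_, ?_, ?_, ?_⟩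
    · intro n hn
      rw [Finset.card_insert_of_notMem ht] at hn
      obtain ⟨m, rfl⟩ : ∃ m, n = m + 1 := ⟨n - 1, by omega⟩
      have : (Lagrange.nodal S s).coeff (m + 1) = 0 :=
        coeff_eq_zero_of_natDegree_lt (by omega)
      simp only [coeff_add, coeff_sub, coeff_C_mul, coeff_X_mul, this, h1 m (by omega),
        h1 (m + 1) (by omega)]
      simp
    · rw [Finset.card_insert_of_notMem ht, coeff_X_mul]
      simp only [coeff_add, coeff_sub, coeff_C_mul, h1 _ le_rfl, h2, hmon]
      rw [Finset.sum_range_succ, Finset.mul_sum]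
      simp only [mul_zero, sub_zero, mul_one, add_tsub_cancel_right, Nat.sub_self, pow_zero,
        one_mul]
      congr 1
      refine Finset.sum_congr rfl fun i hi => ?_
      have hi := Finset.mem_range.1 hi
      rw [show S.card - i = (S.card - 1 - i) + 1 by omega, pow_succ]
      ring
    · intro x
      rw [Finset.card_insert_of_notMem ht, Finset.prod_insert ht, Finset.prod_insert ht, ← h3 x]
      simp only [eval_add, eval_sub, eval_mul, eval_C, eval_X, Lagrange.eval_nodal]
      ring
    · intro p hp
      simp only [eval_add, eval_sub, eval_mul, eval_C, eval_X, Lagrange.eval_nodal]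
      rcases Finset.mem_insert.1 hp with rfl | hp
      · rw [Finset.erase_insert ht, ← h3]
        ring
      · have hne : t ≠ p := fun h => ht (h ▸ hp)
        rw [Finset.erase_insert_of_ne hne, Finset.prod_insert (by simp [ht]), h4 p hp,
          Finset.prod_eq_zero hp (sub_self _)]
        ring

lemma sum_prod_erase (n : ℕ) (a b : ℂ) (s : Fin (n + 1) → ℂ) (hs : Function.Injective s) :
    ∑ p, ∏ j ∈ Finset.univ.erase p, (a * s p - b * s j) / (s p - s j) =
      ∑ i ∈ Finset.range (n + 1), a ^ (n - i) * b ^ i := by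
  obtain ⟨Q, h1, h2, -, h4⟩ := exists_interp a b s Finset.univ
  have h := Lagrange.coeff_eq_sum (s := Finset.univ) (v := s) hs.injOn (P := Q)
    ((Polynomial.degree_lt_iff_coeff_zero _ _).2 h1)
  simp only [Finset.card_univ, Fintype.card_fin, add_tsub_cancel_right,
    Polynomial.coeff_X_mul] at h h2
  rw [← h2, h]
  refine Finset.sum_congr rfl fun p hp => ?_
  rw [h4 p hp, Finset.prod_div_distrib]

lemma prod_swap_succ (n : ℕ) (p : Fin (n + 1)) (f : Fin (n + 1) → ℂ) :
    ∏ j : Fin n, f (Equiv.swap 0 p j.succ) = ∏ j ∈ Finset.univ.erase p, f j := by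
  rw [← Fin.prod_Ioi_zero (fun j => f (Equiv.swap 0 p j))]
  refine Finset.prod_equiv (Equiv.swap 0 p) (fun i => ?_) (fun i _ => rfl)
  simp only [Finset.mem_Ioi, Finset.mem_erase, Finset.mem_univ, and_true]
  rw [Fin.pos_iff_ne_zero, ne_eq, ne_eq, Equiv.swap_apply_eq_iff, Equiv.swap_apply_right]

lemma q_sym_aux (q : ℂ) (k : ℕ) : ∀ (s : Fin k → ℂ), Function.Injective s →
    ∑ σ : Equiv.Perm (Fin k), ∏ i : Fin k, ∏ j ∈ Finset.Ioi i,
      (q⁻¹ * s (σ i) - q * s (σ j)) / (s (σ i) - s (σ j)) = qFact q k := by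
  induction k with
  | zero => intro s _; simp [qFact]
  | succ n ih =>
    intro s hs
    rw [← Equiv.sum_comp Equiv.Perm.decomposeFin.symm, Fintype.sum_prod_type]
    simp only [Fin.prod_univ_succ, Fin.prod_Ioi_zero, Fin.prod_Ioi_succ,
      Equiv.Perm.decomposeFin_symm_apply_zero, Equiv.Perm.decomposeFin_symm_apply_succ]
    have key : ∀ (p : Fin (n + 1)) (e : Equiv.Perm (Fin n)),
        ∏ j : Fin n, (q⁻¹ * s p - q * s (Equiv.swap 0 p (e j).succ)) /
          (s p - s (Equiv.swap 0 p (e j).succ)) =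
        ∏ j ∈ Finset.univ.erase p, (q⁻¹ * s p - q * s j) / (s p - s j) := by
      intro p e
      rw [Equiv.prod_comp e (fun j => (q⁻¹ * s p - q * s (Equiv.swap 0 p j.succ)) /
          (s p - s (Equiv.swap 0 p j.succ)))]
      exact prod_swap_succ n p (fun j => (q⁻¹ * s p - q * s j) / (s p - s j))
    simp only [key, ← Finset.mul_sum]
    have ih' := fun p : Fin (n + 1) => ih (fun j => s (Equiv.swap 0 p j.succ))
      (hs.comp ((Equiv.swap 0 p).injective.comp (Fin.succ_injective n)))
    simp only [ih', ← Finset.sum_mul]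
    rw [sum_prod_erase n _ _ s hs, qFact, qFact, Finset.prod_range_succ, mul_comm]
    congr 1
    rw [qInt, ← Finset.sum_range_reflect]
    refine Finset.sum_congr rfl fun i hi => ?_
    have hi := Finset.mem_range.1 hi
    simp only [add_tsub_cancel_right]
    rw [show n - (n - i) = i by omega, mul_comm]

/-- For every positive integer `k`,
`∑_{σ ∈ S_k} ∏_{1 ≤ i < j ≤ k} (q⁻¹ s_{σ(i)} − q s_{σ(j)})/(s_{σ(i)} − s_{σ(j)}) = [k]_q!`
for every nonzero complex `q` and all pairwise distinct complex numbers `s_1, …, s_k`. -/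
theorem q_sym_factorial_identity (k : ℕ) (hk : 0 < k) (q : ℂ) (hq : q ≠ 0)
    (s : Fin k → ℂ) (hs : Function.Injective s) :
    ∑ σ : Equiv.Perm (Fin k), ∏ i : Fin k, ∏ j ∈ Finset.Ioi i,
      (q⁻¹ * s (σ i) - q * s (σ j)) / (s (σ i) - s (σ j)) = qFact q k := by
  exact q_sym_aux q k s hs
end

section
/- Let p ≤ r be positive integers. Then G_{p,r}(y_1,…,y_p; z_1,…,z_r) = Σ_{1≤d_1<d_2<…<d_p≤r} S̄ym_{y_1,…,y_p}[ ∏_{i=1}^p ( (1/(y_i − z_{d_i})) · ∏_{d_i<j≤r} (y_i − z_j + 1)/(y_i − z_j) ) ], the sum being taken over all p-tuples d = (d_1,…,d_p) of integers with 1 ≤ d_1 < … < d_p ≤ r. -/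
open scoped Classical

/-- `W_k(t_1,…,t_k) = ∏_{1≤i<j≤k} (t_i − t_j − 1)/(t_i − t_j)`. -/
noncomputable def W {k : ℕ} (t : Fin k → ℂ) : ℂ :=
  ∏ i : Fin k, ∏ j ∈ Finset.Ioi i, (t i - t j - 1) / (t i - t j)

/-- For `i = 1,…,p`, the index `i + r − p` regarded as an index in `1,…,r`. -/
def shiftIdx (p r : ℕ) (h : p ≤ r) (i : Fin p) : Fin r :=
  ⟨(i : ℕ) + (r - p), by have := i.isLt; omega⟩

/-- `G_{p,r}(y_1,…,y_p; z_1,…,z_r) = (1/(r−p)!) · S̄ym_{z_1,…,z_r}[ ∏_{i=1}^p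
( (1/(y_i − z_{i+r−p})) · ∏_{i<j≤p} (y_i − z_{j+r−p} + 1)/(y_i − z_{j+r−p}) ) ]`,
where `S̄ym_z f = ∑_{σ ∈ S_r} (f · W_r)(z∘σ)`. -/
noncomputable def G (p r : ℕ) (h : p ≤ r) (y : Fin p → ℂ) (z : Fin r → ℂ) : ℂ :=
  (1 / (Nat.factorial (r - p) : ℂ)) *
    ∑ σ : Equiv.Perm (Fin r),
      (∏ i : Fin p, ((1 / (y i - z (σ (shiftIdx p r h i)))) *
        ∏ j ∈ Finset.Ioi i, ((y i - z (σ (shiftIdx p r h j)) + 1) /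
          (y i - z (σ (shiftIdx p r h j)))))) * W (z ∘ σ)


namespace GyzAux

noncomputable def phi (a b : ℂ) : ℂ := (a - b + 1) / (a - b)
noncomputable def P (w : ℂ) (Y : Finset ℂ) : ℂ := ∏ k ∈ Y, phi k w
noncomputable def Q (z : ℂ) (Y : Finset ℂ) : ℂ := ∏ k ∈ Y, phi z k
noncomputable def c (Y : Finset ℂ) (k : ℂ) : ℂ := Q k (Y.erase k)

noncomputable def R : List ℂ → Finset ℂ → ℂ
  | [], Y => if Y = ∅ then 1 else 0
  | w :: L, Y => P w Y * R L Y +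
      ∑ k ∈ Y, 1 / (k - w) * P w (Y.erase k) * c Y k * R L (Y.erase k)

lemma R_cons (w : ℂ) (L : List ℂ) (Y : Finset ℂ) : R (w :: L) Y = P w Y * R L Y +
      ∑ k ∈ Y, 1 / (k - w) * P w (Y.erase k) * c Y k * R L (Y.erase k) := rfl

lemma P_insert {w y : ℂ} {Y : Finset ℂ} (h : y ∉ Y) : P w (insert y Y) = phi y w * P w Y :=
  Finset.prod_insert h

lemma Q_insert {w y : ℂ} {Y : Finset ℂ} (h : y ∉ Y) : Q w (insert y Y) = phi w y * Q w Y :=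
  Finset.prod_insert h

lemma P_erase {w y : ℂ} {Y : Finset ℂ} (h : y ∈ Y) : P w Y = phi y w * P w (Y.erase y) :=
  (Finset.mul_prod_erase Y (fun k => phi k w) h).symm

lemma Q_erase {w y : ℂ} {Y : Finset ℂ} (h : y ∈ Y) : Q w Y = phi w y * Q w (Y.erase y) :=
  (Finset.mul_prod_erase Y (fun k => phi w k) h).symm

lemma erase_insert_comm {y k : ℂ} {Y : Finset ℂ} (hy : y ∉ Y) (hk : k ∈ Y) :
    (insert y Y).erase k = insert y (Y.erase k) := by
  apply Finset.erase_insert_of_ne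
  rintro rfl; exact hy hk

lemma c_insert_self {y : ℂ} {Y : Finset ℂ} (h : y ∉ Y) : c (insert y Y) y = Q y Y := by
  rw [c, Finset.erase_insert h]

lemma c_insert {y k : ℂ} {Y : Finset ℂ} (h : y ∉ Y) (hk : k ∈ Y) :
    c (insert y Y) k = phi k y * c Y k := by
  rw [c, erase_insert_comm h hk, Q_insert (by simp [h]), c]

lemma c_erase {l k : ℂ} {Y : Finset ℂ} (h : l ∈ Y) (hk : k ≠ l) :
    c Y k = phi k l * c (Y.erase l) k := by
  rw [c, c, Q_erase (y := l) (by simp [h, hk.symm]), Finset.erase_right_comm]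

lemma partial_fractions (Y : Finset ℂ) : ∀ y, y ∉ Y →
    Q y Y = 1 + ∑ k ∈ Y, c Y k / (y - k) := by
  induction Y using Finset.induction_on with
  | empty => intro y _; simp [Q]
  | insert w Y hw ih =>
    intro y hy
    have hyw : y - w ≠ 0 := by
      intro h; apply hy; simp [sub_eq_zero.1 h]
    have hyY : y ∉ Y := fun h => hy (by simp [h])
    rw [Q_insert hw, Finset.sum_insert hw, c_insert_self hw, ih w hw, ih y hyY]
    have h2 : ∑ k ∈ Y, c (insert w Y) k / (y - k) =
        phi y w * ∑ k ∈ Y, c Y k / (y - k) - 1 / (y - w) * ∑ k ∈ Y, c Y k / (w - k) := by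
      rw [Finset.mul_sum, Finset.mul_sum, ← Finset.sum_sub_distrib]
      apply Finset.sum_congr rfl
      intro k hk
      have h1 : y - k ≠ 0 := by
        intro h; apply hyY; rw [sub_eq_zero.1 h]; exact hk
      have h2 : w - k ≠ 0 := by
        intro h; apply hw; rw [sub_eq_zero.1 h]; exact hk
      have h3 : k - w ≠ 0 := by
        intro h; apply h2; linear_combination -h
      rw [c_insert hw hk, phi, phi]
      field_simp
      ring
    rw [h2, phi]
    field_simp
    ring

lemma sum_c (Y : Finset ℂ) : ∑ k ∈ Y, c Y k = Y.card := by
  induction Y using Finset.induction_on with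
  | empty => simp
  | insert w Y hw ih =>
    rw [Finset.sum_insert hw, c_insert_self hw, Finset.card_insert_of_notMem hw,
      partial_fractions Y w hw, Nat.cast_add, ← ih, Nat.cast_one]
    have : ∑ k ∈ Y, c (insert w Y) k = ∑ k ∈ Y, c Y k - ∑ k ∈ Y, c Y k / (w - k) := by
      rw [← Finset.sum_sub_distrib]
      apply Finset.sum_congr rfl
      intro k hk
      have h2 : w - k ≠ 0 := by
        intro h; apply hw; rw [sub_eq_zero.1 h]; exact hk
      have h3 : k - w ≠ 0 := by
        intro h; apply h2; linear_combination -h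
      rw [c_insert hw hk, phi]
      field_simp
      ring
    rw [this]; ring

lemma sum_antisymm (Y : Finset ℂ) (f : ℂ → ℂ → ℂ)
    (h : ∀ k ∈ Y, ∀ l ∈ Y, k ≠ l → f k l + f l k = 0) :
    ∑ k ∈ Y, ∑ l ∈ Y.erase k, f k l = 0 := by
  have h1 : ∑ k ∈ Y, ∑ l ∈ Y.erase k, f k l = ∑ k ∈ Y, ∑ l ∈ Y.erase k, f l k := by
    apply Finset.sum_comm'
    intro x y
    simp only [Finset.mem_erase]
    tauto
  have h2 : ∑ k ∈ Y, ∑ l ∈ Y.erase k, f k l + ∑ k ∈ Y, ∑ l ∈ Y.erase k, f l k = 0 := by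
    rw [← Finset.sum_add_distrib]
    apply Finset.sum_eq_zero
    intro k hk
    rw [← Finset.sum_add_distrib]
    apply Finset.sum_eq_zero
    intro l hl
    exact h k hk l (Finset.mem_of_mem_erase hl) (Finset.ne_of_mem_erase hl).symm
  rw [← h1] at h2
  linear_combination h2 / 2

lemma ratid (z w k l : ℂ) (h2 : z - k ≠ 0) (h3 : z - l ≠ 0)
    (h4 : k - w ≠ 0) (h5 : l - w ≠ 0) (h6 : k - l ≠ 0) :
    1 / (z - l) * (1 / (k - w)) * (phi k l * phi l w)
      - 1 / (z - k) * (1 / (l - w)) * (phi k l * phi l z)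
    + (1 / (z - k) * (1 / (l - w)) * (phi l k * phi k w)
      - 1 / (z - l) * (1 / (k - w)) * (phi l k * phi k z)) = 0 := by
  have h2' : k - z ≠ 0 := by intro h; apply h2; linear_combination -h
  have h3' : l - z ≠ 0 := by intro h; apply h3; linear_combination -h
  have h6' : l - k ≠ 0 := by intro h; apply h6; linear_combination -h
  have e1 : (z - k) = -(k - z) := by ring
  have e2 : (z - l) = -(l - z) := by ring
  have e3 : (l - k) = -(k - l) := by ring
  simp only [phi]
  rw [e1, e2, e3]
  field_simp
  ring

lemma ne_of {a b : ℂ} {Y : Finset ℂ} (ha : a ∉ Y) (hb : b ∈ Y) : a - b ≠ 0 := by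
  intro h; apply ha; rw [sub_eq_zero.1 h]; exact hb

lemma ne_of' {a b : ℂ} {Y : Finset ℂ} (ha : a ∉ Y) (hb : b ∈ Y) : b - a ≠ 0 := by
  intro h; apply ha; rw [← sub_eq_zero.1 h]; exact hb

lemma R_action (L : List ℂ) : L.Nodup → ∀ (Y : Finset ℂ) (z : ℂ), z ∉ Y → z ∉ L →
    (∀ k ∈ Y, k ∉ L) →
    R L (insert z Y) = (Q z L.toFinset - Q z Y) * R L Y +
      ∑ k ∈ Y, 1 / (z - k) * c Y k * R L (insert z (Y.erase k)) := by
  induction L with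
  | nil =>
    intro _ Y z hz _ _
    by_cases hY : Y = ∅
    · subst hY; simp [R, Q]
    · simp [R, hY]
  | cons w L ih =>
    intro hnd Y z hz hzL hY
    have hnd' : L.Nodup := (List.nodup_cons.1 hnd).2
    have hwL : w ∉ L := (List.nodup_cons.1 hnd).1
    have hzL' : z ∉ L := fun h => hzL (by simp [h])
    have hzw : z - w ≠ 0 := by
      intro h; apply hzL; simp [sub_eq_zero.1 h]
    have hY' : ∀ k ∈ Y, k ∉ L := fun k hk h => hY k hk (by simp [h])
    have hwY : w ∉ Y := fun h => hY w h (by simp)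
    have IH := ih hnd' Y z hz hzL' hY'
    have IHk : ∀ k ∈ Y, R L (insert z (Y.erase k)) = (Q z L.toFinset - Q z (Y.erase k)) *
        R L (Y.erase k) + ∑ l ∈ Y.erase k, 1 / (z - l) * c (Y.erase k) l *
          R L (insert z ((Y.erase k).erase l)) := by
      intro k hk
      exact ih hnd' (Y.erase k) z (by simp [hz]) hzL'
        (fun l hl => hY' l (Finset.mem_of_mem_erase hl))
    have hQ : Q z (w :: L).toFinset = phi z w * Q z L.toFinset := by
      rw [List.toFinset_cons, Q_insert (by simpa using hwL)]
    rw [R_cons, R_cons, hQ, P_insert hz, Finset.sum_insert hz, Finset.erase_insert hz,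
      c_insert_self hz]
    have hS : ∑ k ∈ Y, 1 / (k - w) * P w ((insert z Y).erase k) * c (insert z Y) k *
          R L ((insert z Y).erase k) =
        ∑ k ∈ Y, 1 / (k - w) * (phi z w * P w (Y.erase k)) * (phi k z * c Y k) *
          R L (insert z (Y.erase k)) := by
      apply Finset.sum_congr rfl
      intro k hk
      rw [erase_insert_comm hz hk, c_insert hz hk, P_insert (by simp [hz])]
    have hT : ∑ k ∈ Y, 1 / (z - k) * c Y k * R (w :: L) (insert z (Y.erase k)) =
        ∑ k ∈ Y, 1 / (z - k) * c Y k * (phi z w * P w (Y.erase k) * R L (insert z (Y.erase k))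
          + 1 / (z - w) * P w (Y.erase k) * Q z (Y.erase k) * R L (Y.erase k)
          + ∑ l ∈ Y.erase k, 1 / (l - w) * (phi z w * P w ((Y.erase k).erase l)) *
            (phi l z * c (Y.erase k) l) * R L (insert z ((Y.erase k).erase l))) := by
      apply Finset.sum_congr rfl
      intro k hk
      have hz' : z ∉ Y.erase k := by simp [hz]
      rw [R_cons, P_insert hz', Finset.sum_insert hz', Finset.erase_insert hz',
        c_insert_self hz', ← add_assoc]
      congr 2
      apply Finset.sum_congr rfl
      intro l hl
      rw [erase_insert_comm hz' hl, c_insert hz' hl, P_insert (by simp [hz])]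
    rw [hS, hT]
    have hphizw : phi z w = 1 + 1 / (z - w) := by rw [phi]; field_simp
    -- the double sum
    have hD := sum_antisymm Y (fun k l =>
        (phi z w * c Y k * P w (Y.erase k) / (k - w)) *
          (1 / (z - l) * c (Y.erase k) l * R L (insert z ((Y.erase k).erase l)))
        - 1 / (z - k) * c Y k * (1 / (l - w) * (phi z w * P w ((Y.erase k).erase l)) *
            (phi l z * c (Y.erase k) l) * R L (insert z ((Y.erase k).erase l)))) (by
      intro k hk l hl hkl
      have hkl' : k - l ≠ 0 := sub_ne_zero.2 hkl
      have hlk : l ∈ Y.erase k := by simp [hl, hkl.symm]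
      have hkl2 : k ∈ Y.erase l := by simp [hk, hkl]
      have := ratid z w k l (ne_of hz hk) (ne_of hz hl) (ne_of' hwY hk) (ne_of' hwY hl) hkl'
      rw [P_erase (w := w) hlk, P_erase (w := w) hkl2, c_erase hl hkl, c_erase hk hkl.symm,
        Finset.erase_right_comm (a := l) (b := k)]
      linear_combination (phi z w * P w ((Y.erase k).erase l) * c (Y.erase l) k *
        c (Y.erase k) l * R L (insert z ((Y.erase k).erase l))) * this)
    have hM : ∑ k ∈ Y, 1 / (k - w) * (phi z w * P w (Y.erase k)) * (phi k z * c Y k) *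
          R L (insert z (Y.erase k))
        + phi z w * P w Y * ∑ k ∈ Y, 1 / (z - k) * c Y k * R L (insert z (Y.erase k))
        - (phi z w * Q z L.toFinset - Q z Y) *
          ∑ k ∈ Y, 1 / (k - w) * P w (Y.erase k) * c Y k * R L (Y.erase k)
        - ∑ k ∈ Y, 1 / (z - k) * c Y k * (phi z w * P w (Y.erase k) * R L (insert z (Y.erase k))
          + 1 / (z - w) * P w (Y.erase k) * Q z (Y.erase k) * R L (Y.erase k)
          + ∑ l ∈ Y.erase k, 1 / (l - w) * (phi z w * P w ((Y.erase k).erase l)) *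
            (phi l z * c (Y.erase k) l) * R L (insert z ((Y.erase k).erase l))) = 0 := by
      rw [← hD, Finset.mul_sum, Finset.mul_sum, ← Finset.sum_add_distrib,
        ← Finset.sum_sub_distrib, ← Finset.sum_sub_distrib]
      apply Finset.sum_congr rfl
      intro k hk
      rw [Finset.sum_sub_distrib, ← Finset.mul_sum, ← Finset.mul_sum]
      have e := IHk k hk
      rw [← sub_eq_iff_eq_add'] at e
      rw [← e, P_erase (w := w) hk, Q_erase (w := z) hk]
      have h1 := ne_of hz hk
      have h2 := ne_of' hz hk
      have h3 := ne_of' hwY hk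
      generalize (∑ l ∈ Y.erase k, 1 / (l - w) * (phi z w * P w ((Y.erase k).erase l)) *
            (phi l z * c (Y.erase k) l) * R L (insert z ((Y.erase k).erase l))) = S
      have c1 : 1 / (k - w) * phi k z + phi k w * (1 / (z - k)) - 1 / (z - k) = 1 / (k - w) := by
        have e1 : (z - k) = -(k - z) := by ring
        simp only [phi]; rw [e1]; field_simp; ring
      have c2 : phi z k / (k - w) - 1 / (z - k) * (1 / (z - w)) = phi z w / (k - w) := by
        simp only [phi]; field_simp; ring
      linear_combination (phi z w * P w (Y.erase k) * c Y k * R L (insert z (Y.erase k))) * c1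
        + (P w (Y.erase k) * c Y k * Q z (Y.erase k) * R L (Y.erase k)) * c2
    rw [IH]
    linear_combination hM - P w Y * Q z Y * R L Y * hphizw

lemma R_expand (L : List ℂ) : L.Nodup → ∀ (Y : Finset ℂ) (y : ℂ), y ∉ Y → y ∉ L →
    (∀ k ∈ Y, k ∉ L) →
    R L (insert y Y) = ∑ m ∈ L.toFinset, 1 / (y - m) * P m Y * c L.toFinset m *
      R (L.erase m) Y := by
  induction L with
  | nil =>
    intro _ Y z hz _ _
    simp [R]
  | cons w L ih =>
    intro hnd Y y hy hyL hY
    have hnd' : L.Nodup := (List.nodup_cons.1 hnd).2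
    have hwL : w ∉ L := (List.nodup_cons.1 hnd).1
    have hyL' : y ∉ L := fun h => hyL (by simp [h])
    have hyw : y - w ≠ 0 := by
      intro h; apply hyL; simp [sub_eq_zero.1 h]
    have hY' : ∀ k ∈ Y, k ∉ L := fun k hk h => hY k hk (by simp [h])
    have hwY : w ∉ Y := fun h => hY w h (by simp)
    have hwZ : w ∉ L.toFinset := by simpa using hwL
    have hyZ : y ∉ L.toFinset := by simpa using hyL'
    have IHy := ih hnd' Y y hy hyL' hY'
    have IHw := ih hnd' Y w hwY hwL hY'
    have hYe : ∀ k, ∀ l ∈ Y.erase k, l ∉ L := fun k l hl => hY' l (Finset.mem_of_mem_erase hl)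
    have IHky : ∀ k ∈ Y, _ := fun k _ => ih hnd' (Y.erase k) y (by simp [hy]) hyL' (hYe k)
    have IHkw : ∀ k ∈ Y, _ := fun k _ => ih hnd' (Y.erase k) w (by simp [hwY]) hwL (hYe k)
    have IHkk : ∀ k ∈ Y, R L Y = ∑ m ∈ L.toFinset, 1 / (k - m) * P m (Y.erase k) *
        c L.toFinset m * R (L.erase m) (Y.erase k) := fun k hk => by
      rw [← ih hnd' (Y.erase k) k (by simp) (hY' k hk) (hYe k), Finset.insert_erase hk]
    rw [R_cons, P_insert hy, Finset.sum_insert hy, Finset.erase_insert hy,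
      c_insert_self hy, List.toFinset_cons, Finset.sum_insert hwZ, c_insert_self hwZ,
      List.erase_cons_head]
    have hS : ∑ k ∈ Y, 1 / (k - w) * P w ((insert y Y).erase k) * c (insert y Y) k *
          R L ((insert y Y).erase k) =
        ∑ k ∈ Y, 1 / (k - w) * (phi y w * P w (Y.erase k)) * (phi k y * c Y k) *
          R L (insert y (Y.erase k)) := by
      apply Finset.sum_congr rfl
      intro k hk
      rw [erase_insert_comm hy hk, c_insert hy hk, P_insert (by simp [hy])]
    have hT : ∑ m ∈ L.toFinset, 1 / (y - m) * P m Y * c (insert w L.toFinset) m *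
          R ((w :: L).erase m) Y =
        ∑ m ∈ L.toFinset, 1 / (y - m) * P m Y * phi m w * c L.toFinset m * P w Y *
            R (L.erase m) Y +
        ∑ k ∈ Y, ∑ m ∈ L.toFinset, 1 / (y - m) * P m Y * phi m w * c L.toFinset m *
          (1 / (k - w) * P w (Y.erase k) * c Y k * R (L.erase m) (Y.erase k)) := by
      rw [Finset.sum_comm, ← Finset.sum_add_distrib]
      apply Finset.sum_congr rfl
      intro m hm
      have hmw : w ≠ m := by rintro rfl; exact hwZ hm
      rw [List.erase_cons_tail (by simpa using hmw), R_cons, c_insert hwZ hm, ← Finset.mul_sum]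
      ring
    rw [hS, hT]
    have H1 : ∑ m ∈ L.toFinset, 1 / (y - m) * P m Y * phi m w * c L.toFinset m * P w Y *
            R (L.erase m) Y = P w Y * (phi y w * R L (insert y Y)
              - 1 / (y - w) * R L (insert w Y)) := by
      rw [IHy, IHw, Finset.mul_sum, Finset.mul_sum, ← Finset.sum_sub_distrib, Finset.mul_sum]
      apply Finset.sum_congr rfl
      intro m hm
      have h1 := ne_of hyZ hm
      have h2 := ne_of hwZ hm
      have h3 := ne_of' hwZ hm
      have e1 : m - w = -(w - m) := by ring
      have c1 : 1 / (y - m) * phi m w = phi y w * (1 / (y - m)) - 1 / (y - w) * (1 / (w - m)) := by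
        simp only [phi]; rw [e1]; field_simp; ring
      linear_combination P m Y * c L.toFinset m * P w Y * R (L.erase m) Y * c1
    have H2 : ∀ k ∈ Y, ∑ m ∈ L.toFinset, 1 / (y - m) * P m Y * phi m w * c L.toFinset m *
          (1 / (k - w) * P w (Y.erase k) * c Y k * R (L.erase m) (Y.erase k)) =
        P w (Y.erase k) * c Y k * (1 / (k - w) * phi y w * phi k y * R L (insert y (Y.erase k))
          - 1 / (k - w) * (phi k w / (y - w) * R L (insert w (Y.erase k))
            - phi k w / (y - k) * R L Y)) := by
      intro k hk
      rw [IHky k hk, IHkw k hk, IHkk k hk]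
      simp only [Finset.mul_sum, ← Finset.sum_sub_distrib]
      apply Finset.sum_congr rfl
      intro m hm
      have h1 := ne_of hyZ hm
      have h2 := ne_of hwZ hm
      have h3 := ne_of' hwZ hm
      have h4 := ne_of hy hk
      have h5 := ne_of' hy hk
      have h6 := ne_of' hwY hk
      have h7 : k - m ≠ 0 := sub_ne_zero.2 (by
        rintro rfl; exact hY' k hk (by simpa using hm))
      have e1 : m - w = -(w - m) := by ring
      have e2 : k - y = -(y - k) := by ring
      have c1 : 1 / (y - m) * phi k m * phi m w = phi y w * phi k y * (1 / (y - m))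
          - (phi k w / (y - w) * (1 / (w - m)) - phi k w / (y - k) * (1 / (k - m))) := by
        simp only [phi]; rw [e1, e2]; field_simp; ring
      rw [P_erase (w := m) hk]
      linear_combination P m (Y.erase k) * c L.toFinset m * P w (Y.erase k) * c Y k *
        (1 / (k - w)) * R (L.erase m) (Y.erase k) * c1
    rw [H1, Finset.sum_congr rfl H2]
    have hA := R_action L hnd' Y w hwY hwL hY'
    have pf1 := partial_fractions Y y hy
    have pf2 := partial_fractions Y w hwY
    have H3 : ∑ k ∈ Y, 1 / (k - w) * (phi y w * P w (Y.erase k)) * (phi k y * c Y k) *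
          R L (insert y (Y.erase k)) -
        ∑ k ∈ Y, P w (Y.erase k) * c Y k *
          (1 / (k - w) * phi y w * phi k y * R L (insert y (Y.erase k))
          - 1 / (k - w) * (phi k w / (y - w) * R L (insert w (Y.erase k))
            - phi k w / (y - k) * R L Y)) =
        P w Y * (1 / (y - w)) * (-∑ k ∈ Y, 1 / (w - k) * c Y k * R L (insert w (Y.erase k))
          - (∑ k ∈ Y, c Y k / (y - k) - ∑ k ∈ Y, c Y k / (w - k)) * R L Y) := by
      rw [← Finset.sum_sub_distrib, ← Finset.sum_sub_distrib, Finset.sum_mul,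
        ← Finset.sum_neg_distrib, ← Finset.sum_sub_distrib, Finset.mul_sum]
      apply Finset.sum_congr rfl
      intro k hk
      have h4 := ne_of hy hk
      have h6 := ne_of' hwY hk
      have h8 := ne_of hwY hk
      have e1 : k - w = -(w - k) := by ring
      have c1 : 1 / (k - w) / (y - k) = 1 / (y - w) * (1 / (y - k) - 1 / (w - k)) := by
        rw [e1]; field_simp; ring
      have c2 : 1 / (k - w) = - (1 / (w - k)) := by
        rw [e1]; field_simp
      rw [P_erase (w := w) hk]
      linear_combination P w (Y.erase k) * c Y k * (phi k w / (y - w) *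
        R L (insert w (Y.erase k)) * c2 - phi k w * R L Y * c1)
    rw [hA]
    linear_combination H3 + P w Y * (1 / (y - w)) * R L Y * (pf1 - pf2)

lemma R_empty (L : List ℂ) : R L ∅ = 1 := by
  induction L with
  | nil => simp [R]
  | cons w L ih => simp [R_cons, ih, P]

lemma R_congr (Y : Finset ℂ) : ∀ (L L' : List ℂ), L.Nodup → L'.Nodup →
    L.toFinset = L'.toFinset → (∀ k ∈ Y, k ∉ L) → R L Y = R L' Y := by
  induction Y using Finset.induction_on with
  | empty => intros; simp [R_empty]
  | insert y Y hy ih =>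
    intro L L' h h' e hd
    have hmem : ∀ k, k ∈ L ↔ k ∈ L' := fun k => by
      rw [← List.mem_toFinset, e, List.mem_toFinset]
    rw [R_expand L h Y y hy (hd y (by simp)) (fun k hk => hd k (by simp [hk])),
      R_expand L' h' Y y hy (by rw [← hmem]; exact hd y (by simp))
        (fun k hk => by rw [← hmem]; exact hd k (by simp [hk])), e]
    apply Finset.sum_congr rfl
    intro m hm
    rw [ih (L.erase m) (L'.erase m) (h.erase m) (h'.erase m)]
    · ext x
      simp [h.mem_erase_iff, h'.mem_erase_iff, hmem]
    · intro k hk hk'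
      exact hd k (by simp [hk]) (List.mem_of_mem_erase hk')

lemma sum_perm_step {n : ℕ} (z : Fin (n + 1) → ℂ) (F : (Fin (n + 1) → ℂ) → ℂ) :
    ∑ σ : Equiv.Perm (Fin (n + 1)), F (z ∘ σ) =
      ∑ m : Fin (n + 1), ∑ σ : Equiv.Perm (Fin n),
        F (Fin.snoc ((z ∘ m.succAbove) ∘ σ) (z m)) := by
  have hinj : ∀ (m : Fin (n + 1)) (σ : Equiv.Perm (Fin n)), Function.Injective
      (Fin.snoc (α := fun _ => Fin (n + 1)) (m.succAbove ∘ σ) m) := by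
    intro m σ
    rw [Fin.snoc_injective_iff]
    refine ⟨Fin.succAbove_right_injective.comp σ.injective, ?_⟩
    rintro ⟨i, hi⟩
    exact Fin.succAbove_ne _ _ hi
  let Ψ : Fin (n + 1) × Equiv.Perm (Fin n) → Equiv.Perm (Fin (n + 1)) := fun x =>
    Equiv.ofBijective _ (Finite.injective_iff_bijective.1 (hinj x.1 x.2))
  have hΨ : Function.Bijective Ψ := by
    rw [Fintype.bijective_iff_injective_and_card]
    constructor
    · rintro ⟨m, σ⟩ ⟨m', σ'⟩ h
      have h' : ∀ i, Fin.snoc (α := fun _ => Fin (n + 1)) (m.succAbove ∘ σ) m i =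
          Fin.snoc (α := fun _ => Fin (n + 1)) (m'.succAbove ∘ σ') m' i :=
        fun i => DFunLike.congr_fun h i
      have hm : m = m' := by simpa using h' (Fin.last n)
      subst hm
      congr 1
      ext i
      have := h' (Fin.castSucc i)
      simp only [Fin.snoc_castSucc, Function.comp] at this
      rw [Fin.succAbove_right_injective this]
    · simp [Fintype.card_perm, Nat.factorial_succ]
  rw [← Finset.sum_product', Finset.univ_product_univ]
  symm
  apply Fintype.sum_bijective Ψ hΨ
  rintro ⟨m, σ⟩
  congr 1
  rw [show (z ∘ m.succAbove) ∘ σ = z ∘ (m.succAbove ∘ σ) from rfl]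
  exact (Fin.comp_snoc z _ _).symm

lemma prod_Ioi_castSucc {n : ℕ} (i : Fin n) (f : Fin (n + 1) → ℂ) :
    ∏ j ∈ Finset.Ioi i.castSucc, f j =
      (∏ j ∈ Finset.Ioi i, f j.castSucc) * f (Fin.last n) := by
  have h : Finset.Ioi i.castSucc =
      insert (Fin.last n) ((Finset.Ioi i).map Fin.castSuccEmb) := by
    ext j
    refine Fin.lastCases ?_ (fun j => ?_) j
    · simp [Fin.castSucc_lt_last]
    · simp [Fin.le_last]
  rw [h, Finset.prod_insert (by simp), Finset.prod_map, mul_comm]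
  rfl

lemma prod_Ioi_last {n : ℕ} (f : Fin (n + 1) → ℂ) :
    ∏ j ∈ Finset.Ioi (Fin.last n), f j = 1 := by
  have : Finset.Ioi (Fin.last n) = ∅ := by
    ext j; simp [Fin.le_last]
  rw [this, Finset.prod_empty]

lemma psi_eq (a b : ℂ) : (a - b - 1) / (a - b) = phi b a := by
  rw [phi, ← neg_div_neg_eq]; congr 1 <;> ring

lemma W_snoc {n : ℕ} (t : Fin n → ℂ) (a : ℂ) :
    W (Fin.snoc (α := fun _ => ℂ) t a) = W t * ∏ i, phi a (t i) := by
  rw [W, Fin.prod_univ_castSucc, prod_Ioi_last, mul_one, W, ← Finset.prod_mul_distrib]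
  apply Finset.prod_congr rfl
  intro i _
  rw [prod_Ioi_castSucc]
  simp only [Fin.snoc_castSucc, Fin.snoc_last, psi_eq]

lemma P_image {n : ℕ} (y : Fin n → ℂ) (hy : Function.Injective y) (w : ℂ) :
    P w (Finset.univ.image y) = ∏ i, phi (y i) w := by
  rw [P, Finset.prod_image (fun a _ b _ h => hy h)]

lemma Q_image {n : ℕ} (y : Fin n → ℂ) (hy : Function.Injective y) (w : ℂ) :
    Q w (Finset.univ.image y) = ∏ i, phi w (y i) := by
  rw [Q, Finset.prod_image (fun a _ b _ h => hy h)]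

lemma image_erase {n : ℕ} (y : Fin (n + 1) → ℂ) (hy : Function.Injective y) (m : Fin (n + 1)) :
    (Finset.univ.image y).erase (y m) = Finset.univ.image (y ∘ m.succAbove) := by
  ext x
  simp only [Finset.mem_erase, Finset.mem_image, Finset.mem_univ, true_and, Function.comp]
  constructor
  · rintro ⟨hx, i, rfl⟩
    have : i ≠ m := fun h => hx (by rw [h])
    obtain ⟨j, rfl⟩ := Fin.exists_succAbove_eq this
    exact ⟨j, rfl⟩
  · rintro ⟨j, rfl⟩
    exact ⟨fun h => Fin.succAbove_ne _ _ (hy h), _, rfl⟩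

lemma sum_W (r : ℕ) : ∀ (z : Fin r → ℂ), Function.Injective z →
    ∑ σ : Equiv.Perm (Fin r), W (z ∘ σ) = (Nat.factorial r : ℂ) := by
  induction r with
  | zero => intro z _; simp [W]
  | succ r ih =>
    intro z hz
    rw [sum_perm_step z W]
    have h : ∀ m : Fin (r + 1), ∑ σ : Equiv.Perm (Fin r),
        W (Fin.snoc (α := fun _ => ℂ) ((z ∘ m.succAbove) ∘ σ) (z m)) =
        c (Finset.univ.image z) (z m) * (Nat.factorial r : ℂ) := by
      intro m
      have hi : Function.Injective (z ∘ m.succAbove) := hz.comp Fin.succAbove_right_injective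
      rw [← ih _ hi, c, image_erase z hz, Q_image _ hi, Finset.mul_sum]
      apply Finset.sum_congr rfl
      intro σ _
      rw [W_snoc, mul_comm]
      congr 1
      exact Equiv.prod_comp σ (fun i => phi (z m) ((z ∘ m.succAbove) i))
    rw [Finset.sum_congr rfl (fun m _ => h m), ← Finset.sum_mul,
      ← Finset.sum_image (f := fun k => c (Finset.univ.image z) k) (fun a _ b _ h => hz h),
      sum_c, Finset.card_image_of_injective _ hz]
    simp [Nat.factorial_succ]

lemma G_step (p r : ℕ) (h : p + 1 ≤ r + 1) (h' : p ≤ r) (y : Fin (p + 1) → ℂ)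
    (z : Fin (r + 1) → ℂ) :
    G (p + 1) (r + 1) h y z = ∑ m : Fin (r + 1), 1 / (y (Fin.last p) - z m) *
      (∏ i : Fin p, phi (y i.castSucc) (z m)) * (∏ l : Fin r, phi (z m) (z (m.succAbove l))) *
      G p r h' (y ∘ Fin.castSucc) (z ∘ m.succAbove) := by
  have s1 : shiftIdx (p + 1) (r + 1) h (Fin.last p) = Fin.last r := by
    apply Fin.ext; simp [shiftIdx]; omega
  have s2 : ∀ i : Fin p, shiftIdx (p + 1) (r + 1) h i.castSucc = (shiftIdx p r h' i).castSucc := by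
    intro i; apply Fin.ext; simp [shiftIdx]
  rw [G]
  have key := sum_perm_step z (fun t => (∏ i : Fin (p + 1),
      ((1 / (y i - t (shiftIdx (p + 1) (r + 1) h i))) *
        ∏ j ∈ Finset.Ioi i, ((y i - t (shiftIdx (p + 1) (r + 1) h j) + 1) /
          (y i - t (shiftIdx (p + 1) (r + 1) h j))))) * W t)
  simp only [Function.comp_apply] at key
  rw [key, Finset.mul_sum]
  apply Finset.sum_congr rfl
  intro m _
  rw [G, Nat.add_sub_add_right, Finset.mul_sum, Finset.mul_sum, Finset.mul_sum]
  apply Finset.sum_congr rfl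
  intro σ _
  rw [W_snoc, Fin.prod_univ_castSucc, prod_Ioi_last]
  simp only [prod_Ioi_castSucc, s1, s2, Fin.snoc_castSucc, Fin.snoc_last, Function.comp_apply]
  rw [Equiv.prod_comp σ (fun i => phi (z m) (z (m.succAbove i)))]
  simp only [← mul_assoc, Finset.prod_mul_distrib, phi]
  ring

noncomputable def zl {r : ℕ} (z : Fin r → ℂ) : List ℂ := (List.ofFn z).reverse

lemma zl_succ {r : ℕ} (z : Fin (r + 1) → ℂ) :
    zl z = z (Fin.last r) :: zl (z ∘ Fin.castSucc) := by
  rw [zl, List.ofFn_succ', List.concat_eq_append, List.reverse_append]; rfl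

lemma zl_nodup {r : ℕ} (z : Fin r → ℂ) (hz : Function.Injective z) : (zl z).Nodup := by
  rw [zl, List.nodup_reverse]; exact List.nodup_ofFn.2 hz

lemma zl_toFinset {r : ℕ} (z : Fin r → ℂ) : (zl z).toFinset = Finset.univ.image z := by
  ext x; simp [zl, List.mem_ofFn]

lemma mem_zl {r : ℕ} (z : Fin r → ℂ) (x : ℂ) : x ∈ zl z ↔ ∃ i, z i = x := by
  simp [zl, List.mem_ofFn]

lemma G_eq_R (p : ℕ) : ∀ (r : ℕ) (h : p ≤ r) (y : Fin p → ℂ) (z : Fin r → ℂ),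
    Function.Injective y → Function.Injective z → (∀ i j, y i ≠ z j) →
    G p r h y z = R (zl z) (Finset.univ.image y) := by
  induction p with
  | zero =>
    intro r h y z hy hz hyz
    rw [G]
    simp only [Finset.univ_eq_empty, Finset.prod_empty, one_mul, Finset.image_empty, R_empty,
      Nat.sub_zero]
    rw [sum_W r z hz]
    have : (Nat.factorial r : ℂ) ≠ 0 := by exact_mod_cast Nat.factorial_ne_zero r
    field_simp
  | succ p ih =>
    intro r h y z hy hz hyz
    obtain ⟨r, rfl⟩ : ∃ r', r = r' + 1 := ⟨r - 1, by omega⟩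
    have hy' : Function.Injective (y ∘ Fin.castSucc) := hy.comp (Fin.castSucc_injective p)
    have hYi : Finset.univ.image y =
        insert (y (Fin.last p)) (Finset.univ.image (y ∘ Fin.castSucc)) := by
      ext x
      simp only [Finset.mem_image, Finset.mem_univ, true_and, Finset.mem_insert,
        Function.comp_apply, Fin.exists_fin_succ']
      tauto
    rw [G_step p r h (by omega), hYi, R_expand (zl z) (zl_nodup z hz), zl_toFinset,
      Finset.sum_image (fun a _ b _ h => hz h)]
    · apply Finset.sum_congr rfl
      intro m _
      have hi : Function.Injective (z ∘ m.succAbove) := hz.comp Fin.succAbove_right_injective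
      rw [P_image _ hy', c, image_erase z hz, Q_image _ hi,
        ih r (by omega) _ (z ∘ m.succAbove) hy' hi (fun i j => hyz _ _)]
      rw [R_congr _ (zl (z ∘ m.succAbove)) ((zl z).erase (z m)) (zl_nodup _ hi)
        ((zl_nodup z hz).erase _)]
      · rfl
      · rw [zl_toFinset, ← image_erase z hz]
        ext x
        simp [(zl_nodup z hz).mem_erase_iff, mem_zl]
      · intro k hk hk'
        simp only [Finset.mem_image, Finset.mem_univ, true_and, mem_zl] at hk hk'
        obtain ⟨i, rfl⟩ := hk
        obtain ⟨j, hj⟩ := hk'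
        exact hyz _ _ hj.symm
    · intro hk
      simp only [Finset.mem_image, Finset.mem_univ, true_and] at hk
      obtain ⟨i, hi⟩ := hk
      exact Fin.castSucc_ne_last i (hy hi)
    · rw [mem_zl]
      rintro ⟨j, hj⟩
      exact hyz _ _ hj.symm
    · intro k hk hk'
      simp only [Finset.mem_image, Finset.mem_univ, true_and, mem_zl] at hk hk'
      obtain ⟨i, rfl⟩ := hk
      obtain ⟨j, hj⟩ := hk'
      exact hyz _ _ hj.symm

/-- The right-hand side. -/
noncomputable def RR (p r : ℕ) (y : Fin p → ℂ) (z : Fin r → ℂ) : ℂ :=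
  ∑ d ∈ Finset.univ.filter (fun d : Fin p → Fin r => StrictMono d),
        ∑ τ : Equiv.Perm (Fin p),
          (∏ i : Fin p, ((1 / (y (τ i) - z (d i))) *
            ∏ j ∈ Finset.Ioi (d i), ((y (τ i) - z j + 1) / (y (τ i) - z j)))) *
          W (y ∘ τ)

lemma sum_strictMono_step (p r : ℕ) (f : (Fin (p + 1) → Fin (r + 1)) → ℂ) :
    ∑ d ∈ Finset.univ.filter (fun d : Fin (p + 1) → Fin (r + 1) => StrictMono d), f d =
      ∑ d ∈ Finset.univ.filter (fun d : Fin (p + 1) → Fin r => StrictMono d),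
        f (Fin.castSucc ∘ d) +
      ∑ d ∈ Finset.univ.filter (fun d : Fin p → Fin r => StrictMono d),
        f (Fin.snoc (α := fun _ => Fin (r + 1)) (Fin.castSucc ∘ d) (Fin.last r)) := by
  rw [← Finset.sum_filter_add_sum_filter_not _
    (fun d : Fin (p + 1) → Fin (r + 1) => d (Fin.last p) ≠ Fin.last r)]
  congr 1
  · symm
    apply Finset.sum_bij (fun d _ => Fin.castSucc ∘ d)
    · intro d hd
      simp only [Finset.mem_filter, Finset.mem_univ, true_and] at hd ⊢
      exact ⟨(Fin.strictMono_castSucc).comp hd, Fin.castSucc_ne_last _⟩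
    · intro a _ b _ h
      funext i
      exact Fin.castSucc_injective _ (congrFun h i)
    · intro d hd
      simp only [Finset.mem_filter, Finset.mem_univ, true_and] at hd
      obtain ⟨hd, hl⟩ := hd
      have hne : ∀ i, d i ≠ Fin.last r := by
        intro i hi
        apply hl
        apply Fin.last_le_iff.1
        rw [← hi]
        exact hd.monotone (Fin.le_last i)
      refine ⟨fun i => (d i).castPred (hne i), ?_, ?_⟩
      · simp only [Finset.mem_filter, Finset.mem_univ, true_and]
        intro i j hij
        simpa using hd hij
      · funext i; simp
    · intro d _; rfl
  · symm
    apply Finset.sum_bij (fun d _ =>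
      Fin.snoc (α := fun _ => Fin (r + 1)) (Fin.castSucc ∘ d) (Fin.last r))
    · intro d hd
      simp only [Finset.mem_filter, Finset.mem_univ, true_and] at hd ⊢
      refine ⟨?_, by simp⟩
      intro i j
      refine Fin.lastCases ?_ (fun j => ?_) j
      · refine Fin.lastCases ?_ (fun i => ?_) i
        · intro h; exact absurd h (lt_irrefl _)
        · intro _; simp [Fin.castSucc_lt_last]
      · refine Fin.lastCases ?_ (fun i => ?_) i
        · intro h; exact absurd (h.trans (Fin.castSucc_lt_last j)) (lt_irrefl _)
        · intro h
          simp only [Fin.snoc_castSucc, Function.comp_apply, Fin.castSucc_lt_castSucc_iff] at h ⊢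
          exact hd h
    · intro a _ b _ h
      funext i
      have := congrFun h i.castSucc
      simpa using this
    · intro d hd
      simp only [Finset.mem_filter, Finset.mem_univ, true_and, not_not] at hd
      obtain ⟨hd, hl⟩ := hd
      have hne : ∀ i : Fin p, d i.castSucc ≠ Fin.last r := by
        intro i hi
        have := hd (Fin.castSucc_lt_last i)
        rw [hi, hl] at this
        exact lt_irrefl _ this
      refine ⟨fun i => (d i.castSucc).castPred (hne i), ?_, ?_⟩
      · simp only [Finset.mem_filter, Finset.mem_univ, true_and]
        intro i j hij
        have : i.castSucc < j.castSucc := by simpa using hij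
        simpa using hd this
      · funext i
        refine Fin.lastCases ?_ (fun i => ?_) i
        · simp [hl]
        · simp
    · intro d _; rfl

lemma RR_step (p r : ℕ) (y : Fin (p + 1) → ℂ) (z : Fin (r + 1) → ℂ) :
    RR (p + 1) (r + 1) y z =
      (∏ i, phi (y i) (z (Fin.last r))) * RR (p + 1) r y (z ∘ Fin.castSucc) +
      ∑ k : Fin (p + 1), 1 / (y k - z (Fin.last r)) *
        (∏ i : Fin p, phi (y (k.succAbove i)) (z (Fin.last r))) *
        (∏ i : Fin p, phi (y k) (y (k.succAbove i))) *
        RR p r (y ∘ k.succAbove) (z ∘ Fin.castSucc) := by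
  rw [RR, sum_strictMono_step]
  congr 1
  · rw [RR, Finset.mul_sum]
    apply Finset.sum_congr rfl
    intro d _
    rw [Finset.mul_sum]
    apply Finset.sum_congr rfl
    intro τ _
    rw [← Equiv.prod_comp τ (fun i => phi (y i) (z (Fin.last r)))]
    simp only [Function.comp_apply, prod_Ioi_castSucc, Finset.prod_mul_distrib, phi]
    ring
  · simp only [RR, Finset.mul_sum]
    conv_rhs => rw [Finset.sum_comm]
    apply Finset.sum_congr rfl
    intro d _
    have key := sum_perm_step y (fun t => (∏ i : Fin (p + 1), ((1 / (t i -
        z (Fin.snoc (α := fun _ => Fin (r + 1)) (Fin.castSucc ∘ d) (Fin.last r) i))) *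
        ∏ j ∈ Finset.Ioi (Fin.snoc (α := fun _ => Fin (r + 1)) (Fin.castSucc ∘ d) (Fin.last r) i),
          ((t i - z j + 1) / (t i - z j)))) * W t)
    simp only [Function.comp_apply] at key
    rw [key]
    apply Finset.sum_congr rfl
    intro k _
    apply Finset.sum_congr rfl
    intro σ _
    rw [W_snoc, Fin.prod_univ_castSucc]
    simp only [prod_Ioi_castSucc, Fin.snoc_castSucc, Fin.snoc_last, Function.comp_apply,
      prod_Ioi_last]
    rw [Equiv.prod_comp σ (fun i => phi (y k) (y (k.succAbove i))),
      ← Equiv.prod_comp σ (fun i => phi (y (k.succAbove i)) (z (Fin.last r)))]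
    simp only [Finset.prod_mul_distrib, phi]
    ring

lemma RR_eq_R (r : ℕ) : ∀ (p : ℕ) (y : Fin p → ℂ) (z : Fin r → ℂ),
    Function.Injective y → RR p r y z = R (zl z) (Finset.univ.image y) := by
  induction r with
  | zero =>
    intro p y z hy
    cases p with
    | zero =>
      rw [show Finset.univ.image y = ∅ by simp, R_empty, RR]
      have : (Finset.univ.filter (fun d : Fin 0 → Fin 0 => StrictMono d)) = Finset.univ := by
        ext d; simp [Subsingleton.strictMono]
      rw [this]
      simp [W]
    | succ p =>
      have : (Finset.univ.image y) ≠ ∅ :=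
        (Finset.univ_nonempty.image y).ne_empty
      rw [show zl z = [] by simp [zl], R, if_neg this, RR]
      simp
  | succ r ih =>
    intro p y z hy
    cases p with
    | zero =>
      rw [show Finset.univ.image y = ∅ by simp, R_empty, RR]
      have : (Finset.univ.filter (fun d : Fin 0 → Fin (r + 1) => StrictMono d)) = Finset.univ := by
        ext d; simp [Subsingleton.strictMono]
      rw [this]
      simp [W]
    | succ p =>
      rw [RR_step, zl_succ, R_cons, ih _ _ _ hy, P_image y hy,
        Finset.sum_image (fun a _ b _ h => hy h)]
      congr 1
      apply Finset.sum_congr rfl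
      intro k _
      have hi : Function.Injective (y ∘ k.succAbove) := hy.comp Fin.succAbove_right_injective
      rw [ih _ _ _ hi, c, image_erase y hy, P_image _ hi, Q_image _ hi]
      rfl

end GyzAux

/-- Lemma Gyz: `G_{p,r}(y; z) = ∑_{1≤d_1<…<d_p≤r} S̄ym_{y_1,…,y_p}[ ∏_{i=1}^p
( (1/(y_i − z_{d_i})) · ∏_{d_i<j≤r} (y_i − z_j + 1)/(y_i − z_j) ) ]`. -/
theorem G_eq_sum_over_tuples (p r : ℕ) (hp : 0 < p) (hpr : p ≤ r)
    (y : Fin p → ℂ) (z : Fin r → ℂ) (hy : Function.Injective y)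
    (hz : Function.Injective z) (hyz : ∀ i j, y i ≠ z j) :
    G p r hpr y z =
      ∑ d ∈ Finset.univ.filter (fun d : Fin p → Fin r => StrictMono d),
        ∑ τ : Equiv.Perm (Fin p),
          (∏ i : Fin p, ((1 / (y (τ i) - z (d i))) *
            ∏ j ∈ Finset.Ioi (d i), ((y (τ i) - z j + 1) / (y (τ i) - z j)))) *
          W (y ∘ τ) := by
  rw [GyzAux.G_eq_R p r hpr y z hy hz hyz, ← GyzAux.RR_eq_R r p y z hy]
  rfl
end

section
/- For positive integers p ≤ r, the rational function G_{p,r}(y_1,…,y_p; z_1,…,z_r) is symmetric in the variables y_1,…,y_p: for every permutation τ ∈ S_p, G_{p,r}(y_{τ(1)},…,y_{τ(p)}; z_1,…,z_r) = G_{p,r}(y_1,…,y_p; z_1,…,z_r). (It is symmetric in z_1,…,z_r by construction.) -/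
/-- Product over all pairs i < j except one excluded pair. -/
noncomputable def restProd {n : ℕ} (k k' : Fin n) (F : Fin n → Fin n → ℂ) : ℂ :=
  ∏ x ∈ (Finset.univ : Finset (Fin n × Fin n)).filter (fun x => x.1 < x.2 ∧ x ≠ (k, k')),
    F x.1 x.2

theorem pair_prod_eq {n : ℕ} (k k' : Fin n) (hk : k'.val = k.val + 1)
    (F : Fin n → Fin n → ℂ) :
    ∏ i : Fin n, ∏ j ∈ Finset.Ioi i, F i j = F k k' * restProd k k' F := by
  have h1 : ∏ i : Fin n, ∏ j ∈ Finset.Ioi i, F i j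
      = ∏ x ∈ (Finset.univ : Finset (Fin n × Fin n)).filter (fun x => x.1 < x.2), F x.1 x.2 := by
    rw [Finset.prod_filter, Fintype.prod_prod_type]
    refine Finset.prod_congr rfl fun i _ => ?_
    rw [← Finset.prod_filter]
    refine Finset.prod_congr ?_ fun _ _ => rfl
    ext j; simp
  have hm : (k, k') ∈ (Finset.univ : Finset (Fin n × Fin n)).filter (fun x => x.1 < x.2) := by
    have : k < k' := Fin.lt_def.2 (by omega)
    simpa using this
  rw [h1, ← Finset.mul_prod_erase _ _ hm, restProd]
  congr 1
  refine Finset.prod_congr ?_ fun _ _ => rfl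
  ext x; simp [and_comm]

theorem swap_val {n : ℕ} (k k' i : Fin n) :
    (Equiv.swap k k' i).val = if i.val = k.val then k'.val else
      if i.val = k'.val then k.val else i.val := by
  rw [Equiv.swap_apply_def]
  simp only [Fin.ext_iff]
  split_ifs <;> rfl

theorem restProd_left {n : ℕ} (k k' : Fin n) (hk : k'.val = k.val + 1)
    (F : Fin n → Fin n → ℂ) :
    restProd k k' (fun i j => F (Equiv.swap k k' i) j) = restProd k k' F := by
  unfold restProd
  have key : ∀ x : Fin n × Fin n, (x.1 < x.2 ∧ x ≠ (k, k')) →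
      ((Equiv.swap k k' x.1) < x.2 ∧ ((Equiv.swap k k' x.1), x.2) ≠ (k, k')) := by
    rintro ⟨a, b⟩
    simp only [ne_eq, Prod.mk.injEq, Fin.ext_iff, Fin.lt_def, swap_val]
    split_ifs <;> omega
  refine Finset.prod_bij' (fun x _ => (Equiv.swap k k' x.1, x.2))
    (fun x _ => (Equiv.swap k k' x.1, x.2)) ?_ ?_ ?_ ?_ ?_
  · intro x hx; simpa using key x (by simpa using hx)
  · intro x hx; simpa using key x (by simpa using hx)
  · intro x _; simp
  · intro x _; simp
  · intro x _; simp

theorem restProd_right {n : ℕ} (k k' : Fin n) (hk : k'.val = k.val + 1)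
    (F : Fin n → Fin n → ℂ) :
    restProd k k' (fun i j => F i (Equiv.swap k k' j)) = restProd k k' F := by
  unfold restProd
  have key : ∀ x : Fin n × Fin n, (x.1 < x.2 ∧ x ≠ (k, k')) →
      (x.1 < (Equiv.swap k k' x.2) ∧ (x.1, (Equiv.swap k k' x.2)) ≠ (k, k')) := by
    rintro ⟨a, b⟩
    simp only [ne_eq, Prod.mk.injEq, Fin.ext_iff, Fin.lt_def, swap_val]
    split_ifs <;> omega
  refine Finset.prod_bij' (fun x _ => (x.1, Equiv.swap k k' x.2))
    (fun x _ => (x.1, Equiv.swap k k' x.2)) ?_ ?_ ?_ ?_ ?_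
  · intro x hx; simpa using key x (by simpa using hx)
  · intro x hx; simpa using key x (by simpa using hx)
  · intro x _; simp
  · intro x _; simp
  · intro x _; simp

/-- The weight-free summand. -/
noncomputable def Mf {p : ℕ} (y w : Fin p → ℂ) : ℂ :=
  ∏ i : Fin p, ((1 / (y i - w i)) * ∏ j ∈ Finset.Ioi i, ((y i - w j + 1) / (y i - w j)))

/-- Part of `Mf` that is invariant under the swap. -/
noncomputable def Mrest {p : ℕ} (k k' : Fin p) (y w : Fin p → ℂ) : ℂ :=
  (∏ i ∈ (Finset.univ.erase k).erase k', (1 / (y i - w i))) *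
    restProd k k' (fun i j => (y i - w j + 1) / (y i - w j))

theorem Mf_eq {p : ℕ} (k k' : Fin p) (hk : k'.val = k.val + 1) (y w : Fin p → ℂ) :
    Mf y w = Mrest k k' y w * ((1 / (y k - w k)) * (1 / (y k' - w k')) *
      ((y k - w k' + 1) / (y k - w k'))) := by
  unfold Mf Mrest
  have hne : k' ≠ k := by intro h; rw [h] at hk; omega
  rw [Finset.prod_mul_distrib, pair_prod_eq k k' hk (fun i j => (y i - w j + 1) / (y i - w j)),
    ← Finset.mul_prod_erase Finset.univ _ (Finset.mem_univ k),
    ← Finset.mul_prod_erase (Finset.univ.erase k) _ (a := k') (by simp [hne])]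
  ring

theorem Mrest_left {p : ℕ} (k k' : Fin p) (hk : k'.val = k.val + 1) (y w : Fin p → ℂ) :
    Mrest k k' (y ∘ Equiv.swap k k') w = Mrest k k' y w := by
  unfold Mrest
  congr 1
  · refine Finset.prod_congr rfl fun i hi => ?_
    simp only [Finset.mem_erase] at hi
    simp [Equiv.swap_apply_of_ne_of_ne hi.2.1 hi.1]
  · exact restProd_left k k' hk (fun i j => (y i - w j + 1) / (y i - w j))

theorem Mrest_right {p : ℕ} (k k' : Fin p) (hk : k'.val = k.val + 1) (y w : Fin p → ℂ) :
    Mrest k k' y (w ∘ Equiv.swap k k') = Mrest k k' y w := by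
  unfold Mrest
  congr 1
  · refine Finset.prod_congr rfl fun i hi => ?_
    simp only [Finset.mem_erase] at hi
    simp [Equiv.swap_apply_of_ne_of_ne hi.2.1 hi.1]
  · exact restProd_right k k' hk (fun i j => (y i - w j + 1) / (y i - w j))

theorem W_eq {r : ℕ} (k k' : Fin r) (hk : k'.val = k.val + 1) (t : Fin r → ℂ) :
    W t = (t k - t k' - 1) / (t k - t k') *
      restProd k k' (fun i j => (t i - t j - 1) / (t i - t j)) :=
  pair_prod_eq k k' hk (fun i j => (t i - t j - 1) / (t i - t j))

theorem W_swap {r : ℕ} (k k' : Fin r) (hk : k'.val = k.val + 1) (t : Fin r → ℂ) :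
    W (t ∘ Equiv.swap k k') = (t k' - t k - 1) / (t k' - t k) *
      restProd k k' (fun i j => (t i - t j - 1) / (t i - t j)) := by
  rw [W_eq k k' hk]
  have h1 := restProd_left k k' hk
    (fun i j => (t i - t (Equiv.swap k k' j) - 1) / (t i - t (Equiv.swap k k' j)))
  have h2 := restProd_right k k' hk (fun i j => (t i - t j - 1) / (t i - t j))
  simp only [Function.comp, Equiv.swap_apply_left, Equiv.swap_apply_right]
  rw [h1, h2]

theorem local_identity (a b u v : ℂ) (hau : a ≠ u) (hav : a ≠ v) (hbu : b ≠ u) (hbv : b ≠ v)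
    (huv : u ≠ v) :
    (1 / (b - u)) * (1 / (a - v)) * ((b - v + 1) / (b - v)) * ((u - v - 1) / (u - v)) +
    (1 / (b - v)) * (1 / (a - u)) * ((b - u + 1) / (b - u)) * ((v - u - 1) / (v - u)) =
    (1 / (a - u)) * (1 / (b - v)) * ((a - v + 1) / (a - v)) * ((u - v - 1) / (u - v)) +
    (1 / (a - v)) * (1 / (b - u)) * ((a - u + 1) / (a - u)) * ((v - u - 1) / (v - u)) := by
  have h1 := sub_ne_zero.2 hau
  have h2 := sub_ne_zero.2 hav
  have h3 := sub_ne_zero.2 hbu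
  have h4 := sub_ne_zero.2 hbv
  have h5 := sub_ne_zero.2 huv
  have h6 : v - u = -(u - v) := by ring
  rw [h6]
  field_simp
  ring

theorem G_swap (p r : ℕ) (hpr : p ≤ r) (y : Fin p → ℂ) (z : Fin r → ℂ)
    (hz : Function.Injective z) (hyz : ∀ i j, y i ≠ z j)
    (k k' : Fin p) (hk : k'.val = k.val + 1) :
    G p r hpr (y ∘ Equiv.swap k k') z = G p r hpr y z := by
  set s := shiftIdx p r hpr with hs
  set S : Equiv.Perm (Fin r) := Equiv.swap (s k) (s k') with hS
  have hsk : (s k').val = (s k).val + 1 := by simp [hs, shiftIdx]; omega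
  have hne : s k ≠ s k' := by intro h; rw [h] at hsk; omega
  have hinj : Function.Injective s := by
    intro a b hab
    simp only [hs, shiftIdx, Fin.mk.injEq] at hab
    ext; omega
  have hcomm : ∀ i, S (s i) = s (Equiv.swap k k' i) := fun i =>
    hinj.swap_apply k k' i
  let T : (Fin p → ℂ) → Equiv.Perm (Fin r) → ℂ := fun y σ => Mf y (z ∘ σ ∘ s) * W (z ∘ σ)
  have hG : ∀ y, G p r hpr y z = (1 / (Nat.factorial (r - p) : ℂ)) * ∑ σ, T y σ := fun y => rfl
  rw [hG, hG]
  congr 1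
  have hdouble : ∀ y, ∑ σ, T y σ + ∑ σ, T y σ = ∑ σ, (T y σ + T y (σ * S)) := by
    intro y
    rw [Finset.sum_add_distrib]
    congr 1
    exact (Equiv.sum_comp (Equiv.mulRight S) (T y)).symm
  have hmain : ∑ σ, (T (y ∘ Equiv.swap k k') σ + T (y ∘ Equiv.swap k k') (σ * S))
      = ∑ σ, (T y σ + T y (σ * S)) := by
    refine Finset.sum_congr rfl fun σ _ => ?_
    have e1 : z ∘ (σ * S : Equiv.Perm (Fin r)) = (z ∘ σ) ∘ S := rfl
    have e2 : z ∘ (σ * S : Equiv.Perm (Fin r)) ∘ s = (z ∘ σ ∘ s) ∘ Equiv.swap k k' := by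
      funext i
      simp only [Function.comp, Equiv.Perm.mul_apply, hcomm]
    simp only [T]
    rw [e1, e2, hS, W_swap _ _ hsk, W_eq _ _ hsk]
    simp only [Mf_eq k k' hk, Mrest_left k k' hk, Mrest_right k k' hk]
    simp only [Function.comp, Equiv.swap_apply_left, Equiv.swap_apply_right]
    have := local_identity (y k) (y k') (z (σ (s k))) (z (σ (s k'))) (hyz _ _) (hyz _ _)
      (hyz _ _) (hyz _ _) (fun h => hne (σ.injective (hz h)))
    linear_combination (Mrest k k' y (z ∘ σ ∘ s) *
      restProd (s k) (s k') (fun i j => (z (σ i) - z (σ j) - 1) / (z (σ i) - z (σ j)))) * this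
  rw [← hdouble, ← hdouble, ← two_mul, ← two_mul] at hmain
  exact mul_left_cancel₀ two_ne_zero hmain

/-- `G_{p,r}` is a symmetric function of `y_1, …, y_p`. -/
theorem G_symmetric_in_y (p r : ℕ) (hp : 0 < p) (hpr : p ≤ r)
    (y : Fin p → ℂ) (z : Fin r → ℂ)
    (hz : Function.Injective z) (hyz : ∀ i j, y i ≠ z j)
    (τ : Equiv.Perm (Fin p)) :
    G p r hpr (y ∘ τ) z = G p r hpr y z := by
  obtain ⟨n, rfl⟩ : ∃ n, p = n + 1 := ⟨p - 1, by omega⟩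
  have hτ : τ ∈ Submonoid.closure
      (Set.range fun i : Fin n => Equiv.swap i.castSucc i.succ) := by
    rw [Equiv.Perm.mclosure_swap_castSucc_succ]; trivial
  induction hτ using Submonoid.closure_induction generalizing y with
  | mem x hx =>
    obtain ⟨i, rfl⟩ := hx
    exact G_swap _ _ _ _ _ hz hyz _ _ (by simp)
  | one => rfl
  | mul a b _ _ iha ihb =>
    have e : y ∘ (a * b : Equiv.Perm (Fin (n + 1))) = (y ∘ a) ∘ b := rfl
    rw [e, ihb (y ∘ a) (fun i j => hyz _ _), iha y hyz]
end

section
/- Let p ≤ r be positive integers. Then Sym_{z_1,…,z_r}[ ∏_{i=1}^p ( (1/(y_i − z_{i+r−p})) · ∏_{i<j≤p} (q y_i − q^{-1} z_{j+r−p})/(y_i − z_{j+r−p}) ) · ∏_{1≤i<j≤r} (q^{-1} z_i − q z_j)/(z_i − z_j) ] = [r−p]_q! · Σ_{1≤d_1<…<d_p≤r} Sym_{y_1,…,y_p}[ ∏_{i=1}^p ( (q^{i−d_i}/(y_i − z_{d_i})) · ∏_{d_i<j≤r} (q y_i − q^{-1} z_j)/(y_i − z_j) ) · ∏_{1≤i<j≤p}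 (q^{-1} y_i − q y_j)/(y_i − y_j) ], the sum being taken over all p-tuples d = (d_1,…,d_p) with 1 ≤ d_1 < … < d_p ≤ r; this is an identity of rational functions in q, y_1,…,y_p, z_1,…,z_r. -/
open scoped Classical

namespace QG
open Finset

noncomputable def f (q a b : ℂ) : ℂ := (q⁻¹ * a - q * b) / (a - b)

/-- partial fractions -/
lemma pf (q : ℂ) (hq : q ≠ 0) (Z : Finset ℂ) : ∀ x, x ∉ Z →
    ∏ a ∈ Z, f q a x = (q⁻¹) ^ #Z + (q - q⁻¹) * x * ∑ k ∈ Z, (∏ a ∈ Z.erase k, f q a k) / (x - k) := by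
  induction Z using Finset.induction_on with
  | empty => intro x _; simp
  | insert b Z hb ih =>
    intro x hx
    simp only [mem_insert, not_or] at hx
    obtain ⟨hxb, hxZ⟩ := hx
    have hxb' : x - b ≠ 0 := sub_ne_zero.2 hxb
    rw [prod_insert hb, sum_insert hb, erase_insert hb, card_insert_of_notMem hb]
    have h1 : ∑ k ∈ Z, (∏ a ∈ (insert b Z).erase k, f q a k) / (x - k)
        = f q b x * ∑ k ∈ Z, (∏ a ∈ Z.erase k, f q a k) / (x - k)
          + (q - q⁻¹) * b / (b - x) * ∑ k ∈ Z, (∏ a ∈ Z.erase k, f q a k) / (b - k) := by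
      rw [mul_sum, mul_sum, ← sum_add_distrib]
      refine sum_congr rfl fun k hk => ?_
      have hbk : b ≠ k := fun h => hb (h ▸ hk)
      have hxk : x ≠ k := fun h => hxZ (h ▸ hk)
      rw [erase_insert_of_ne hbk, prod_insert (by simp [hb])]
      have e1 : b - k ≠ 0 := sub_ne_zero.2 hbk
      have e2 : x - k ≠ 0 := sub_ne_zero.2 hxk
      have e3 : b - x ≠ 0 := sub_ne_zero.2 (Ne.symm hxb)
      generalize ∏ a ∈ Z.erase k, f q a k = P
      unfold f
      field_simp
      ring
    rw [h1, ih x hxZ, ih b hb]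
    generalize ∑ k ∈ Z, (∏ a ∈ Z.erase k, f q a k) / (x - k) = S
    generalize ∑ k ∈ Z, (∏ a ∈ Z.erase k, f q a k) / (b - k) = T
    have e3 : b - x ≠ 0 := sub_ne_zero.2 (Ne.symm hxb)
    rw [pow_succ]
    generalize q⁻¹ ^ #Z = A
    have hfx : f q b x = q⁻¹ - (q - q⁻¹) * x / (b - x) := by
      unfold f; field_simp; ring
    have : (x - b) = -(b - x) := by ring
    rw [hfx, this]
    generalize q⁻¹ = Q
    field_simp
    ring

lemma sum_prod_f (q : ℂ) (hq : q ≠ 0) (Z : Finset ℂ) :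
    ∑ k ∈ Z, ∏ a ∈ Z.erase k, f q a k = qInt q #Z := by
  induction Z using Finset.induction_on with
  | empty => simp [qInt]
  | insert b Z hb ih =>
    rw [sum_insert hb, erase_insert hb, card_insert_of_notMem hb]
    have h1 : ∑ k ∈ Z, (∏ a ∈ (insert b Z).erase k, f q a k)
        = q * ∑ k ∈ Z, (∏ a ∈ Z.erase k, f q a k)
          - (q - q⁻¹) * b * ∑ k ∈ Z, (∏ a ∈ Z.erase k, f q a k) / (b - k) := by
      rw [mul_sum, mul_sum, ← sum_sub_distrib]
      refine sum_congr rfl fun k hk => ?_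
      have hbk : b ≠ k := fun h => hb (h ▸ hk)
      rw [erase_insert_of_ne hbk, prod_insert (by simp [hb])]
      have e1 : b - k ≠ 0 := sub_ne_zero.2 hbk
      generalize ∏ a ∈ Z.erase k, f q a k = P
      unfold f
      generalize q⁻¹ = Q
      field_simp
      ring
    rw [h1, pf q hq Z b hb, ih]
    have : qInt q (#Z + 1) = q⁻¹ ^ #Z + q * qInt q #Z := by
      unfold qInt
      rw [sum_range_succ, mul_sum, add_comm]
      congr 1
      · simp
      · refine sum_congr rfl fun i hi => ?_
        have : i < #Z := by simpa using hi
        rw [← mul_assoc, ← pow_succ']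
        congr 2
        omega
    rw [this]; ring

noncomputable def Lsum (q : ℂ) (F : Finset ℂ → Finset ℂ → ℂ) (y : ℂ) (Y Z : Finset ℂ) : ℂ :=
  ∑ w ∈ Z, (∏ u ∈ Y, f q w u) * (∏ a ∈ Z.erase w, f q a w) * F Y (Z.erase w) / (y - w)

noncomputable def Esum (q : ℂ) (F : Finset ℂ → Finset ℂ → ℂ) (Y : Finset ℂ) (x : ℂ) (Z : Finset ℂ) : ℂ :=
  (∏ u ∈ Y, f q x u) * F Y Z + ∑ k ∈ Y, q ^ ((#(Y.erase k) : ℤ) - (#Z : ℤ)) / (k - x) *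
    ((∏ i ∈ Y.erase k, f q x i) * (∏ i ∈ Y.erase k, f q i k)) * F (Y.erase k) Z

/-- Recursion properties at the level of `Z`. -/
def Good (q : ℂ) (F : Finset ℂ → Finset ℂ → ℂ) (Z : Finset ℂ) : Prop :=
  (∀ Y y, Disjoint Y Z → y ∉ Y → y ∉ Z → F (insert y Y) Z = Lsum q F y Y Z) ∧
  (∀ Y x, Disjoint Y Z → x ∈ Z → F Y Z = Esum q F Y x (Z.erase x))

lemma star (q : ℂ) (hq : q ≠ 0) (F : Finset ℂ → Finset ℂ → ℂ) (Z : Finset ℂ) (hG : Good q F Z)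
    (Y : Finset ℂ) (x : ℂ) (hYZ : Disjoint Y Z) (hxY : x ∉ Y) (hxZ : x ∉ Z) :
    (∏ a ∈ Z, f q a x) * F Y Z = q ^ ((#Y : ℤ) - (#Z : ℤ)) * (∏ i ∈ Y, f q i x) * F Y Z
      + (q - q⁻¹) * x * (F (insert x Y) Z + q ^ ((#Y : ℤ) - (#Z : ℤ)) *
        ∑ j ∈ Y, (∏ i ∈ Y.erase j, f q i j) / (j - x) * F (insert x (Y.erase j)) Z) := by
  obtain ⟨hL, hE⟩ := hG
  set e := q ^ ((#Y : ℤ) - (#Z : ℤ)) with he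
  have hΛ : ∀ j ∈ Y, F Y Z = Lsum q F j (Y.erase j) Z := by
    intro j hj
    rw [← hL (Y.erase j) j (hYZ.mono_left (erase_subset _ _)) (by simp)
      (fun h => (disjoint_left.1 hYZ hj h)), insert_erase hj]
  have hM : ∀ j ∈ Y, F (insert x (Y.erase j)) Z = Lsum q F x (Y.erase j) Z := fun j hj =>
    hL _ _ (hYZ.mono_left (erase_subset _ _)) (by simp [hxY]) hxZ
  have key : ∑ k ∈ Z, (∏ a ∈ Z.erase k, f q a k) / (x - k) * F Y Z
      = F (insert x Y) Z + e * ∑ j ∈ Y, (∏ i ∈ Y.erase j, f q i j) / (j - x) *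
          (F (insert x (Y.erase j)) Z - F Y Z) := by
    have h1 : ∀ k ∈ Z, (∏ a ∈ Z.erase k, f q a k) / (x - k) * F Y Z =
        (∏ u ∈ Y, f q k u) * (∏ a ∈ Z.erase k, f q a k) * F Y (Z.erase k) / (x - k)
        + ∑ j ∈ Y, e * ((∏ i ∈ Y.erase j, f q i j) / (j - x) *
          ((∏ u ∈ Y.erase j, f q k u) * (∏ a ∈ Z.erase k, f q a k) * F (Y.erase j) (Z.erase k) / (x - k)
          - (∏ u ∈ Y.erase j, f q k u) * (∏ a ∈ Z.erase k, f q a k) * F (Y.erase j) (Z.erase k) / (j - k))) := by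
      intro k hk
      rw [hE Y k hYZ hk, Esum, mul_add, mul_sum]
      congr 1
      · ring
      · refine sum_congr rfl fun j hj => ?_
        have hee : q ^ ((#(Y.erase j) : ℤ) - (#(Z.erase k) : ℤ)) = e := by
          rw [he, card_erase_of_mem hj, card_erase_of_mem hk,
            Nat.cast_sub (card_pos.2 ⟨j, hj⟩), Nat.cast_sub (card_pos.2 ⟨k, hk⟩)]
          congr 1; ring
        rw [hee]
        have e1 : j - k ≠ 0 := sub_ne_zero.2 fun h => disjoint_left.1 hYZ hj (h ▸ hk)
        have e2 : x - k ≠ 0 := sub_ne_zero.2 fun h => hxZ (h ▸ hk)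
        have e3 : j - x ≠ 0 := sub_ne_zero.2 fun h => hxY (h ▸ hj)
        generalize ∏ u ∈ Y.erase j, f q k u = A
        generalize ∏ a ∈ Z.erase k, f q a k = B
        generalize ∏ i ∈ Y.erase j, f q i j = C
        generalize F (Y.erase j) (Z.erase k) = D
        field_simp
        ring
    rw [sum_congr rfl h1, sum_add_distrib, hL Y x hYZ hxY hxZ, Lsum]
    congr 1
    rw [sum_comm, mul_sum]
    refine sum_congr rfl fun j hj => ?_
    rw [hM j hj, hΛ j hj, Lsum, Lsum, ← sum_sub_distrib, mul_sum, mul_sum]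
  rw [pf q hq Z x hxZ, pf q hq Y x hxY]
  have h2 : ((q⁻¹) ^ #Z + (q - q⁻¹) * x * ∑ k ∈ Z, (∏ a ∈ Z.erase k, f q a k) / (x - k)) * F Y Z
     = (q⁻¹) ^ #Z * F Y Z + (q - q⁻¹) * x * ∑ k ∈ Z, (∏ a ∈ Z.erase k, f q a k) / (x - k) * F Y Z := by
    rw [← sum_mul]; ring
  have h3 : (q⁻¹) ^ #Z = e * (q⁻¹) ^ #Y := by
    rw [he, zpow_sub₀ hq, zpow_natCast, zpow_natCast, inv_pow, inv_pow]
    have := pow_ne_zero #Y hq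
    field_simp
  have h4 : ∑ j ∈ Y, (∏ i ∈ Y.erase j, f q i j) / (j - x) * (F (insert x (Y.erase j)) Z - F Y Z)
     = ∑ j ∈ Y, (∏ i ∈ Y.erase j, f q i j) / (j - x) * F (insert x (Y.erase j)) Z
       + (∑ j ∈ Y, (∏ i ∈ Y.erase j, f q i j) / (x - j)) * F Y Z := by
    rw [sum_mul, ← sum_add_distrib]
    refine sum_congr rfl fun j hj => ?_
    rw [← neg_sub j x, div_neg]; ring
  rw [h2, key, h3, h4]
  ring

lemma step (q : ℂ) (hq : q ≠ 0) (F : Finset ℂ → Finset ℂ → ℂ) (Z : Finset ℂ) (x : ℂ) (hxZ : x ∉ Z)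
    (hG : Good q F Z) (hG' : ∀ k ∈ Z, Good q F (insert x (Z.erase k)))
    (Y : Finset ℂ) (y : ℂ) (hYZ : Disjoint Y Z) (hxY : x ∉ Y) (hyY : y ∉ Y) (hyZ : y ∉ Z)
    (hyx : y ≠ x) :
    Lsum q F y Y (insert x Z) = Esum q F (insert y Y) x Z := by
  have hs := star q hq F Z hG Y x hYZ hxY hxZ
  obtain ⟨hL, hE⟩ := hG
  set e := q ^ ((#Y : ℤ) - (#Z : ℤ)) with he
  have eyx : y - x ≠ 0 := sub_ne_zero.2 hyx
  have hΛ : ∀ j ∈ Y, F Y Z = Lsum q F j (Y.erase j) Z := by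
    intro j hj
    rw [← hL (Y.erase j) j (hYZ.mono_left (erase_subset _ _)) (by simp)
      (fun h => (disjoint_left.1 hYZ hj h)), insert_erase hj]
  have hM : ∀ j ∈ Y, ∀ x, x ∉ Y → x ∉ Z → F (insert x (Y.erase j)) Z = Lsum q F x (Y.erase j) Z :=
    fun j hj x hxY hxZ => hL _ _ (hYZ.mono_left (erase_subset _ _)) (by simp [hxY]) hxZ
  -- the terms with `w ∈ Z`
  have h1 : ∀ k ∈ Z, (∏ u ∈ Y, f q k u) * (∏ a ∈ (insert x Z).erase k, f q a k)
        * F Y ((insert x Z).erase k) / (y - k)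
      = (∏ u ∈ Y, f q x u) * (f q x y *
          ((∏ u ∈ Y, f q k u) * (∏ a ∈ Z.erase k, f q a k) * F Y (Z.erase k) / (y - k))
        - (q - q⁻¹) * x / (y - x) *
          ((∏ u ∈ Y, f q k u) * (∏ a ∈ Z.erase k, f q a k) * F Y (Z.erase k) / (x - k)))
      + ∑ j ∈ Y, e / (j - x) * ((∏ i ∈ Y.erase j, f q x i) * (∏ i ∈ Y.erase j, f q i j)) *
        (f q x y * f q y j * ((∏ u ∈ Y.erase j, f q k u) * (∏ a ∈ Z.erase k, f q a k) * F (Y.erase j) (Z.erase k) / (y - k))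
         - (q - q⁻¹) * x * f q x j / (y - x) * ((∏ u ∈ Y.erase j, f q k u) * (∏ a ∈ Z.erase k, f q a k) * F (Y.erase j) (Z.erase k) / (x - k))
         + (q - q⁻¹) * j * f q x j / (y - j) * ((∏ u ∈ Y.erase j, f q k u) * (∏ a ∈ Z.erase k, f q a k) * F (Y.erase j) (Z.erase k) / (j - k))) := by
    intro k hk
    have hxk : x ≠ k := fun h => hxZ (h ▸ hk)
    have hyk : y ≠ k := fun h => hyZ (h ▸ hk)
    have e1 : x - k ≠ 0 := sub_ne_zero.2 hxk
    have e2 : y - k ≠ 0 := sub_ne_zero.2 hyk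
    have exy : x - y ≠ 0 := sub_ne_zero.2 hyx.symm
    have hx' : x ∉ Z.erase k := by simp [hxZ]
    rw [erase_insert_of_ne hxk, prod_insert hx',
      (hG' k hk).2 Y x (disjoint_left.2 fun a ha hb => by
        rcases mem_insert.1 hb with h | h
        · exact hxY (h ▸ ha)
        · exact disjoint_left.1 hYZ ha (mem_of_mem_erase h)) (mem_insert_self _ _),
      erase_insert hx', Esum, mul_add, add_div, mul_sum, sum_div]
    congr 1
    · generalize ∏ u ∈ Y, f q k u = A
      generalize ∏ a ∈ Z.erase k, f q a k = B
      generalize ∏ u ∈ Y, f q x u = C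
      generalize F Y (Z.erase k) = D
      unfold f
      generalize q⁻¹ = Q
      field_simp
      ring
    · refine sum_congr rfl fun j hj => ?_
      have hee : q ^ ((#(Y.erase j) : ℤ) - (#(Z.erase k) : ℤ)) = e := by
        rw [he, card_erase_of_mem hj, card_erase_of_mem hk,
          Nat.cast_sub (card_pos.2 ⟨j, hj⟩), Nat.cast_sub (card_pos.2 ⟨k, hk⟩)]
        congr 1; ring
      rw [hee, ← mul_prod_erase Y (fun u => f q k u) hj]
      have e3 : j - k ≠ 0 := sub_ne_zero.2 fun h => disjoint_left.1 hYZ hj (h ▸ hk)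
      have e3' : k - j ≠ 0 := sub_ne_zero.2 fun h => disjoint_left.1 hYZ hj (h ▸ hk)
      have e4 : j - x ≠ 0 := sub_ne_zero.2 fun h => hxY (h ▸ hj)
      have e4' : x - j ≠ 0 := sub_ne_zero.2 fun h => hxY (h ▸ hj)
      have e5 : y - j ≠ 0 := sub_ne_zero.2 fun h => hyY (h ▸ hj)
      have alg : f q k j * f q x k / (y - k) = f q x y * f q y j / (y - k)
          - (q - q⁻¹) * x * f q x j / (y - x) / (x - k)
          + (q - q⁻¹) * j * f q x j / (y - j) / (j - k) := by
        unfold f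
        generalize q⁻¹ = Q
        rw [← neg_sub k j, ← neg_sub x y]
        field_simp
        ring
      generalize ∏ u ∈ Y.erase j, f q k u = A
      generalize ∏ a ∈ Z.erase k, f q a k = B
      generalize ∏ u ∈ Y.erase j, f q x u = C
      generalize ∏ u ∈ Y.erase j, f q u j = C'
      generalize F (Y.erase j) (Z.erase k) = D
      linear_combination (e / (j - x) * C * C' * A * B * D) * alg
  have h2 : Lsum q F y Y (insert x Z) = (∏ u ∈ Y, f q x u) * ((∏ a ∈ Z, f q a x) * F Y Z) / (y - x)
      + ((∏ u ∈ Y, f q x u) * (f q x y * F (insert y Y) Z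
        - (q - q⁻¹) * x / (y - x) * F (insert x Y) Z)
      + ∑ j ∈ Y, e / (j - x) * ((∏ i ∈ Y.erase j, f q x i) * (∏ i ∈ Y.erase j, f q i j)) *
        (f q x y * f q y j * F (insert y (Y.erase j)) Z
         - (q - q⁻¹) * x * f q x j / (y - x) * F (insert x (Y.erase j)) Z
         + (q - q⁻¹) * j * f q x j / (y - j) * F Y Z)) := by
    rw [Lsum, sum_insert hxZ, erase_insert hxZ, sum_congr rfl h1, sum_add_distrib, sum_comm]
    congr 1
    · ring
    congr 1
    · rw [← mul_sum, sum_sub_distrib, ← mul_sum, ← mul_sum, hL Y y hYZ hyY hyZ,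
        hL Y x hYZ hxY hxZ, Lsum, Lsum]
    · refine sum_congr rfl fun j hj => ?_
      rw [← mul_sum, sum_add_distrib, sum_sub_distrib, ← mul_sum, ← mul_sum, ← mul_sum,
        hM j hj y hyY hyZ, hM j hj x hxY hxZ, hΛ j hj, Lsum, Lsum, Lsum]
  have h3 : Esum q F (insert y Y) x Z = f q x y * (∏ u ∈ Y, f q x u) * F (insert y Y) Z
      + (e / (y - x) * ((∏ i ∈ Y, f q x i) * (∏ i ∈ Y, f q i y)) * F Y Z
      + ∑ j ∈ Y, e / (j - x) * ((∏ i ∈ Y.erase j, f q x i) * (∏ i ∈ Y.erase j, f q i j)) *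
        (f q x y * f q y j * F (insert y (Y.erase j)) Z)) := by
    rw [Esum, prod_insert hyY, sum_insert hyY, erase_insert hyY]
    congr 2
    refine sum_congr rfl fun j hj => ?_
    have hyj : y ≠ j := fun h => hyY (h ▸ hj)
    have hy' : y ∉ Y.erase j := by simp [hyY]
    rw [erase_insert_of_ne hyj, prod_insert hy', prod_insert hy', card_insert_of_notMem hy',
      card_erase_add_one hj]
    ring
  have h4 : (∏ i ∈ Y, f q i y) - (∏ i ∈ Y, f q i x) =
      (y - x) * ∑ j ∈ Y, (q - q⁻¹) * j * (∏ i ∈ Y.erase j, f q i j) / ((y - j) * (j - x)) := by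
    rw [pf q hq Y x hxY, pf q hq Y y hyY, add_sub_add_left_eq_sub, mul_sum, mul_sum, mul_sum,
      ← sum_sub_distrib]
    refine sum_congr rfl fun j hj => ?_
    have e4 : j - x ≠ 0 := sub_ne_zero.2 fun h => hxY (h ▸ hj)
    have e4' : x - j ≠ 0 := sub_ne_zero.2 fun h => hxY (h ▸ hj)
    have e5 : y - j ≠ 0 := sub_ne_zero.2 fun h => hyY (h ▸ hj)
    rw [← neg_sub j x]
    field_simp
    ring
  have h5 : ∑ j ∈ Y, e / (j - x) * ((∏ i ∈ Y.erase j, f q x i) * (∏ i ∈ Y.erase j, f q i j)) *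
        (f q x y * f q y j * F (insert y (Y.erase j)) Z
         - (q - q⁻¹) * x * f q x j / (y - x) * F (insert x (Y.erase j)) Z
         + (q - q⁻¹) * j * f q x j / (y - j) * F Y Z)
      = ∑ j ∈ Y, e / (j - x) * ((∏ i ∈ Y.erase j, f q x i) * (∏ i ∈ Y.erase j, f q i j)) *
        (f q x y * f q y j * F (insert y (Y.erase j)) Z)
      - (q - q⁻¹) * x / (y - x) * e * (∏ i ∈ Y, f q x i) *
        (∑ j ∈ Y, (∏ i ∈ Y.erase j, f q i j) / (j - x) * F (insert x (Y.erase j)) Z)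
      + e * (∏ i ∈ Y, f q x i) * F Y Z *
       (∑ j ∈ Y, (q - q⁻¹) * j * (∏ i ∈ Y.erase j, f q i j) / ((y - j) * (j - x))) := by
    rw [mul_sum, mul_sum, ← sum_sub_distrib, ← sum_add_distrib]
    refine sum_congr rfl fun j hj => ?_
    rw [← mul_prod_erase Y (fun u => f q x u) hj]
    rw [div_mul_eq_div_div]
    ring
  rw [h2, h3, hs, h5]
  have h6 : (∑ j ∈ Y, (q - q⁻¹) * j * (∏ i ∈ Y.erase j, f q i j) / ((y - j) * (j - x)))
     = ((∏ i ∈ Y, f q i y) - (∏ i ∈ Y, f q i x)) / (y - x) := by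
    rw [h4]; field_simp
  rw [h6]
  ring

noncomputable def G (q : ℂ) : ℕ → Finset ℂ → Finset ℂ → ℂ
  | 0, Y, _ => if Y = ∅ then 1 else 0
  | n + 1, Y, Z => if h : Y.Nonempty then Lsum q (G q n) h.choose (Y.erase h.choose) Z else 1

noncomputable def F (q : ℂ) (Y Z : Finset ℂ) : ℂ := G q #Z Y Z

lemma F_empty (q : ℂ) (Z : Finset ℂ) : F q ∅ Z = 1 := by
  unfold F
  cases #Z <;> simp [G]

lemma F_Lsum (q : ℂ) (Y Z : Finset ℂ) (hY : Y.Nonempty) :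
    ∃ y ∈ Y, F q Y Z = Lsum q (F q) y (Y.erase y) Z := by
  rcases Z.eq_empty_or_nonempty with rfl | hZ
  · obtain ⟨y, hy⟩ := hY
    refine ⟨y, hy, ?_⟩
    have : Y ≠ ∅ := ne_empty_of_mem hy
    simp [F, G, Lsum, this]
  · refine ⟨hY.choose, hY.choose_spec, ?_⟩
    obtain ⟨m, hm⟩ : ∃ m, #Z = m + 1 := ⟨#Z - 1, by have := card_pos.2 hZ; omega⟩
    rw [F, hm, G, dif_pos hY, Lsum, Lsum]
    refine sum_congr rfl fun w hw => ?_
    have : #(Z.erase w) = m := by rw [card_erase_of_mem hw, hm]; rfl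
    rw [F, this]

lemma F_zero (q : ℂ) (Y : Finset ℂ) (hY : Y.Nonempty) : F q Y ∅ = 0 := by
  obtain ⟨y, _, h⟩ := F_Lsum q Y ∅ hY
  rw [h, Lsum, sum_empty]

lemma good (q : ℂ) (hq : q ≠ 0) (n : ℕ) : ∀ Z : Finset ℂ, #Z = n → Good q (F q) Z := by
  induction n with
  | zero =>
    intro Z hZ
    rw [card_eq_zero] at hZ
    subst hZ
    refine ⟨fun Y y _ _ _ => ?_, fun Y x _ hx => by simp at hx⟩
    rw [F_zero _ _ (insert_nonempty _ _), Lsum, sum_empty]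
  | succ n ih =>
    intro Z hZ
    have stp : ∀ Y y x, Disjoint Y Z → y ∉ Y → y ∉ Z → x ∈ Z →
        Lsum q (F q) y Y Z = Esum q (F q) (insert y Y) x (Z.erase x) := by
      intro Y y x hd hyY hyZ hx
      have hc : #(Z.erase x) = n := by rw [card_erase_of_mem hx, hZ]; rfl
      have := step q hq (F q) (Z.erase x) x (by simp) (ih _ hc) (fun k hk => ih _ (by
        rw [card_insert_of_notMem (by simp), card_erase_add_one hk, hc])) Y y
        (hd.mono_right (erase_subset _ _)) (fun h => disjoint_left.1 hd h hx) hyY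
        (fun h => hyZ (mem_of_mem_erase h)) (fun h => hyZ (h ▸ hx))
      rwa [insert_erase hx] at this
    have hE : ∀ Y x, Disjoint Y Z → x ∈ Z → F q Y Z = Esum q (F q) Y x (Z.erase x) := by
      intro Y x hd hx
      rcases Y.eq_empty_or_nonempty with rfl | hY
      · simp [Esum, F_empty]
      · obtain ⟨y, hy, h⟩ := F_Lsum q Y Z hY
        rw [h, stp (Y.erase y) y x (hd.mono_left (erase_subset _ _)) (by simp)
          (fun h => disjoint_left.1 hd hy h) hx, insert_erase hy]
    refine ⟨fun Y y hd hyY hyZ => ?_, hE⟩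
    obtain ⟨x, hx⟩ : Z.Nonempty := card_pos.1 (by omega)
    rw [stp Y y x hd hyY hyZ hx, hE _ x _ hx]
    rw [disjoint_insert_left]; exact ⟨hyZ, hd⟩

/-! Fin bookkeeping -/

lemma sum_perm_snoc (n : ℕ) (H : (Fin (n + 1) → Fin (n + 1)) → ℂ) :
    ∑ σ : Equiv.Perm (Fin (n + 1)), H σ =
      ∑ k : Fin (n + 1), ∑ σ : Equiv.Perm (Fin n),
        H (Fin.snoc (α := fun _ => Fin (n + 1)) (fun i => k.succAbove (σ i)) k) := by
  rw [← Fintype.sum_prod_type']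
  have hinj : ∀ x : Fin (n + 1) × Equiv.Perm (Fin n), Function.Injective
      (Fin.snoc (α := fun _ => Fin (n + 1)) (fun i => x.1.succAbove (x.2 i)) x.1) := by
    rintro ⟨k, σ⟩ i j
    refine Fin.lastCases ?_ (fun i => ?_) i <;> refine Fin.lastCases ?_ (fun j => ?_) j
    · simp
    · simp only [Fin.snoc_last, Fin.snoc_castSucc]
      intro h; exact absurd h (Fin.ne_succAbove _ _)
    · simp only [Fin.snoc_last, Fin.snoc_castSucc]
      intro h; exact absurd h.symm (Fin.ne_succAbove _ _)
    · simp
  let φ : Fin (n + 1) × Equiv.Perm (Fin n) → Equiv.Perm (Fin (n + 1)) := fun x =>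
    Equiv.ofBijective _ (Finite.injective_iff_bijective.1 (hinj x))
  have hφ : Function.Bijective φ := by
    rw [Fintype.bijective_iff_injective_and_card]
    constructor
    · rintro ⟨k, σ⟩ ⟨k', σ'⟩ h
      have h' : ∀ i, (Fin.snoc (α := fun _ => Fin (n + 1)) (fun i => k.succAbove (σ i)) k) i =
        (Fin.snoc (α := fun _ => Fin (n + 1)) (fun i => k'.succAbove (σ' i)) k') i := fun i =>
        congrArg (fun e : Equiv.Perm (Fin (n + 1)) => e i) h
      have hk : k = k' := by simpa using h' (Fin.last n)
      subst hk
      congr 1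
      ext i
      have := h' i.castSucc
      simp only [Fin.snoc_castSucc] at this
      rw [Fin.succAbove_right_injective this]
    · simp [Fintype.card_perm, Nat.factorial_succ]
  exact (Fintype.sum_bijective φ hφ _ _ fun x => rfl).symm

lemma prod_Ioi_castSucc (n : ℕ) (i : Fin n) (h : Fin (n + 1) → ℂ) :
    ∏ j ∈ Ioi i.castSucc, h j = (∏ j ∈ Ioi i, h j.castSucc) * h (Fin.last n) := by
  have e1 : (Ioi i.castSucc) = univ.filter (fun j => i.castSucc < j) := by ext; simp
  have e2 : (Ioi i) = univ.filter (fun j => i < j) := by ext; simp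
  rw [e1, e2, prod_filter, prod_filter, Fin.prod_univ_castSucc]
  simp

lemma image_succAbove {n : ℕ} (z : Fin (n + 1) → ℂ) (hz : Function.Injective z) (k : Fin (n + 1)) :
    (univ.image fun i => z (k.succAbove i)) = (univ.image z).erase (z k) := by
  ext a
  simp only [mem_image, mem_univ, true_and, mem_erase]
  constructor
  · rintro ⟨i, rfl⟩
    exact ⟨fun h => Fin.succAbove_ne k i (hz h), _, rfl⟩
  · rintro ⟨h, j, rfl⟩
    obtain ⟨i, rfl⟩ := Fin.exists_succAbove_eq (x := j) (y := k) (fun e => h (by rw [e]))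
    exact ⟨i, rfl⟩

noncomputable def A (q : ℂ) (n : ℕ) (w : Fin n → ℂ) : ℂ := ∏ i, ∏ j ∈ Ioi i, f q (w i) (w j)

lemma A_succ (q : ℂ) (n : ℕ) (w : Fin (n + 1) → ℂ) :
    A q (n + 1) w = A q n (fun i => w i.castSucc) * ∏ i : Fin n, f q (w i.castSucc) (w (Fin.last n)) := by
  have : Ioi (Fin.last n) = ∅ := by ext i; simp [Fin.le_last]
  rw [A, Fin.prod_univ_castSucc, this]
  simp only [prod_Ioi_castSucc, prod_mul_distrib, A, prod_empty, mul_one]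

lemma sum_A (q : ℂ) (hq : q ≠ 0) (n : ℕ) : ∀ z : Fin n → ℂ, Function.Injective z →
    ∑ σ : Equiv.Perm (Fin n), A q n (fun i => z (σ i)) = qFact q n := by
  induction n with
  | zero => intro z _; simp [A, qFact]
  | succ n ih =>
    intro z hz
    rw [sum_perm_snoc n (fun σ => A q (n + 1) (fun i => z (σ i)))]
    simp only [A_succ, Fin.snoc_castSucc, Fin.snoc_last]
    have h1 : ∀ k : Fin (n + 1), ∑ σ : Equiv.Perm (Fin n),
        A q n (fun i => z (k.succAbove (σ i))) * ∏ i, f q (z (k.succAbove (σ i))) (z k)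
        = qFact q n * ∏ a ∈ (univ.image z).erase (z k), f q a (z k) := by
      intro k
      have hi : Function.Injective (fun i => z (k.succAbove i)) :=
        hz.comp Fin.succAbove_right_injective
      rw [← image_succAbove z hz, prod_image (fun a _ b _ h => hi h), ← ih _ hi, sum_mul]
      refine sum_congr rfl fun σ _ => ?_
      rw [Equiv.prod_comp σ (fun i => f q (z (k.succAbove i)) (z k))]
    rw [sum_congr rfl fun k _ => h1 k, ← mul_sum,
      ← sum_image (s := univ) (g := z) (f := fun w => ∏ a ∈ (univ.image z).erase w, f q a w)
        (fun a _ b _ h => hz h), sum_prod_f q hq, card_image_of_injective _ hz, qFact, qFact,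
      prod_range_succ]
    simp

noncomputable def B (q : ℂ) (p r : ℕ) (h : p ≤ r) (y : Fin p → ℂ) (w : Fin r → ℂ) : ℂ :=
  ∏ i : Fin p, ((1 / (y i - w (shiftIdx p r h i))) * ∏ j ∈ Ioi i, f q (w (shiftIdx p r h j)) (y i))

lemma B_succ (q : ℂ) (p r : ℕ) (h : p + 1 ≤ r + 1) (h' : p ≤ r) (y : Fin (p + 1) → ℂ)
    (w : Fin (r + 1) → ℂ) :
    B q (p + 1) (r + 1) h y w = B q p r h' (fun i => y i.castSucc) (fun i => w i.castSucc) *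
      ((∏ i : Fin p, f q (w (Fin.last r)) (y i.castSucc)) / (y (Fin.last p) - w (Fin.last r))) := by
  have hI : Ioi (Fin.last p) = ∅ := by ext i; simp [Fin.le_last]
  have h1 : ∀ i : Fin p, shiftIdx (p + 1) (r + 1) h i.castSucc = (shiftIdx p r h' i).castSucc := by
    intro i; ext; simp [shiftIdx]
  have h2 : shiftIdx (p + 1) (r + 1) h (Fin.last p) = Fin.last r := by
    ext; simp [shiftIdx]; omega
  rw [B, Fin.prod_univ_castSucc, hI]
  simp only [prod_Ioi_castSucc, prod_mul_distrib, B, prod_empty, mul_one, h1, h2]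
  ring

lemma lhs_eq (q : ℂ) (hq : q ≠ 0) (p : ℕ) : ∀ (r : ℕ) (h : p ≤ r) (y : Fin p → ℂ) (z : Fin r → ℂ),
    Function.Injective y → Function.Injective z → (∀ i j, y i ≠ z j) →
    ∑ σ : Equiv.Perm (Fin r), B q p r h y (fun i => z (σ i)) * A q r (fun i => z (σ i)) =
      qFact q (r - p) * F q (univ.image y) (univ.image z) := by
  induction p with
  | zero =>
    intro r h y z hy hz hyz
    simp [B, sum_A q hq r z hz, F_empty]
  | succ p ih =>
    intro r h y z hy hz hyz
    obtain ⟨r, rfl⟩ : ∃ s, r = s + 1 := ⟨r - 1, by omega⟩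
    have h' : p ≤ r := by omega
    rw [sum_perm_snoc r (fun σ => B q (p + 1) (r + 1) h y (fun i => z (σ i)) *
      A q (r + 1) (fun i => z (σ i)))]
    simp only [A_succ, B_succ q p r h h', Fin.snoc_castSucc, Fin.snoc_last]
    set y' : Fin p → ℂ := fun i => y i.castSucc with hy'
    have hyi : Function.Injective y' := hy.comp (Fin.castSucc_injective p)
    have hY : univ.image y = insert (y (Fin.last p)) (univ.image y') := by
      ext a; simp only [mem_image, mem_univ, true_and, mem_insert, Fin.exists_fin_succ', hy']
      tauto
    have hL := (good q hq _ (univ.image z) rfl).1 (univ.image y') (y (Fin.last p))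
      (by rw [disjoint_left]; intro a ha hb
          simp only [mem_image, mem_univ, true_and] at ha hb
          obtain ⟨i, rfl⟩ := ha
          obtain ⟨j, hj⟩ := hb
          exact hyz _ _ hj.symm)
      (by simp only [mem_image, mem_univ, true_and, not_exists]
          intro i hi
          exact (Fin.castSucc_lt_last i).ne (hy hi))
      (by simp only [mem_image, mem_univ, true_and, not_exists]
          intro i hi; exact hyz _ _ hi.symm)
    rw [hY, hL, Lsum, sum_image (fun a _ b _ h => hz h), mul_sum]
    refine sum_congr rfl fun k _ => ?_
    have hi : Function.Injective (fun i => z (k.succAbove i)) :=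
        hz.comp Fin.succAbove_right_injective
    have := ih r h' y' (fun i => z (k.succAbove i)) hyi hi (fun i j => hyz _ _)
    rw [image_succAbove z hz] at this
    rw [Nat.add_sub_add_right, ← image_succAbove z hz, prod_image (fun a _ b _ h => hi h),
      prod_image (fun a _ b _ h => hyi h), image_succAbove z hz]
    have e : ∀ C D E : ℂ, qFact q (r - p) * (C * D * F q (univ.image y') ((univ.image z).erase (z k)) / E)
       = (qFact q (r - p) * F q (univ.image y') ((univ.image z).erase (z k))) * (C * D / E) := by
      intros; ring
    rw [e, ← this, sum_mul]
    refine sum_congr rfl fun σ _ => ?_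
    rw [Equiv.prod_comp σ (fun i => f q (z (k.succAbove i)) (z k))]
    ring

lemma sum_strictMono (p r : ℕ) (H : (Fin (p + 1) → Fin (r + 1)) → ℂ) :
    ∑ d ∈ univ.filter (fun d : Fin (p + 1) → Fin (r + 1) => StrictMono d), H d =
    ∑ d ∈ univ.filter (fun d : Fin (p + 1) → Fin r => StrictMono d), H (fun i => (d i).castSucc) +
    ∑ d ∈ univ.filter (fun d : Fin p → Fin r => StrictMono d),
      H (Fin.snoc (α := fun _ => Fin (r + 1)) (fun i => (d i).castSucc) (Fin.last r)) := by
  have e : univ.filter (fun d : Fin (p + 1) → Fin (r + 1) => StrictMono d) =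
      (univ.filter (fun d : Fin (p + 1) → Fin r => StrictMono d)).image (fun d i => (d i).castSucc) ∪
      (univ.filter (fun d : Fin p → Fin r => StrictMono d)).image (fun d =>
        Fin.snoc (α := fun _ => Fin (r + 1)) (fun i => (d i).castSucc) (Fin.last r)) := by
    ext d
    simp only [mem_filter, mem_univ, true_and, mem_union, mem_image]
    constructor
    · intro hd
      by_cases hl : d (Fin.last p) = Fin.last r
      · right
        have hlt : ∀ i : Fin p, (d i.castSucc : ℕ) < r := fun i => by
          have := hd (Fin.castSucc_lt_last i)
          rw [hl] at this
          exact this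
        refine ⟨fun i => ⟨d i.castSucc, hlt i⟩, fun i j hij => ?_, ?_⟩
        · have := hd (Fin.castSucc_lt_castSucc_iff.2 hij)
          exact this
        · funext i
          refine Fin.lastCases ?_ (fun i => ?_) i
          · simp [hl]
          · ext; simp
      · left
        have hlt : ∀ i : Fin (p + 1), (d i : ℕ) < r := fun i => by
          have h1 := hd.monotone (Fin.le_last i)
          have h2 : d (Fin.last p) < Fin.last r := Fin.lt_last_iff_ne_last.2 hl
          exact lt_of_le_of_lt h1 h2
        exact ⟨fun i => ⟨d i, hlt i⟩, fun i j hij => hd hij, by funext i; ext; simp⟩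
    · rintro (⟨d, hd, rfl⟩ | ⟨d, hd, rfl⟩)
      · intro i j hij
        exact Fin.castSucc_lt_castSucc_iff.2 (hd hij)
      · intro i j
        refine Fin.lastCases ?_ (fun i => ?_) i <;> refine Fin.lastCases ?_ (fun j => ?_) j
        · simp
        · intro h; exact absurd h (not_lt.2 (Fin.le_last _))
        · intro _; simp [Fin.castSucc_lt_last]
        · intro h
          simp only [Fin.snoc_castSucc]
          exact Fin.castSucc_lt_castSucc_iff.2 (hd (Fin.castSucc_lt_castSucc_iff.1 h))
  rw [e, sum_union, sum_image, sum_image]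
  · intro d _ d' _ h
    funext i
    have := congrFun h i.castSucc
    simpa using this
  · intro d _ d' _ h
    funext i
    have := congrFun h i
    simpa using this
  · rw [disjoint_left]
    intro d h1 h2
    simp only [mem_image] at h1 h2
    obtain ⟨d1, _, rfl⟩ := h1
    obtain ⟨d2, _, h⟩ := h2
    have := congrFun h (Fin.last p)
    simp only [Fin.snoc_last] at this
    exact (Fin.castSucc_lt_last _).ne this.symm

noncomputable def T (q : ℂ) (p r : ℕ) (d : Fin p → Fin r) (y : Fin p → ℂ) (z : Fin r → ℂ) : ℂ :=
  ∏ i : Fin p, ((q ^ (((i : ℕ) : ℤ) - ((d i : ℕ) : ℤ)) / (y i - z (d i))) *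
            ∏ j ∈ Ioi (d i), f q (z j) (y i))

lemma T_cast (q : ℂ) (p r : ℕ) (d : Fin p → Fin r) (y : Fin p → ℂ) (z : Fin (r + 1) → ℂ) :
    T q p (r + 1) (fun i => (d i).castSucc) y z =
      T q p r d y (fun i => z i.castSucc) * ∏ i, f q (z (Fin.last r)) (y i) := by
  simp only [T, prod_Ioi_castSucc, prod_mul_distrib, Fin.val_castSucc]
  ring

lemma T_snoc (q : ℂ) (p r : ℕ) (d : Fin p → Fin r) (y : Fin (p + 1) → ℂ) (z : Fin (r + 1) → ℂ) :
    T q (p + 1) (r + 1) (Fin.snoc (α := fun _ => Fin (r + 1)) (fun i => (d i).castSucc) (Fin.last r)) y z =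
      T q p r d (fun i => y i.castSucc) (fun i => z i.castSucc)
        * (∏ i : Fin p, f q (z (Fin.last r)) (y i.castSucc))
        * (q ^ ((p : ℤ) - (r : ℤ)) / (y (Fin.last p) - z (Fin.last r))) := by
  have hI : Ioi (Fin.last r) = ∅ := by ext i; simp [Fin.le_last]
  rw [T, Fin.prod_univ_castSucc]
  simp only [Fin.snoc_castSucc, Fin.snoc_last, hI, prod_empty, mul_one]
  rw [← T_cast, T]
  simp

lemma rhs_eq (q : ℂ) (hq : q ≠ 0) (r : ℕ) : ∀ (p : ℕ) (y : Fin p → ℂ) (z : Fin r → ℂ),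
    Function.Injective y → Function.Injective z → (∀ i j, y i ≠ z j) →
    ∑ d ∈ univ.filter (fun d : Fin p → Fin r => StrictMono d), ∑ τ : Equiv.Perm (Fin p),
      T q p r d (fun i => y (τ i)) z * A q p (fun i => y (τ i)) =
      F q (univ.image y) (univ.image z) := by
  induction r with
  | zero =>
    intro p y z hy hz hyz
    cases p with
    | zero =>
      have : (univ.filter (fun d : Fin 0 → Fin 0 => StrictMono d)) = univ := by
        ext d; simp [Subsingleton.strictMono]
      rw [this]
      simp [T, A, F_empty]
    | succ p =>
      have : univ.image z = ∅ := by simp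
      rw [this, F_zero _ _ (by simp)]
      refine sum_eq_zero fun d _ => (d 0).elim0
  | succ r ih =>
    intro p y z hy hz hyz
    cases p with
    | zero =>
      have : (univ.filter (fun d : Fin 0 → Fin (r + 1) => StrictMono d)) = univ := by
        ext d; simp [Subsingleton.strictMono]
      rw [this]
      simp [T, A, F_empty]
    | succ p =>
      set z' : Fin r → ℂ := fun i => z i.castSucc with hz'
      have hzi : Function.Injective z' := hz.comp (Fin.castSucc_injective r)
      have hZ : (univ.image z).erase (z (Fin.last r)) = univ.image z' := by
        rw [← image_succAbove z hz]
        simp [hz']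
      have hE := (good q hq _ (univ.image z) rfl).2 (univ.image y) (z (Fin.last r))
        (by rw [disjoint_left]; intro a ha hb
            simp only [mem_image, mem_univ, true_and] at ha hb
            obtain ⟨i, rfl⟩ := ha
            obtain ⟨j, hj⟩ := hb
            exact hyz _ _ hj.symm) (mem_image_of_mem _ (mem_univ _))
      rw [sum_strictMono p r (fun d => ∑ τ : Equiv.Perm (Fin (p + 1)),
        T q (p + 1) (r + 1) d (fun i => y (τ i)) z * A q (p + 1) (fun i => y (τ i))), hE, hZ, Esum]
      congr 1
      · rw [← ih (p + 1) y z' hy hzi (fun i j => hyz _ _), mul_sum]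
        refine sum_congr rfl fun d _ => ?_
        rw [mul_sum]
        refine sum_congr rfl fun τ _ => ?_
        rw [T_cast, prod_image (fun a _ b _ h => hy h),
          Equiv.prod_comp τ (fun i => f q (z (Fin.last r)) (y i))]
        ring
      · rw [sum_image (fun a _ b _ h => hy h)]
        have h1 : ∀ d : Fin p → Fin r, ∑ τ : Equiv.Perm (Fin (p + 1)),
          T q (p + 1) (r + 1) (Fin.snoc (α := fun _ => Fin (r + 1)) (fun i => (d i).castSucc) (Fin.last r))
            (fun i => y (τ i)) z * A q (p + 1) (fun i => y (τ i)) =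
          ∑ k : Fin (p + 1), ∑ τ : Equiv.Perm (Fin p),
            (T q p r d (fun i => y (k.succAbove (τ i))) z'
            * (∏ i : Fin p, f q (z (Fin.last r)) (y (k.succAbove (τ i))))
            * (q ^ ((p : ℤ) - (r : ℤ)) / (y k - z (Fin.last r))))
            * (A q p (fun i => y (k.succAbove (τ i))) * ∏ i, f q (y (k.succAbove (τ i))) (y k)) := by
          intro d
          rw [sum_perm_snoc p (fun τ => T q (p + 1) (r + 1)
            (Fin.snoc (α := fun _ => Fin (r + 1)) (fun i => (d i).castSucc) (Fin.last r))
            (fun i => y (τ i)) z * A q (p + 1) (fun i => y (τ i)))]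
          simp only [A_succ, T_snoc, Fin.snoc_castSucc, Fin.snoc_last, hz']
        rw [sum_congr rfl fun d _ => h1 d, sum_comm]
        refine sum_congr rfl fun k _ => ?_
        have hi : Function.Injective (fun i => y (k.succAbove i)) :=
          hy.comp Fin.succAbove_right_injective
        rw [← image_succAbove y hy, ← ih p _ z' hi hzi (fun i j => hyz _ _),
          card_image_of_injective _ hi, card_image_of_injective _ hzi, mul_sum,
          prod_image (fun a _ b _ h => hi h), prod_image (fun a _ b _ h => hi h)]
        refine sum_congr rfl fun d _ => ?_
        rw [mul_sum]
        refine sum_congr rfl fun τ _ => ?_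
        rw [Equiv.prod_comp τ (fun i => f q (y (k.succAbove i)) (y k)),
          Equiv.prod_comp τ (fun i => f q (z (Fin.last r)) (y (k.succAbove i)))]
        simp only [card_univ, Fintype.card_fin]
        ring

lemma f_flip (q a b : ℂ) : (q * a - q⁻¹ * b) / (a - b) = f q b a := by
  rw [f, ← neg_sub (q * a), ← neg_sub a b, neg_div_neg_eq]

end QG

/-- The trigonometric analogue (formula (yzq)):
`Sym_z[ ∏_i (1/(y_i − z_{i+r−p})) ∏_{i<j≤p} (q y_i − q⁻¹ z_{j+r−p})/(y_i − z_{j+r−p})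
· ∏_{i<j} (q⁻¹z_i − q z_j)/(z_i − z_j) ] = [r−p]_q! · ∑_d Sym_y[ … ]`. -/
theorem q_Gyz_identity (p r : ℕ) (hp : 0 < p) (hpr : p ≤ r) (q : ℂ) (hq : q ≠ 0)
    (y : Fin p → ℂ) (z : Fin r → ℂ) (hy : Function.Injective y)
    (hz : Function.Injective z) (hyz : ∀ i j, y i ≠ z j) :
    ∑ σ : Equiv.Perm (Fin r),
      (∏ i : Fin p, ((1 / (y i - z (σ (shiftIdx p r hpr i)))) *
        ∏ j ∈ Finset.Ioi i, ((q * y i - q⁻¹ * z (σ (shiftIdx p r hpr j))) /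
          (y i - z (σ (shiftIdx p r hpr j)))))) *
      (∏ i : Fin r, ∏ j ∈ Finset.Ioi i,
        (q⁻¹ * z (σ i) - q * z (σ j)) / (z (σ i) - z (σ j))) =
    qFact q (r - p) *
      ∑ d ∈ Finset.univ.filter (fun d : Fin p → Fin r => StrictMono d),
        ∑ τ : Equiv.Perm (Fin p),
          (∏ i : Fin p, ((q ^ (((i : ℕ) : ℤ) - ((d i : ℕ) : ℤ)) / (y (τ i) - z (d i))) *
            ∏ j ∈ Finset.Ioi (d i), ((q * y (τ i) - q⁻¹ * z j) / (y (τ i) - z j)))) *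
          (∏ i : Fin p, ∏ j ∈ Finset.Ioi i,
            (q⁻¹ * y (τ i) - q * y (τ j)) / (y (τ i) - y (τ j))) := by

  have h1 := QG.lhs_eq q hq p r hpr y z hy hz hyz
  have h2 := QG.rhs_eq q hq r p y z hy hz hyz
  rw [← h2] at h1
  simp only [QG.f_flip]
  exact h1
end

section
/- Let N ≥ 2 and let η^1 ≥ η^2 ≥ … ≥ η^{N−1} be nonnegative integers. Then (1/η^{N−1}!) · ∏_{a=1}^{N−2} (1/(η^a − η^{a+1})!) · S̄ym^η_s( Y_η(s) ) = Σ_l S̄ym^{η̈}_{s̈}( F_l(s) ), where the sum is taken over all collections l of integers l^a_i (a = 1,…,N−2, i = 1,…,η^{a+1}) with 1 ≤ l^a_1 < l^a_2 < … < l^a_{η^{a+1}} ≤ η^a for each a. -/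
open scoped Classical

/-- `W_k(t_1,…,t_k) = ∏_{1≤i<j≤k} (t_i − t_j − 1)/(t_i − t_j)` (0-based indexing,
variables `t 0, …, t (k-1)`). -/
noncomputable def Wg (k : ℕ) (t : ℕ → ℂ) : ℂ :=
  ∏ i ∈ Finset.range k, ∏ j ∈ Finset.Ioo i k, (t i - t j - 1) / (t i - t j)

/-- The action of a tuple of permutations `σ = (σ_1, …, σ_{N−1})`,
`σ_a ∈ S_{η^a}`, on the collection of variables `s^a_i`:
the `a`-th group of variables is permuted by `σ_a`. -/
noncomputable def sPerm (N : ℕ) (η : ℕ → ℕ) (s : ℕ → ℕ → ℂ)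
    (σ : (a : Fin (N - 1)) → Equiv.Perm (Fin (η a))) : ℕ → ℕ → ℂ :=
  fun a i =>
    if h : a < N - 1 ∧ i < η a then s a ((σ ⟨a, h.1⟩ ⟨i, h.2⟩ : Fin (η a)) : ℕ)
    else s a i

/-- `Y_η(s) = ∏_{a=2}^{N−1} ∏_{j=1}^{η^a} [ (1/(s^a_j − s^{a−1}_{j+η^{a−1}−η^a})) ·
∏_{i=1}^{j−1} (s^a_i − s^{a−1}_{j+η^{a−1}−η^a} + 1)/(s^a_i − s^{a−1}_{j+η^{a−1}−η^a}) ]`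
(0-based: groups `a = 1, …, N−2`, within-group indices `0, …, η^a − 1`). -/
noncomputable def Yfun (N : ℕ) (η : ℕ → ℕ) (s : ℕ → ℕ → ℂ) : ℂ :=
  ∏ a ∈ Finset.Ico 1 (N - 1), ∏ j ∈ Finset.range (η a),
    ((s a j - s (a - 1) (j + (η (a - 1) - η a)))⁻¹ *
      ∏ i ∈ Finset.range j,
        ((s a i - s (a - 1) (j + (η (a - 1) - η a)) + 1) /
          (s a i - s (a - 1) (j + (η (a - 1) - η a)))))

/-- `F_l(s) = ∏_{a=1}^{N−2} ∏_{i=1}^{η^{a+1}} [ (1/(s^{a+1}_i − s^a_{l^a_i})) ·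
∏_{l^a_i < j ≤ η^a} (s^{a+1}_i − s^a_j + 1)/(s^{a+1}_i − s^a_j) ]`
(0-based: `a = 0, …, N−3`). -/
noncomputable def Ffun (N : ℕ) (η : ℕ → ℕ)
    (l : (a : Fin (N - 1 - 1)) → Fin (η ((a : ℕ) + 1)) → Fin (η (a : ℕ)))
    (s : ℕ → ℕ → ℂ) : ℂ :=
  ∏ a : Fin (N - 1 - 1), ∏ i : Fin (η ((a : ℕ) + 1)),
    ((s ((a : ℕ) + 1) (i : ℕ) - s (a : ℕ) ((l a i : ℕ)))⁻¹ *
      ∏ j ∈ Finset.Ioo ((l a i : ℕ)) (η (a : ℕ)),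
        ((s ((a : ℕ) + 1) (i : ℕ) - s (a : ℕ) j + 1) /
          (s ((a : ℕ) + 1) (i : ℕ) - s (a : ℕ) j)))

open Finset in
lemma PF (S : Finset ℂ) (c : ℂ → ℂ) : ∀ z, z ∉ S →
    ∏ j ∈ S, (1 + c j * (z - j)⁻¹) =
      1 + ∑ k ∈ S, c k * (z - k)⁻¹ * ∏ i ∈ S.erase k, (1 + c i * (k - i)⁻¹) := by
  induction S using Finset.induction_on with
  | empty => simp
  | @insert m S hm ih =>
    intro z hz
    rw [Finset.mem_insert, not_or] at hz
    rw [prod_insert hm, sum_insert hm, erase_insert hm, ih z hz.2, ih m hm]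
    have h1 : ∀ k ∈ S, c k * (z - k)⁻¹ * ∏ i ∈ (insert m S).erase k, (1 + c i * (k - i)⁻¹)
        = (c k * (z - k)⁻¹ * ∏ i ∈ S.erase k, (1 + c i * (k - i)⁻¹)) * (1 + c m * (z - m)⁻¹)
          - c m * (z - m)⁻¹ * (c k * (m - k)⁻¹ * ∏ i ∈ S.erase k, (1 + c i * (k - i)⁻¹)) := by
      intro k hk
      have hkm : m ≠ k := fun h => hm (h ▸ hk)
      have hzk : z ≠ k := fun h => hz.2 (h ▸ hk)
      rw [erase_insert_of_ne hkm, prod_insert (fun h => hm (mem_of_mem_erase h))]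
      have e1 : z - k ≠ 0 := sub_ne_zero.2 hzk
      have e2 : z - m ≠ 0 := sub_ne_zero.2 hz.1
      have e3 : m - k ≠ 0 := sub_ne_zero.2 hkm
      have e4 : k - m ≠ 0 := sub_ne_zero.2 hkm.symm
      have e5 : (z - k)⁻¹ * (k - m)⁻¹ = (z - k)⁻¹ * (z - m)⁻¹ - (z - m)⁻¹ * (m - k)⁻¹ := by
        rw [show k - m = -(m - k) by ring]
        field_simp
        ring
      linear_combination (c k * c m * ∏ i ∈ S.erase k, (1 + c i * (k - i)⁻¹)) * e5
    rw [sum_congr rfl h1, sum_sub_distrib, ← sum_mul, ← mul_sum]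
    ring

open Finset in
lemma sumE (S : Finset ℂ) :
    ∑ k ∈ S, ∏ i ∈ S.erase k, (1 + (k - i)⁻¹) = S.card := by
  induction S using Finset.induction_on with
  | empty => simp
  | @insert m S hm ih =>
    rw [sum_insert hm, erase_insert hm, card_insert_of_notMem hm]
    have h0 := PF S (fun _ => 1) m hm
    simp only [one_mul] at h0
    rw [h0]
    have h1 : ∀ k ∈ S, ∏ i ∈ (insert m S).erase k, (1 + (k - i)⁻¹)
        = (∏ i ∈ S.erase k, (1 + (k - i)⁻¹))
          - (m - k)⁻¹ * ∏ i ∈ S.erase k, (1 + (k - i)⁻¹) := by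
      intro k hk
      have hkm : m ≠ k := fun h => hm (h ▸ hk)
      rw [erase_insert_of_ne hkm, prod_insert (fun h => hm (mem_of_mem_erase h)),
        show k - m = -(m - k) by ring, inv_neg]
      ring
    rw [sum_congr rfl h1, sum_sub_distrib, ih]
    push_cast
    ring

noncomputable def ph (x y : ℂ) : ℂ := 1 - (x - y)⁻¹

noncomputable def AT (T : Finset ℂ) (z : ℂ) : ℂ := ∏ q ∈ T, (1 + (z - q)⁻¹)

noncomputable def gterm (M T I : Finset ℂ) : ℂ :=
  (-1) ^ (M \ I).card * (∏ i ∈ I, AT T i) * ∏ i ∈ I, ∏ j ∈ M \ I, ph i j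

noncomputable def GG (M T : Finset ℂ) : ℂ := ∑ I ∈ M.powerset, gterm M T I

lemma GG_empty (T : Finset ℂ) : GG ∅ T = 1 := by simp [GG, gterm]

open Finset in
lemma swapL (M : Finset ℂ) (f : ℂ → Finset ℂ → ℂ) :
    ∑ I ∈ M.powerset, ∑ k ∈ M \ I, f k I = ∑ I ∈ M.powerset, ∑ k ∈ I, f k (I.erase k) := by
  rw [sum_sigma', sum_sigma']
  refine sum_bij' (fun x _ => ⟨insert x.2 x.1, x.2⟩) (fun x _ => ⟨x.1.erase x.2, x.2⟩) ?_ ?_ ?_ ?_ ?_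
  · rintro ⟨I, k⟩ h
    simp only [mem_sigma, mem_powerset, mem_sdiff] at h ⊢
    exact ⟨insert_subset h.2.1 h.1, mem_insert_self _ _⟩
  · rintro ⟨I, k⟩ h
    simp only [mem_sigma, mem_powerset, mem_sdiff] at h ⊢
    exact ⟨(erase_subset _ _).trans h.1, h.1 h.2, notMem_erase _ _⟩
  · rintro ⟨I, k⟩ h
    simp only [mem_sigma, mem_powerset, mem_sdiff] at h ⊢
    rw [erase_insert h.2.2]
  · rintro ⟨I, k⟩ h
    simp only [mem_sigma, mem_powerset, mem_sdiff] at h ⊢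
    rw [insert_erase h.2]
  · rintro ⟨I, k⟩ h
    simp only [mem_sigma, mem_powerset, mem_sdiff] at h ⊢
    rw [erase_insert h.2.2]

open Finset in
lemma GG_R (M T : Finset ℂ) (t : ℂ) (hT : t ∉ T) (hM : t ∉ M) :
    GG M (insert t T) = GG M T + ∑ k ∈ M, (k - t)⁻¹ * AT T k * (∏ i ∈ M.erase k, ph k i) *
      GG (M.erase k) T := by
  have h1 : ∑ k ∈ M, (k - t)⁻¹ * AT T k * (∏ i ∈ M.erase k, ph k i) * GG (M.erase k) T
      = ∑ I ∈ M.powerset, ∑ k ∈ M \ I,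
        (k - t)⁻¹ * AT T k * (∏ i ∈ M.erase k, ph k i) * gterm (M.erase k) T I := by
    simp only [GG, mul_sum]
    apply sum_comm'
    intro k I
    simp only [mem_powerset, mem_sdiff, subset_erase]
    tauto
  rw [h1, swapL]
  simp only [GG]
  rw [← sum_add_distrib]
  refine sum_congr rfl fun I hI => ?_
  rw [mem_powerset] at hI
  have h2 : ∀ k ∈ I, (k - t)⁻¹ * AT T k * (∏ i ∈ M.erase k, ph k i) * gterm (M.erase k) T (I.erase k)
      = gterm M T I * ((-1) * (t - k)⁻¹ * ∏ i ∈ I.erase k, (1 + (-1) * (k - i)⁻¹)) := by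
    intro k hk
    have hs : M.erase k \ I.erase k = M \ I := by
      ext x; simp only [mem_sdiff, mem_erase]
      constructor
      · rintro ⟨⟨a, b⟩, c⟩; exact ⟨b, fun h => c ⟨a, h⟩⟩
      · rintro ⟨a, b⟩; exact ⟨⟨fun h => b (h ▸ hk), a⟩, fun h => b h.2⟩
    have hu : M.erase k = I.erase k ∪ (M \ I) := by
      ext x; simp only [mem_union, mem_sdiff, mem_erase]
      constructor
      · rintro ⟨a, b⟩; by_cases hx : x ∈ I <;> simp [*]
      · rintro (⟨a, b⟩ | ⟨a, b⟩)
        · exact ⟨a, hI b⟩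
        · exact ⟨fun h => b (h ▸ hk), a⟩
    have hd : Disjoint (I.erase k) (M \ I) :=
      disjoint_of_subset_left (erase_subset _ _) disjoint_sdiff
    have e1 : ∏ i ∈ M.erase k, ph k i = (∏ i ∈ I.erase k, ph k i) * ∏ i ∈ M \ I, ph k i := by
      rw [hu, prod_union hd]
    rw [e1]
    unfold gterm
    rw [hs, ← mul_prod_erase I _ hk, ← mul_prod_erase I (fun i => ∏ j ∈ M \ I, ph i j) hk]
    have e2 : ∏ i ∈ I.erase k, (1 + (-1) * (k - i)⁻¹) = ∏ i ∈ I.erase k, ph k i := by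
      refine prod_congr rfl fun i _ => ?_
      unfold ph; ring
    rw [e2, show t - k = -(k - t) by ring, inv_neg]
    ring
  rw [sum_congr rfl h2, ← mul_sum]
  have h3 := PF I (fun _ => -1) t (fun h => hM (hI h))
  have h4 : gterm M (insert t T) I = gterm M T I * ∏ j ∈ I, (1 + (-1) * (t - j)⁻¹) := by
    unfold gterm
    have : ∏ i ∈ I, AT (insert t T) i = (∏ i ∈ I, AT T i) * ∏ j ∈ I, (1 + (-1) * (t - j)⁻¹) := by
      rw [← prod_mul_distrib]
      refine prod_congr rfl fun i _ => ?_
      unfold AT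
      rw [prod_insert hT, show t - i = -(i - t) by ring, inv_neg]
      ring
    rw [this]; ring
  rw [h4, h3]
  ring

open Finset in
lemma GG_L (M T : Finset ℂ) (v : ℂ) (hM : v ∉ M) (hT : v ∉ T) (hMT : Disjoint T M) :
    GG (insert v M) T = ∑ p ∈ T, (v - p)⁻¹ * (∏ i ∈ M, (1 + (i - p)⁻¹)) *
      (∏ q ∈ T.erase p, (1 + (p - q)⁻¹)) * GG M (T.erase p) := by
  have h1 : ∑ p ∈ T, (v - p)⁻¹ * (∏ i ∈ M, (1 + (i - p)⁻¹)) *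
      (∏ q ∈ T.erase p, (1 + (p - q)⁻¹)) * GG M (T.erase p) =
      ∑ I ∈ M.powerset, gterm M T I * ∑ p ∈ T, (v - p)⁻¹ * (∏ i ∈ M \ I, (1 + (i - p)⁻¹)) *
      (∏ q ∈ T.erase p, (1 + (p - q)⁻¹)) := by
    simp only [GG, mul_sum]
    rw [sum_comm]
    refine sum_congr rfl fun I hI => sum_congr rfl fun p hp => ?_
    rw [mem_powerset] at hI
    have e1 : ∏ i ∈ I, AT T i = (∏ i ∈ I, (1 + (i - p)⁻¹)) * ∏ i ∈ I, AT (T.erase p) i := by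
      rw [← prod_mul_distrib]
      refine prod_congr rfl fun i _ => ?_
      unfold AT
      exact (mul_prod_erase T (fun q => 1 + (i - q)⁻¹) hp).symm
    unfold gterm
    rw [e1, ← prod_sdiff hI]
    ring
  have h2 : ∀ I ∈ M.powerset, ∑ p ∈ T, (v - p)⁻¹ * (∏ i ∈ M \ I, (1 + (i - p)⁻¹)) *
      (∏ q ∈ T.erase p, (1 + (p - q)⁻¹)) = AT T v * (∏ j ∈ M \ I, ph v j) - 1 +
        ∑ k ∈ M \ I, (v - k)⁻¹ * AT T k * ∏ i ∈ (M \ I).erase k, ph k i := by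
    intro I hI
    have hd : Disjoint T (M \ I) := disjoint_of_subset_right sdiff_subset hMT
    have hv : v ∉ M \ I := fun h => hM (mem_sdiff.1 h).1
    have hnT : ∀ i ∈ M \ I, i ∉ T := fun i hi hi' => disjoint_left.1 hd hi' hi
    have h3 := PF (T ∪ (M \ I)) (fun z => if z ∈ T then 1 else -1) v (by
      rw [mem_union, not_or]; exact ⟨hT, hv⟩)
    rw [prod_union hd, sum_union hd] at h3
    have c1 : ∀ z, ∏ x ∈ T, (1 + (if x ∈ T then (1:ℂ) else -1) * (z - x)⁻¹) = AT T z := by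
      intro z
      refine prod_congr rfl fun x hx => ?_
      rw [if_pos hx, one_mul]
    have c2 : ∀ z, ∀ J ⊆ M \ I, ∏ x ∈ J, (1 + (if x ∈ T then (1:ℂ) else -1) * (z - x)⁻¹)
        = ∏ x ∈ J, ph z x := by
      intro z J hJ
      refine prod_congr rfl fun x hx => ?_
      rw [if_neg (hnT x (hJ hx))]; unfold ph; ring
    have c3 : ∀ p ∈ T, (if p ∈ T then (1:ℂ) else -1) * (v - p)⁻¹ *
        ∏ i ∈ (T ∪ (M \ I)).erase p, (1 + (if i ∈ T then (1:ℂ) else -1) * (p - i)⁻¹) =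
        (v - p)⁻¹ * (∏ i ∈ M \ I, (1 + (i - p)⁻¹)) * (∏ q ∈ T.erase p, (1 + (p - q)⁻¹)) := by
      intro p hp
      have : (T ∪ (M \ I)).erase p = T.erase p ∪ (M \ I) := by
        rw [erase_union_distrib, erase_eq_of_notMem (s := M \ I)]
        exact fun h => hnT p h hp
      rw [this, prod_union (disjoint_of_subset_left (erase_subset _ _) hd), if_pos hp,
        c2 p _ subset_rfl]
      have a1 : ∏ x ∈ T.erase p, (1 + (if x ∈ T then (1:ℂ) else -1) * (p - x)⁻¹)
          = ∏ q ∈ T.erase p, (1 + (p - q)⁻¹) := by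
        refine prod_congr rfl fun x hx => ?_
        rw [if_pos (mem_of_mem_erase hx), one_mul]
      have a2 : ∏ x ∈ M \ I, ph p x = ∏ i ∈ M \ I, (1 + (i - p)⁻¹) := by
        refine prod_congr rfl fun x hx => ?_
        unfold ph
        rw [show p - x = -(x - p) by ring, inv_neg]; ring
      rw [a1, a2]; ring
    have c4 : ∀ k ∈ M \ I, (if k ∈ T then (1:ℂ) else -1) * (v - k)⁻¹ *
        ∏ i ∈ (T ∪ (M \ I)).erase k, (1 + (if i ∈ T then (1:ℂ) else -1) * (k - i)⁻¹) =
        - ((v - k)⁻¹ * AT T k * ∏ i ∈ (M \ I).erase k, ph k i) := by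
      intro k hk
      have : (T ∪ (M \ I)).erase k = T ∪ (M \ I).erase k := by
        rw [erase_union_distrib, erase_eq_of_notMem (s := T)]
        exact hnT k hk
      rw [this, prod_union (disjoint_of_subset_right (erase_subset _ _) hd), if_neg (hnT k hk),
        c1, c2 k _ (erase_subset _ _)]
      ring
    rw [c1, c2 v _ subset_rfl, sum_congr rfl c3, sum_congr rfl c4, sum_neg_distrib] at h3
    linear_combination -h3
  rw [h1, sum_congr rfl (fun I hI => by rw [h2 I hI])]
  have h5 : ∑ I ∈ M.powerset, ∑ k ∈ M \ I,
      gterm M T I * ((v - k)⁻¹ * AT T k * ∏ i ∈ (M \ I).erase k, ph k i) =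
      ∑ I ∈ M.powerset, ∑ k ∈ I, - (gterm M T I * ((v - k)⁻¹ * ∏ i ∈ I.erase k, ph i k)) := by
    rw [swapL M (fun k I => gterm M T I * ((v - k)⁻¹ * AT T k * ∏ i ∈ (M \ I).erase k, ph k i))]
    refine sum_congr rfl fun I hI => sum_congr rfl fun k hk => ?_
    rw [mem_powerset] at hI
    have hs : M \ I.erase k = insert k (M \ I) := by
      ext x; simp only [mem_sdiff, mem_erase, mem_insert]
      by_cases hx : x = k
      · subst hx; simp [hI hk]
      · simp [hx]
    have hk' : k ∉ M \ I := by simp [hk]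
    unfold gterm
    rw [hs, erase_insert hk', card_insert_of_notMem hk', ← mul_prod_erase I _ hk,
      ← mul_prod_erase I (fun i => ∏ j ∈ M \ I, ph i j) hk]
    simp only [prod_insert hk', prod_mul_distrib]
    ring
  unfold GG
  rw [sum_powerset_insert hM]
  simp only [mul_add, sum_add_distrib, mul_sum, h5]
  rw [← sum_add_distrib, ← sum_add_distrib]
  refine sum_congr rfl fun I hI => ?_
  rw [mem_powerset] at hI
  have hvI : v ∉ I := fun h => hM (hI h)
  have e1 : gterm (insert v M) T (insert v I) = gterm M T I * (AT T v * ∏ j ∈ M \ I, ph v j) := by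
    have : insert v M \ insert v I = M \ I := by
      ext x; simp only [mem_sdiff, mem_insert, not_or]
      constructor
      · rintro ⟨a | a, b, c⟩
        · exact absurd a b
        · exact ⟨a, c⟩
      · rintro ⟨a, b⟩; exact ⟨Or.inr a, fun h => hM (h ▸ a), b⟩
    unfold gterm
    rw [this, prod_insert hvI, prod_insert hvI]
    ring
  have e2 : gterm (insert v M) T I = - (gterm M T I * ∏ i ∈ I, (1 + 1 * (v - i)⁻¹)) := by
    have : insert v M \ I = insert v (M \ I) := by
      rw [insert_sdiff_of_notMem _ hvI]
    have hv : v ∉ M \ I := fun h => hM (mem_sdiff.1 h).1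
    unfold gterm
    rw [this, card_insert_of_notMem hv]
    simp only [prod_insert hv, prod_mul_distrib]
    have : ∏ i ∈ I, ph i v = ∏ i ∈ I, (1 + 1 * (v - i)⁻¹) := by
      refine prod_congr rfl fun i _ => ?_
      unfold ph; rw [show v - i = -(i - v) by ring, inv_neg]; ring
    rw [this]; ring
  rw [e1, e2, PF I (fun _ => 1) v hvI]
  have e3 : ∀ k, ∏ i ∈ I.erase k, (1 + 1 * (k - i)⁻¹) = ∏ i ∈ I.erase k, ph i k := by
    intro k
    refine prod_congr rfl fun i _ => ?_
    unfold ph; rw [show k - i = -(i - k) by ring, inv_neg]; ring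
  simp only [e3]
  simp only [one_mul, sum_neg_distrib, ← mul_sum]
  ring

lemma GG_zero (M : Finset ℂ) (h : M.Nonempty) : GG M ∅ = 0 := by
  obtain ⟨v, hv⟩ := h
  rw [← Finset.insert_erase hv, GG_L _ _ _ (Finset.notMem_erase _ _) (by simp) (by simp)]
  simp
/-- extension by zero -/
noncomputable def ex {n : ℕ} (t : Fin n → ℂ) : ℕ → ℂ := fun i => if h : i < n then t ⟨i, h⟩ else 0

lemma ex_lt {n : ℕ} (t : Fin n → ℂ) {i : ℕ} (h : i < n) : ex t i = t ⟨i, h⟩ := by simp [ex, h]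

/-- the other entries -/
def oth {n : ℕ} (t : Fin (n + 1) → ℂ) (p : Fin (n + 1)) : Fin n → ℂ :=
  fun i => t (Equiv.swap 0 p i.succ)

lemma oth_inj {n : ℕ} (t : Fin (n + 1) → ℂ) (ht : Function.Injective t) (p : Fin (n + 1)) :
    Function.Injective (oth t p) := by
  intro i j h
  exact Fin.succ_injective _ ((Equiv.swap 0 p).injective (ht h))

lemma oth_image {n : ℕ} (t : Fin (n + 1) → ℂ) (ht : Function.Injective t) (p : Fin (n + 1)) :
    Finset.univ.image (oth t p) = (Finset.univ.image t).erase (t p) := by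
  ext x
  simp only [Finset.mem_image, Finset.mem_univ, true_and, Finset.mem_erase]
  constructor
  · rintro ⟨i, rfl⟩
    refine ⟨fun h => ?_, _, rfl⟩
    have h2 : Equiv.swap 0 p i.succ = Equiv.swap 0 p 0 := by
      rw [Equiv.swap_apply_left]; exact ht h
    exact Fin.succ_ne_zero i ((Equiv.swap 0 p).injective h2)
  · rintro ⟨hx, j, rfl⟩
    have hj : Equiv.swap 0 p j ≠ 0 := by
      intro h
      apply hx
      rw [(Equiv.swap 0 p).injective (h.trans (Equiv.swap_apply_right 0 p).symm)]
    obtain ⟨i, hi⟩ := Fin.exists_succ_eq.2 hj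
    refine ⟨i, ?_⟩
    unfold oth
    rw [hi, Equiv.swap_apply_self]

lemma sum_perm_cons {n : ℕ} (t : Fin (n + 1) → ℂ) (f : (Fin (n + 1) → ℂ) → ℂ) :
    ∑ σ : Equiv.Perm (Fin (n + 1)), f (t ∘ σ) =
      ∑ p, ∑ τ : Equiv.Perm (Fin n), f (Fin.cons (t p) (oth t p ∘ τ)) := by
  rw [← Equiv.Perm.decomposeFin.symm.sum_comp, Fintype.sum_prod_type]
  refine Finset.sum_congr rfl fun p _ => Finset.sum_congr rfl fun τ _ => ?_
  congr 1
  funext i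
  refine Fin.cases ?_ (fun j => ?_) i
  · simp
  · simp [oth]

lemma sum_perm_snoc {n : ℕ} (t : Fin (n + 1) → ℂ) (f : (Fin (n + 1) → ℂ) → ℂ) :
    ∑ σ : Equiv.Perm (Fin (n + 1)), f (t ∘ σ) =
      ∑ p, ∑ τ : Equiv.Perm (Fin n), f (Fin.snoc (oth t p ∘ τ) (t p)) := by
  rw [← Equiv.sum_comp (Equiv.mulRight (finRotate (n + 1)))]
  have := sum_perm_cons t (fun g => f (g ∘ finRotate (n + 1)))
  simp only [Equiv.coe_mulRight, Equiv.Perm.coe_mul]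
  simp only [← Function.comp_assoc]
  rw [this]
  refine Finset.sum_congr rfl fun p _ => Finset.sum_congr rfl fun τ _ => ?_
  congr 1
  funext i
  refine Fin.lastCases ?_ (fun j => ?_) i
  · simp
  · simp

lemma ex_cons_zero {n : ℕ} (a : ℂ) (t : Fin n → ℂ) :
    ex (Fin.cons a t : Fin (n + 1) → ℂ) 0 = a := by
  rw [ex_lt _ (Nat.succ_pos n)]; rfl

lemma ex_cons_succ {n : ℕ} (a : ℂ) (t : Fin n → ℂ) :
    (fun i => ex (Fin.cons a t : Fin (n + 1) → ℂ) (i + 1)) = ex t := by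
  funext i
  by_cases h : i < n
  · rw [ex_lt _ h, ex_lt _ (Nat.succ_lt_succ h)]; rfl
  · simp [ex, h]

lemma ex_snoc_last {n : ℕ} (a : ℂ) (t : Fin n → ℂ) :
    ex (Fin.snoc t a : Fin (n + 1) → ℂ) n = a := by
  rw [ex_lt _ (Nat.lt_succ_self n)]
  exact Fin.snoc_last (α := fun _ => ℂ) a t

lemma ex_snoc_lt {n : ℕ} (a : ℂ) (t : Fin n → ℂ) {i : ℕ} (h : i < n) :
    ex (Fin.snoc t a : Fin (n + 1) → ℂ) i = ex t i := by
  rw [ex_lt _ h, ex_lt _ (Nat.lt_succ_of_lt h)]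
  exact Fin.snoc_castSucc (α := fun _ => ℂ) a t ⟨i, h⟩

lemma Wg_congr (n : ℕ) (t t' : ℕ → ℂ) (h : ∀ i < n, t i = t' i) : Wg n t = Wg n t' := by
  unfold Wg
  refine Finset.prod_congr rfl fun i hi => Finset.prod_congr rfl fun j hj => ?_
  rw [h i (Finset.mem_range.1 hi), h j (Finset.mem_Ioo.1 hj).2]

lemma Wg_succ_last (n : ℕ) (t : ℕ → ℂ) :
    Wg (n + 1) t = Wg n t * ∏ i ∈ Finset.range n, (t i - t n - 1) / (t i - t n) := by
  unfold Wg
  rw [Finset.prod_range_succ]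
  have : Finset.Ioo n (n + 1) = ∅ := by ext x; simp
  rw [this, Finset.prod_empty, mul_one, ← Finset.prod_mul_distrib]
  refine Finset.prod_congr rfl fun i hi => ?_
  have hi := Finset.mem_range.1 hi
  have : Finset.Ioo i (n + 1) = insert n (Finset.Ioo i n) := by ext x; simp; omega
  rw [this, Finset.prod_insert (by simp)]
  ring

lemma prod_Ioo_succ (i n : ℕ) (f : ℕ → ℂ) :
    ∏ j ∈ Finset.Ioo (i + 1) (n + 1), f j = ∏ j ∈ Finset.Ioo i n, f (j + 1) := by
  have : Finset.Ioo (i + 1) (n + 1) = (Finset.Ioo i n).image (· + 1) := by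
    ext x; simp only [Finset.mem_Ioo, Finset.mem_image]
    constructor
    · intro h; exact ⟨x - 1, by omega, by omega⟩
    · rintro ⟨y, h, rfl⟩; omega
  rw [this, Finset.prod_image (by intro a _ b _ h; simpa using h)]

lemma prod_Ioo_zero (n : ℕ) (f : ℕ → ℂ) :
    ∏ j ∈ Finset.Ioo 0 (n + 1), f j = ∏ j ∈ Finset.range n, f (j + 1) := by
  have : Finset.Ioo 0 (n + 1) = (Finset.range n).image (· + 1) := by
    ext x; simp only [Finset.mem_Ioo, Finset.mem_image, Finset.mem_range]
    constructor
    · intro h; exact ⟨x - 1, by omega, by omega⟩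
    · rintro ⟨y, h, rfl⟩; omega
  rw [this, Finset.prod_image (by intro a _ b _ h; simpa using h)]

lemma Wg_succ_first (n : ℕ) (t : ℕ → ℂ) :
    Wg (n + 1) t = (∏ j ∈ Finset.range n, (t 0 - t (j + 1) - 1) / (t 0 - t (j + 1))) *
      Wg n (fun i => t (i + 1)) := by
  unfold Wg
  rw [Finset.prod_range_succ', prod_Ioo_zero, mul_comm]
  congr 1
  refine Finset.prod_congr rfl fun i hi => ?_
  rw [prod_Ioo_succ]

/-- one-level Y -/
noncomputable def Y1 (n m : ℕ) (t u : ℕ → ℂ) : ℂ :=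
  ∏ j ∈ Finset.range m, ((u j - t (j + (n - m)))⁻¹ *
    ∏ i ∈ Finset.range j, ((u i - t (j + (n - m)) + 1) / (u i - t (j + (n - m)))))

lemma Y1_congr (n m : ℕ) (hmn : m ≤ n) (t u t' u' : ℕ → ℂ) (h : ∀ i < n, t i = t' i)
    (h' : ∀ i < m, u i = u' i) : Y1 n m t u = Y1 n m t' u' := by
  unfold Y1
  refine Finset.prod_congr rfl fun j hj => ?_
  have hj := Finset.mem_range.1 hj
  rw [h _ (by omega), h' _ hj]
  congr 1
  refine Finset.prod_congr rfl fun i hi => ?_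
  have hi := Finset.mem_range.1 hi
  rw [h' _ (by omega)]

lemma Y1_succ (n m : ℕ) (hmn : m ≤ n) (t u : ℕ → ℂ) :
    Y1 (n + 1) (m + 1) t u = Y1 n m t u * ((u m - t n)⁻¹ *
      ∏ i ∈ Finset.range m, ((u i - t n + 1) / (u i - t n))) := by
  unfold Y1
  rw [Finset.prod_range_succ]
  simp only [Nat.add_sub_add_right]
  rw [show m + (n - m) = n by omega]

lemma prod_ex_perm {n : ℕ} (w : Fin n → ℂ) (hw : Function.Injective w) (τ : Equiv.Perm (Fin n))
    (f : ℂ → ℂ) :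
    ∏ i ∈ Finset.range n, f (ex (w ∘ τ) i) = ∏ q ∈ Finset.univ.image w, f q := by
  rw [Finset.prod_range, Finset.prod_image (fun a _ b _ h => hw h),
    ← Equiv.prod_comp τ (fun i => f (w i))]
  refine Finset.prod_congr rfl fun i _ => ?_
  rw [ex_lt _ i.2]; rfl

lemma split_last {n : ℕ} (t : Fin (n + 1) → ℂ) (ht : Function.Injective t) (p : Fin (n + 1))
    (τ : Equiv.Perm (Fin n)) :
    Wg (n + 1) (ex (Fin.snoc (oth t p ∘ τ) (t p))) = Wg n (ex (oth t p ∘ τ)) *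
      ∏ q ∈ (Finset.univ.image t).erase (t p), (1 + (t p - q)⁻¹) := by
  rw [Wg_succ_last, ex_snoc_last]
  congr 1
  · exact Wg_congr _ _ _ (fun i hi => ex_snoc_lt _ _ hi)
  · rw [Finset.prod_congr rfl (fun i hi => by rw [ex_snoc_lt _ _ (Finset.mem_range.1 hi)])]
    rw [prod_ex_perm _ (oth_inj t ht p) τ (fun x => (x - t p - 1) / (x - t p)), oth_image t ht]
    refine Finset.prod_congr rfl fun q hq => ?_
    have : q - t p ≠ 0 := sub_ne_zero.2 (Finset.ne_of_mem_erase hq)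
    rw [show t p - q = -(q - t p) by ring]
    field_simp
    ring

lemma Wsum (n : ℕ) : ∀ t : Fin n → ℂ, Function.Injective t →
    ∑ σ : Equiv.Perm (Fin n), Wg n (ex (t ∘ σ)) = n.factorial := by
  induction n with
  | zero => intro t _; simp [Wg]
  | succ n ih =>
    intro t ht
    rw [sum_perm_snoc t (fun g => Wg (n + 1) (ex g))]
    simp only [split_last t ht, ← Finset.sum_mul]
    rw [Finset.sum_congr rfl (fun p _ => by rw [ih _ (oth_inj t ht p)]), ← Finset.mul_sum]
    have := sumE (Finset.univ.image t)
    rw [Finset.sum_image (fun a _ b _ h => ht h), Finset.card_image_of_injective _ ht] at this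
    rw [this]
    simp [Nat.factorial_succ]
    ring

lemma LCore (m : ℕ) : ∀ (n : ℕ) (_ : m ≤ n) (t : Fin n → ℂ) (u : ℕ → ℂ), Function.Injective t →
    (∀ i < m, ∀ j < m, i ≠ j → u i ≠ u j) → (∀ i < m, ∀ j, u i ≠ t j) →
    ∑ σ : Equiv.Perm (Fin n), Y1 n m (ex (t ∘ σ)) u * Wg n (ex (t ∘ σ)) =
      (n - m).factorial * GG ((Finset.range m).image u) (Finset.univ.image t) := by
  induction m with
  | zero =>
    intro n _ t u ht _ _
    simp only [Y1, Finset.range_zero, Finset.prod_empty, one_mul, Finset.image_empty, GG_empty,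
      mul_one, Nat.sub_zero]
    exact Wsum n t ht
  | succ m ih =>
    intro n hmn t u ht hu hut
    obtain ⟨n, rfl⟩ : ∃ k, n = k + 1 := ⟨n - 1, by omega⟩
    have hmn' : m ≤ n := by omega
    rw [sum_perm_snoc t (fun g => Y1 (n + 1) (m + 1) (ex g) u * Wg (n + 1) (ex g))]
    rw [Finset.range_add_one, Finset.image_insert, GG_L, Finset.sum_image (fun a _ b _ h => ht h),
      Finset.mul_sum]
    · refine Finset.sum_congr rfl fun p _ => ?_
      have h1 : ∀ τ : Equiv.Perm (Fin n), Y1 (n + 1) (m + 1) (ex (Fin.snoc (oth t p ∘ τ) (t p))) u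
          = Y1 n m (ex (oth t p ∘ τ)) u * ((u m - t p)⁻¹ *
            ∏ i ∈ (Finset.range m).image u, (1 + (i - t p)⁻¹)) := by
        intro τ
        rw [Y1_succ _ _ hmn', ex_snoc_last]
        congr 1
        · exact Y1_congr _ _ hmn' _ _ _ _ (fun i hi => ex_snoc_lt _ _ hi) (fun _ _ => rfl)
        · congr 1
          rw [Finset.prod_image]
          · refine Finset.prod_congr rfl fun i hi => ?_
            have := sub_ne_zero.2 (hut i (by have := Finset.mem_range.1 hi; omega) p)
            field_simp
          · intro a ha b hb hab
            by_contra hne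
            have ha := Finset.mem_range.1 ha
            have hb := Finset.mem_range.1 hb
            exact hu a (by omega) b (by omega) hne hab
      have h2 := ih n hmn' (oth t p) u (oth_inj t ht p) (fun i hi j hj => hu i (by omega) j (by omega))
        (fun i hi j => hut i (by omega) _)
      rw [oth_image t ht] at h2
      simp only [h1, split_last t ht]
      rw [Nat.add_sub_add_right]
      have h3 : ∀ A B C D : ℂ, A * B * (C * D) = (A * C) * (B * D) := by intros; ring
      rw [Finset.sum_congr rfl (fun τ _ => h3 _ _ _ _), ← Finset.sum_mul, h2]
      ring
    · intro h
      obtain ⟨i, hi, h⟩ := Finset.mem_image.1 h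
      have hi := Finset.mem_range.1 hi
      exact hu i (by omega) m (by omega) (by omega) h
    · intro h
      obtain ⟨i, hi, h⟩ := Finset.mem_image.1 h
      exact hut m (by omega) i h.symm
    · rw [Finset.disjoint_left]
      intro x hx hx'
      obtain ⟨i, hi, rfl⟩ := Finset.mem_image.1 hx
      obtain ⟨j, hj, h⟩ := Finset.mem_image.1 hx'
      have hj := Finset.mem_range.1 hj
      exact hut j (by omega) i h
/-- one-level F -/
noncomputable def F1 (n m : ℕ) (l : Fin m → Fin n) (t u : ℕ → ℂ) : ℂ :=
  ∏ i : Fin m, ((u (i : ℕ) - t (l i : ℕ))⁻¹ *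
    ∏ j ∈ Finset.Ioo (l i : ℕ) n, ((u (i : ℕ) - t j + 1) / (u (i : ℕ) - t j)))

noncomputable def Fs (n m : ℕ) (t u : ℕ → ℂ) : ℂ :=
  ∑ l ∈ Finset.univ.filter (fun l : Fin m → Fin n => StrictMono l), F1 n m l t u

lemma F1_congr (n m : ℕ) (l : Fin m → Fin n) (t u t' u' : ℕ → ℂ) (h : ∀ i < n, t i = t' i)
    (h' : ∀ i < m, u i = u' i) : F1 n m l t u = F1 n m l t' u' := by
  unfold F1
  refine Finset.prod_congr rfl fun i _ => ?_
  rw [h' _ i.2, h _ (l i).2]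
  congr 1
  refine Finset.prod_congr rfl fun j hj => ?_
  rw [h _ (Finset.mem_Ioo.1 hj).2]

lemma Fs_zero_right (n : ℕ) (t u : ℕ → ℂ) : Fs n 0 t u = 1 := by
  unfold Fs F1
  rw [Finset.filter_true_of_mem]
  · simp
  · intro l _ a; exact a.elim0

lemma Fs_zero_left (m : ℕ) (t u : ℕ → ℂ) : Fs 0 (m + 1) t u = 0 := by
  unfold Fs
  apply Finset.sum_eq_zero
  intro l _
  exact (l 0).elim0

lemma Fs_succ (n m : ℕ) (t u : ℕ → ℂ) :
    Fs (n + 1) (m + 1) t u = Fs n (m + 1) (fun i => t (i + 1)) u +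
      (u 0 - t 0)⁻¹ * (∏ j ∈ Finset.range n, ((u 0 - t (j + 1) + 1) / (u 0 - t (j + 1)))) *
        Fs n m (fun i => t (i + 1)) (fun i => u (i + 1)) := by
  unfold Fs
  rw [← Finset.sum_filter_add_sum_filter_not _ (fun l : Fin (m + 1) → Fin (n + 1) => l 0 = 0),
    add_comm]
  congr 1
  · symm
    refine Finset.sum_nbij (fun l i => (l i).succ) ?_ ?_ ?_ ?_
    · intro l hl
      simp only [Finset.mem_filter, Finset.mem_univ, true_and] at hl ⊢
      exact ⟨fun a b hab => Fin.succ_lt_succ_iff.2 (hl hab), Fin.succ_ne_zero _⟩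
    · intro l _ l' _ h
      funext i
      exact Fin.succ_injective _ (congrFun h i)
    · intro l hl
      simp only [Finset.coe_filter, Finset.mem_filter, Finset.mem_univ, true_and,
        Set.mem_ofPred_eq] at hl
      have hne : ∀ i, l i ≠ 0 := by
        intro i h
        have h1 : l 0 ≤ l i := hl.1.monotone (Fin.zero_le i)
        rw [h] at h1
        exact hl.2 (Fin.le_zero_iff.1 h1)
      refine ⟨fun i => (l i).pred (hne i), ?_, ?_⟩
      · simp only [Finset.coe_filter, Finset.mem_univ, true_and, Set.mem_ofPred_eq]
        intro a b hab
        exact Fin.pred_lt_pred_iff.2 (hl.1 hab)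
      · funext i; simp
    · intro l _
      unfold F1
      refine Finset.prod_congr rfl fun i _ => ?_
      simp only [Fin.val_succ]
      rw [prod_Ioo_succ]
  · rw [Finset.mul_sum]
    symm
    refine Finset.sum_nbij
      (fun l => (Fin.cons 0 (fun i => (l i).succ) : Fin (m + 1) → Fin (n + 1))) ?_ ?_ ?_ ?_
    · intro l hl
      simp only [Finset.mem_filter, Finset.mem_univ, true_and] at hl ⊢
      refine ⟨?_, rfl⟩
      intro a b
      refine Fin.cases ?_ (fun b => ?_) b
      · intro h; exact absurd h (Fin.not_lt_zero a)
      · refine Fin.cases ?_ (fun a => ?_) a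
        · intro _; simp
        · intro h
          simp only [Fin.cons_succ]
          exact Fin.succ_lt_succ_iff.2 (hl (Fin.succ_lt_succ_iff.1 h))
    · intro l _ l' _ h
      funext i
      have := congrFun h i.succ
      simp only [Fin.cons_succ] at this
      exact Fin.succ_injective _ this
    · intro l hl
      simp only [Finset.coe_filter, Finset.mem_filter, Finset.mem_univ, true_and,
        Set.mem_ofPred_eq] at hl
      have hne : ∀ i : Fin m, l i.succ ≠ 0 := by
        intro i h
        have h1 : l 0 < l i.succ := hl.1 (Fin.succ_pos i)
        rw [h] at h1
        exact Fin.not_lt_zero _ h1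
      refine ⟨fun i => (l i.succ).pred (hne i), ?_, ?_⟩
      · simp only [Finset.coe_filter, Finset.mem_univ, true_and, Set.mem_ofPred_eq]
        intro a b hab
        exact Fin.pred_lt_pred_iff.2 (hl.1 (Fin.succ_lt_succ_iff.2 hab))
      · funext i
        refine Fin.cases ?_ (fun j => ?_) i
        · simp [hl.2]
        · simp
    · intro l _
      unfold F1
      rw [Fin.prod_univ_succ]
      congr 1
      · simp only [Fin.cons_zero, Fin.val_zero]
        rw [prod_Ioo_zero]
      · refine Finset.prod_congr rfl fun i _ => ?_
        simp only [Fin.cons_succ, Fin.val_succ]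
        rw [prod_Ioo_succ]

lemma split_first {n : ℕ} (t : Fin (n + 1) → ℂ) (ht : Function.Injective t) (p : Fin (n + 1))
    (τ : Equiv.Perm (Fin n)) :
    Wg (n + 1) (ex (Fin.cons (t p) (oth t p ∘ τ))) =
      (∏ q ∈ (Finset.univ.image t).erase (t p), ph (t p) q) * Wg n (ex (oth t p ∘ τ)) := by
  rw [Wg_succ_first, ex_cons_zero, ex_cons_succ]
  congr 1
  have h : ∀ j, ex (Fin.cons (t p) (oth t p ∘ τ) : Fin (n + 1) → ℂ) (j + 1) = ex (oth t p ∘ τ) j :=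
    fun j => congrFun (ex_cons_succ (t p) (oth t p ∘ τ)) j
  simp only [h]
  rw [prod_ex_perm _ (oth_inj t ht p) τ (fun x => (t p - x - 1) / (t p - x)), oth_image t ht]
  refine Finset.prod_congr rfl fun q hq => ?_
  have : t p - q ≠ 0 := sub_ne_zero.2 (Finset.ne_of_mem_erase hq).symm
  unfold ph
  field_simp

lemma RCore (n : ℕ) : ∀ (m : ℕ) (t : ℕ → ℂ) (u : Fin m → ℂ), Function.Injective u →
    (∀ i < n, ∀ j < n, i ≠ j → t i ≠ t j) → (∀ i < n, ∀ j, u j ≠ t i) →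
    ∑ τ : Equiv.Perm (Fin m), Fs n m t (ex (u ∘ τ)) * Wg m (ex (u ∘ τ)) =
      GG (Finset.univ.image u) ((Finset.range n).image t) := by
  induction n with
  | zero =>
    intro m t u hu _ _
    cases m with
    | zero => simp [Fs_zero_right, GG_empty, Wg]
    | succ m =>
      simp only [Fs_zero_left, zero_mul, Finset.sum_const_zero, Finset.range_zero,
        Finset.image_empty]
      rw [GG_zero]
      exact ⟨u 0, Finset.mem_image_of_mem _ (Finset.mem_univ _)⟩
  | succ n ih =>
    intro m t u hu htt hut
    cases m with
    | zero => simp [Fs_zero_right, GG_empty, Wg]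
    | succ m =>
      have hT : (Finset.range (n + 1)).image t
          = insert (t 0) ((Finset.range n).image (fun i => t (i + 1))) := by
        ext x
        simp only [Finset.mem_image, Finset.mem_range, Finset.mem_insert]
        constructor
        · rintro ⟨i, hi, rfl⟩
          cases i with
          | zero => exact Or.inl rfl
          | succ i => exact Or.inr ⟨i, by omega, rfl⟩
        · rintro (rfl | ⟨i, hi, rfl⟩)
          · exact ⟨0, by omega, rfl⟩
          · exact ⟨i + 1, by omega, rfl⟩
      have htt' : ∀ i < n, ∀ j < n, i ≠ j → t (i + 1) ≠ t (j + 1) :=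
        fun i hi j hj hij => htt _ (by omega) _ (by omega) (by omega)
      have hut' : ∀ i < n, ∀ j, u j ≠ t (i + 1) := fun i hi j => hut _ (by omega) _
      rw [hT, GG_R]
      · rw [← ih (m + 1) (fun i => t (i + 1)) u hu htt' hut']
        simp only [Fs_succ n m, add_mul, Finset.sum_add_distrib]
        congr 1
        rw [sum_perm_cons u (fun g => (ex g 0 - t 0)⁻¹ *
          (∏ j ∈ Finset.range n, ((ex g 0 - t (j + 1) + 1) / (ex g 0 - t (j + 1)))) *
            Fs n m (fun i => t (i + 1)) (fun i => ex g (i + 1)) * Wg (m + 1) (ex g))]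
        rw [Finset.sum_image (fun a _ b _ h => hu h)]
        refine Finset.sum_congr rfl fun p _ => ?_
        have h2 := ih m (fun i => t (i + 1)) (oth u p) (oth_inj u hu p) htt' (fun i hi j => hut' i hi _)
        rw [oth_image u hu] at h2
        rw [← h2, Finset.mul_sum]
        refine Finset.sum_congr rfl fun τ _ => ?_
        rw [split_first u hu, ex_cons_zero, ex_cons_succ]
        have h3 : ∏ j ∈ Finset.range n, ((u p - t (j + 1) + 1) / (u p - t (j + 1))) =
            AT ((Finset.range n).image (fun i => t (i + 1))) (u p) := by
          unfold AT
          rw [Finset.prod_image]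
          · refine Finset.prod_congr rfl fun i hi => ?_
            have := sub_ne_zero.2 (hut' i (Finset.mem_range.1 hi) p)
            field_simp
          · intro a ha b hb hab
            by_contra hne
            exact htt' a (Finset.mem_range.1 ha) b (Finset.mem_range.1 hb) hne hab
        rw [h3]
        ring
      · intro h
        obtain ⟨i, hi, h⟩ := Finset.mem_image.1 h
        have := Finset.mem_range.1 hi
        exact htt (i + 1) (by omega) 0 (by omega) (by omega) h
      · intro h
        obtain ⟨i, hi, h⟩ := Finset.mem_image.1 h
        exact hut 0 (by omega) i h
noncomputable def VV (η : ℕ → ℕ) (s : ℕ → ℕ → ℂ) (a : ℕ) : Finset ℂ :=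
  (Finset.range (η a)).image (s a)

/-- permuted sequence -/
noncomputable def pm (n : ℕ) (t : ℕ → ℂ) (τ : Equiv.Perm (Fin n)) : ℕ → ℂ :=
  fun i => if h : i < n then t (τ ⟨i, h⟩ : Fin n) else t i

lemma pm_ex (n : ℕ) (t : ℕ → ℂ) (τ : Equiv.Perm (Fin n)) {i : ℕ} (h : i < n) :
    pm n t τ i = ex ((fun i : Fin n => t i) ∘ τ) i := by
  rw [ex_lt _ h]; simp [pm, h]

lemma pm_image (n : ℕ) (t : ℕ → ℂ) (τ : Equiv.Perm (Fin n)) :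
    (Finset.range n).image (pm n t τ) = (Finset.range n).image t := by
  ext x
  simp only [Finset.mem_image, Finset.mem_range]
  constructor
  · rintro ⟨i, hi, rfl⟩
    exact ⟨τ ⟨i, hi⟩, (τ ⟨i, hi⟩).2, by simp [pm, hi]⟩
  · rintro ⟨i, hi, rfl⟩
    exact ⟨τ.symm ⟨i, hi⟩, (τ.symm ⟨i, hi⟩).2, by simp [pm]⟩

lemma fin_image (n : ℕ) (t : ℕ → ℂ) :
    Finset.univ.image (fun i : Fin n => t i) = (Finset.range n).image t := by
  ext x
  simp only [Finset.mem_image, Finset.mem_range, Finset.mem_univ, true_and]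
  constructor
  · rintro ⟨i, rfl⟩; exact ⟨i, i.2, rfl⟩
  · rintro ⟨i, hi, rfl⟩; exact ⟨⟨i, hi⟩, rfl⟩

lemma sPerm_cons_succ (K : ℕ) (η : ℕ → ℕ) (s : ℕ → ℕ → ℂ) (σ0 : Equiv.Perm (Fin (η 0)))
    (σ' : (a : Fin (K + 1)) → Equiv.Perm (Fin (η (a + 1)))) (a : ℕ) :
    sPerm (K + 3) η s
      (Fin.cons (α := fun a : Fin (K + 2) => Equiv.Perm (Fin (η a))) σ0 σ') (a + 1) =
    sPerm (K + 2) (fun a => η (a + 1)) (fun a => s (a + 1)) σ' a := by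
  funext i
  unfold sPerm
  by_cases h : a < K + 1 ∧ i < η (a + 1)
  · rw [dif_pos (show a + 1 < K + 3 - 1 ∧ i < η (a + 1) from ⟨by omega, h.2⟩),
      dif_pos (show a < K + 2 - 1 ∧ i < η (a + 1) from ⟨by omega, h.2⟩)]
    rfl
  · rw [dif_neg (show ¬ (a + 1 < K + 3 - 1 ∧ i < η (a + 1)) by intro h'; exact h ⟨by omega, h'.2⟩),
      dif_neg (show ¬ (a < K + 2 - 1 ∧ i < η (a + 1)) by intro h'; exact h ⟨by omega, h'.2⟩)]

lemma sPerm_zero (K : ℕ) (η : ℕ → ℕ) (s : ℕ → ℕ → ℂ)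
    (σ : (a : Fin (K + 1)) → Equiv.Perm (Fin (η a))) :
    sPerm (K + 2) η s σ 0 = pm (η 0) (s 0) (σ 0) := by
  funext i
  unfold sPerm pm
  by_cases h : i < η 0
  · rw [dif_pos (show 0 < K + 2 - 1 ∧ i < η 0 from ⟨by omega, h⟩), dif_pos h]
    rfl
  · rw [dif_neg (by intro h'; exact h h'.2), dif_neg h]

lemma sPerm_cons_zero (K : ℕ) (η : ℕ → ℕ) (s : ℕ → ℕ → ℂ) (σ0 : Equiv.Perm (Fin (η 0)))
    (σ' : (a : Fin (K + 1)) → Equiv.Perm (Fin (η (a + 1)))) :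
    sPerm (K + 3) η s
      (Fin.cons (α := fun a : Fin (K + 2) => Equiv.Perm (Fin (η a))) σ0 σ') 0 =
    pm (η 0) (s 0) σ0 :=
  sPerm_zero (K + 1) η s _

lemma Yfun_succ (K : ℕ) (η : ℕ → ℕ) (x : ℕ → ℕ → ℂ) :
    Yfun (K + 3) η x = Y1 (η 0) (η 1) (x 0) (x 1) *
      Yfun (K + 2) (fun a => η (a + 1)) (fun a => x (a + 1)) := by
  unfold Yfun
  rw [show K + 3 - 1 = K + 2 by omega, show K + 2 - 1 = K + 1 by omega,
    Finset.prod_eq_prod_Ico_succ_bot (by omega : 1 < K + 2)]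
  congr 1
  rw [← Finset.prod_Ico_add' _ 1 (K + 1) 1]
  refine Finset.prod_congr rfl fun a ha => ?_
  have ha := Finset.mem_Ico.1 ha
  simp only [show a + 1 - 1 = a - 1 + 1 by omega]

lemma Ffun_succ (K : ℕ) (η : ℕ → ℕ)
    (l : (a : Fin (K + 1)) → Fin (η ((a : ℕ) + 1)) → Fin (η (a : ℕ))) (x : ℕ → ℕ → ℂ) :
    Ffun (K + 3) η l x = F1 (η 0) (η 1) (l 0) (x 0) (x 1) *
      Ffun (K + 2) (fun a => η (a + 1)) (fun a => l a.succ) (fun a => x (a + 1)) := by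
  unfold Ffun
  exact Fin.prod_univ_succ _

lemma inj_fin (n : ℕ) (t : ℕ → ℂ) (h : ∀ i < n, ∀ j < n, i ≠ j → t i ≠ t j) :
    Function.Injective (fun i : Fin n => t i) := by
  intro i j hij
  by_contra hne
  exact h i i.2 j j.2 (fun h => hne (Fin.ext h)) hij

lemma pm_inj (n : ℕ) (t : ℕ → ℂ) (τ : Equiv.Perm (Fin n))
    (h : ∀ i < n, ∀ j < n, i ≠ j → t i ≠ t j) :
    ∀ i < n, ∀ j < n, i ≠ j → pm n t τ i ≠ pm n t τ j := by
  intro i hi j hj hij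
  simp only [pm, hi, hj, dif_pos]
  refine h _ (Fin.is_lt _) _ (Fin.is_lt _) (fun h => hij ?_)
  simpa using τ.injective (Fin.ext h)

lemma pm_ex_form (n : ℕ) (t : ℕ → ℂ) (τ : Equiv.Perm (Fin n)) {i : ℕ} (hi : i < n) :
    ∃ j < n, pm n t τ i = t j := ⟨τ ⟨i, hi⟩, (τ ⟨i, hi⟩).2, by simp [pm, hi]⟩

lemma LHS_eq (K : ℕ) : ∀ (η : ℕ → ℕ) (s : ℕ → ℕ → ℂ),
    (∀ a < K, η (a + 1) ≤ η a) →
    (∀ a < K + 1, ∀ i < η a, ∀ j < η a, i ≠ j → s a i ≠ s a j) →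
    (∀ a < K, ∀ i < η (a + 1), ∀ j < η a, s (a + 1) i ≠ s a j) →
    ∑ σ : (a : Fin (K + 1)) → Equiv.Perm (Fin (η a)),
        Yfun (K + 2) η (sPerm (K + 2) η s σ) *
          ∏ a ∈ Finset.range (K + 1), Wg (η a) (sPerm (K + 2) η s σ a) =
    (η K).factorial * ∏ a ∈ Finset.range K,
      ((η a - η (a + 1)).factorial * GG (VV η s (a + 1)) (VV η s a)) := by
  induction K with
  | zero =>
    intro η s _ hinj _
    have h := Wsum (η 0) (fun i => s 0 i) (inj_fin _ _ (hinj 0 (by omega)))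
    simp only [Finset.range_zero, Finset.prod_empty, mul_one, zero_add, Finset.prod_range_one]
    rw [← h]
    refine Fintype.sum_equiv (Equiv.piUnique (fun a : Fin 1 => Equiv.Perm (Fin (η a)))) _ _ ?_
    intro σ
    rw [sPerm_zero 0]
    have hY : ∀ x, Yfun 2 η x = 1 := by intro x; simp [Yfun]
    rw [hY, one_mul]
    exact Wg_congr _ _ _ (fun i hi => pm_ex (η 0) (s 0) (σ 0) hi)
  | succ K ih =>
    intro η s hmono hinj hcross
    have ih' := ih (fun a => η (a + 1)) (fun a => s (a + 1))
      (fun a ha => hmono _ (by omega)) (fun a ha => hinj _ (by omega))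
      (fun a ha => hcross _ (by omega))
    rw [← (Fin.consEquiv (fun a : Fin (K + 2) => Equiv.Perm (Fin (η a)))).sum_comp,
      Fintype.sum_prod_type_right]
    have key : ∀ σ' : (a : Fin (K + 1)) → Equiv.Perm (Fin (η (a + 1))),
        ∑ σ0 : Equiv.Perm (Fin (η 0)),
          Y1 (η 0) (η 1) (pm (η 0) (s 0) σ0) (sPerm (K + 2) (fun a => η (a + 1)) (fun a => s (a + 1)) σ' 0) *
            Wg (η 0) (pm (η 0) (s 0) σ0) =
        (η 0 - η 1).factorial * GG (VV η s 1) (VV η s 0) := by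
      intro σ'
      obtain ⟨σ1, e⟩ : ∃ σ1 : Equiv.Perm (Fin (η 1)),
          sPerm (K + 2) (fun a => η (a + 1)) (fun a => s (a + 1)) σ' 0 = pm (η 1) (s 1) σ1 :=
        ⟨σ' 0, sPerm_zero K (fun a => η (a + 1)) (fun a => s (a + 1)) σ'⟩
      rw [e]
      have h := LCore (η 1) (η 0) (hmono 0 (by omega)) (fun i => s 0 i) (pm (η 1) (s 1) σ1)
        (inj_fin _ _ (hinj 0 (by omega))) (pm_inj _ _ _ (hinj 1 (by omega))) (by
          intro i hi j
          obtain ⟨i', hi', h⟩ := pm_ex_form (η 1) (s 1) σ1 hi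
          rw [h]
          exact hcross 0 (by omega) i' hi' j j.2)
      rw [fin_image, pm_image] at h
      unfold VV
      rw [← h]
      refine Finset.sum_congr rfl fun σ0 _ => ?_
      rw [Wg_congr _ _ _ (fun i hi => pm_ex (η 0) (s 0) σ0 hi),
        Y1_congr _ _ (hmono 0 (by omega)) _ _ _ _ (fun i hi => pm_ex (η 0) (s 0) σ0 hi)
          (fun _ _ => rfl)]
    have main : ∀ (σ' : (a : Fin (K + 1)) → Equiv.Perm (Fin (η (a + 1))))
        (σ0 : Equiv.Perm (Fin (η 0))),
        Yfun (K + 3) η (sPerm (K + 3) η s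
            (Fin.cons (α := fun a : Fin (K + 2) => Equiv.Perm (Fin (η a))) σ0 σ')) *
          ∏ a ∈ Finset.range (K + 2), Wg (η a) (sPerm (K + 3) η s
            (Fin.cons (α := fun a : Fin (K + 2) => Equiv.Perm (Fin (η a))) σ0 σ') a) =
        (Y1 (η 0) (η 1) (pm (η 0) (s 0) σ0) (sPerm (K + 2) (fun a => η (a + 1)) (fun a => s (a + 1)) σ' 0) *
            Wg (η 0) (pm (η 0) (s 0) σ0)) *
        (Yfun (K + 2) (fun a => η (a + 1))
          (sPerm (K + 2) (fun a => η (a + 1)) (fun a => s (a + 1)) σ') *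
          ∏ a ∈ Finset.range (K + 1), Wg (η (a + 1))
            (sPerm (K + 2) (fun a => η (a + 1)) (fun a => s (a + 1)) σ' a)) := by
      intro σ' σ0
      rw [Yfun_succ, Finset.prod_range_succ']
      rw [show sPerm (K + 3) η s
            (Fin.cons (α := fun a : Fin (K + 2) => Equiv.Perm (Fin (η a))) σ0 σ') 1 =
            sPerm (K + 2) (fun a => η (a + 1)) (fun a => s (a + 1)) σ' 0 from
          sPerm_cons_succ K η s σ0 σ' 0]
      simp only [sPerm_cons_succ]
      rw [sPerm_cons_zero]
      ring
    have main2 : ∀ σ' : (a : Fin (K + 1)) → Equiv.Perm (Fin (η (a + 1))),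
        ∑ σ0 : Equiv.Perm (Fin (η 0)),
        Yfun (K + 3) η (sPerm (K + 3) η s
            (Fin.cons (α := fun a : Fin (K + 2) => Equiv.Perm (Fin (η a))) σ0 σ')) *
          ∏ a ∈ Finset.range (K + 2), Wg (η a) (sPerm (K + 3) η s
            (Fin.cons (α := fun a : Fin (K + 2) => Equiv.Perm (Fin (η a))) σ0 σ') a) =
        ((η 0 - η 1).factorial * GG (VV η s 1) (VV η s 0)) *
        (Yfun (K + 2) (fun a => η (a + 1))
          (sPerm (K + 2) (fun a => η (a + 1)) (fun a => s (a + 1)) σ') *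
          ∏ a ∈ Finset.range (K + 1), Wg (η (a + 1))
            (sPerm (K + 2) (fun a => η (a + 1)) (fun a => s (a + 1)) σ' a)) := by
      intro σ'
      rw [Finset.sum_congr rfl (fun σ0 _ => main σ' σ0), ← Finset.sum_mul, key]
    refine (Finset.sum_congr rfl (fun σ' _ => main2 σ')).trans ?_
    rw [← Finset.mul_sum, ih', Finset.prod_range_succ']
    simp only [VV]
    ring

lemma sum_filter_cons {K : ℕ} (α : Fin (K + 1) → Type) [∀ a, Fintype (α a)]
    (P : ∀ a, α a → Prop) (f : (∀ a, α a) → ℂ) :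
    ∑ l ∈ Finset.univ.filter (fun l : ∀ a, α a => ∀ a, P a (l a)), f l =
    ∑ l0 ∈ Finset.univ.filter (fun l0 : α 0 => P 0 l0),
      ∑ l' ∈ Finset.univ.filter (fun l' : ∀ a : Fin K, α a.succ => ∀ a, P a.succ (l' a)),
        f (Fin.cons l0 l') := by
  rw [← Finset.sum_product']
  symm
  refine Finset.sum_bij' (fun x _ => (Fin.cons x.1 x.2 : ∀ a, α a))
    (fun l _ => (l 0, fun a => l a.succ)) ?_ ?_ ?_ ?_ ?_
  · rintro ⟨l0, l'⟩ h
    simp only [Finset.mem_product, Finset.mem_filter, Finset.mem_univ, true_and] at h ⊢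
    intro a
    refine Fin.cases ?_ (fun a => ?_) a
    · exact h.1
    · exact h.2 a
  · intro l h
    simp only [Finset.mem_product, Finset.mem_filter, Finset.mem_univ, true_and] at h ⊢
    exact ⟨h 0, fun a => h _⟩
  · rintro ⟨l0, l'⟩ h
    rfl
  · intro l h
    exact Fin.cons_self_tail l
  · rintro ⟨l0, l'⟩ h
    rfl

lemma sum_filter_one {K : ℕ} (α : Fin (K + 1) → Type) [∀ a, Fintype (α a)]
    (c : α 0) (f : (∀ a, α a) → ℂ) :
    ∑ l ∈ Finset.univ.filter (fun l : ∀ a, α a => l 0 = c), f l =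
      ∑ l' : ∀ a : Fin K, α a.succ, f (Fin.cons c l') := by
  symm
  refine Finset.sum_bij' (fun x _ => (Fin.cons c x : ∀ a, α a))
    (fun l _ => (fun a => l a.succ)) ?_ ?_ ?_ ?_ ?_
  · intro l' h
    simp
  · intro l h
    simp
  · intro l' h
    rfl
  · intro l h
    simp only [Finset.mem_filter, Finset.mem_univ, true_and] at h
    rw [← h]
    exact Fin.cons_self_tail l
  · intro l' h
    rfl

lemma filter_inst {α : Type*} (s : Finset α) (p : α → Prop) (d1 d2 : DecidablePred p) :
    @Finset.filter α p d1 s = @Finset.filter α p d2 s := by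
  have : d1 = d2 := Subsingleton.elim _ _
  rw [this]

noncomputable def tw (η : ℕ → ℕ) (s : ℕ → ℕ → ℂ) (τ : Equiv.Perm (Fin (η 0))) : ℕ → ℕ → ℂ :=
  fun a => match a with
    | 0 => pm (η 0) (s 0) τ
    | a + 1 => s (a + 1)

lemma pm_one (n : ℕ) (t : ℕ → ℂ) : pm n t 1 = t := by
  funext i
  simp [pm]

lemma sPerm_twist (K : ℕ) (η : ℕ → ℕ) (s : ℕ → ℕ → ℂ) (τ : Equiv.Perm (Fin (η 0)))
    (σ' : (a : Fin K) → Equiv.Perm (Fin (η (a + 1)))) :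
    sPerm (K + 2) η s
      (Fin.cons (α := fun a : Fin (K + 1) => Equiv.Perm (Fin (η a))) τ σ') =
    sPerm (K + 2) η (tw η s τ)
      (Fin.cons (α := fun a : Fin (K + 1) => Equiv.Perm (Fin (η a))) 1 σ') := by
  funext a
  cases a with
  | zero =>
    rw [sPerm_zero, sPerm_zero]
    exact (pm_one (η 0) (pm (η 0) (s 0) τ)).symm
  | succ a => rfl

lemma VV_tw (η : ℕ → ℕ) (s : ℕ → ℕ → ℂ) (τ : Equiv.Perm (Fin (η 0))) (a : ℕ) :
    VV η (tw η s τ) a = VV η s a := by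
  cases a with
  | zero => exact pm_image (η 0) (s 0) τ
  | succ a => rfl

lemma termR (K : ℕ) (η : ℕ → ℕ) (l0 : Fin (η 1) → Fin (η 0))
    (l' : (a : Fin K) → Fin (η ((a : ℕ) + 1 + 1)) → Fin (η ((a : ℕ) + 1)))
    (x y : ℕ → ℕ → ℂ) (t u : ℕ → ℂ) (h0 : x 0 = t) (h1 : x 1 = u) (h2 : ∀ a, x (a + 1) = y a) :
    Ffun (K + 3) η
      (Fin.cons (α := fun a : Fin (K + 1) => Fin (η ((a : ℕ) + 1)) → Fin (η (a : ℕ))) l0 l') x *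
      ∏ a ∈ Finset.Ico 1 (K + 2), Wg (η a) (x a) =
    (F1 (η 0) (η 1) l0 t u * Wg (η 1) u) * (Ffun (K + 2) (fun a => η (a + 1)) l' y *
      ∏ a ∈ Finset.Ico 1 (K + 1), Wg (η (a + 1)) (y a)) := by
  have hF : Ffun (K + 3) η
      (Fin.cons (α := fun a : Fin (K + 1) => Fin (η ((a : ℕ) + 1)) → Fin (η (a : ℕ))) l0 l') x =
      F1 (η 0) (η 1) l0 (x 0) (x 1) *
        Ffun (K + 2) (fun a => η (a + 1)) l' (fun a => x (a + 1)) := Ffun_succ K η _ x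
  rw [hF, Finset.prod_eq_prod_Ico_succ_bot (by omega : 1 < K + 2),
    ← Finset.prod_Ico_add' _ 1 (K + 1) 1, h0, h1]
  simp only [h2]
  ring

lemma RHS_eq (K : ℕ) : ∀ (η : ℕ → ℕ) (s : ℕ → ℕ → ℂ),
    (∀ a < K + 1, ∀ i < η a, ∀ j < η a, i ≠ j → s a i ≠ s a j) →
    (∀ a < K, ∀ i < η (a + 1), ∀ j < η a, s (a + 1) i ≠ s a j) →
    ∑ l ∈ Finset.univ.filter
        (fun l : (a : Fin K) → Fin (η ((a : ℕ) + 1)) → Fin (η (a : ℕ)) => ∀ a, StrictMono (l a)),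
      ∑ σ' : (a : Fin K) → Equiv.Perm (Fin (η (a + 1))),
        Ffun (K + 2) η l (sPerm (K + 2) η s
          (Fin.cons (α := fun a : Fin (K + 1) => Equiv.Perm (Fin (η a))) 1 σ')) *
        ∏ a ∈ Finset.Ico 1 (K + 1), Wg (η a) (sPerm (K + 2) η s
          (Fin.cons (α := fun a : Fin (K + 1) => Equiv.Perm (Fin (η a))) 1 σ') a) =
    ∏ a ∈ Finset.range K, GG (VV η s (a + 1)) (VV η s a) := by
  induction K with
  | zero =>
    intro η s _ _
    have hF : ∀ l x, Ffun 2 η l x = 1 := by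
      intro l x; unfold Ffun; exact Finset.prod_empty
    rw [Finset.filter_true_of_mem (fun l _ a => a.elim0)]
    simp [hF]
  | succ K ih =>
    intro η s hinj hcross
    have ih' : ∀ τ : Equiv.Perm (Fin (η 1)), _ :=
      fun τ => ih (fun a => η (a + 1)) (tw (fun a => η (a + 1)) (fun a => s (a + 1)) τ)
      (by
        intro a ha
        cases a with
        | zero => exact pm_inj (η 1) (s 1) τ (hinj 1 (by omega))
        | succ a => exact hinj (a + 2) (by omega))
      (by
        intro a ha i hi j hj
        cases a with
        | zero =>
          obtain ⟨j', hj', e⟩ := pm_ex_form (η 1) (s 1) τ hj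
          have := hcross 1 (by omega) i hi j' hj'
          rw [← e] at this
          exact this
        | succ a => exact hcross (a + 2) (by omega) i hi j hj)
    have hl := sum_filter_cons (K := K)
      (fun a : Fin (K + 1) => Fin (η ((a : ℕ) + 1)) → Fin (η (a : ℕ)))
      (fun a l => StrictMono l)
      (fun l => ∑ σ' : (a : Fin (K + 1)) → Equiv.Perm (Fin (η (a + 1))),
        Ffun (K + 3) η l (sPerm (K + 3) η s
          (Fin.cons (α := fun a : Fin (K + 2) => Equiv.Perm (Fin (η a))) 1 σ')) *
        ∏ a ∈ Finset.Ico 1 (K + 2), Wg (η a) (sPerm (K + 3) η s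
          (Fin.cons (α := fun a : Fin (K + 2) => Equiv.Perm (Fin (η a))) 1 σ') a))
    refine Eq.trans (Finset.sum_congr (by ext l; simp) (fun _ _ => rfl)) (hl.trans ?_)
    have main : ∀ (l0 : Fin (η 1) → Fin (η 0))
        (l' : (a : Fin K) → Fin (η ((a : ℕ) + 1 + 1)) → Fin (η ((a : ℕ) + 1)))
        (τ : Equiv.Perm (Fin (η 1)))
        (σ'' : (a : Fin K) → Equiv.Perm (Fin (η (a + 1 + 1)))),
        Ffun (K + 3) η
          (Fin.cons (α := fun a : Fin (K + 1) => Fin (η ((a : ℕ) + 1)) → Fin (η (a : ℕ))) l0 l')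
          (sPerm (K + 3) η s
          (Fin.cons (α := fun a : Fin (K + 2) => Equiv.Perm (Fin (η a))) 1
            (Fin.cons (α := fun a : Fin (K + 1) => Equiv.Perm (Fin (η (a + 1)))) τ σ''))) *
        ∏ a ∈ Finset.Ico 1 (K + 2), Wg (η a) (sPerm (K + 3) η s
          (Fin.cons (α := fun a : Fin (K + 2) => Equiv.Perm (Fin (η a))) 1
            (Fin.cons (α := fun a : Fin (K + 1) => Equiv.Perm (Fin (η (a + 1)))) τ σ'')) a) =
        (F1 (η 0) (η 1) l0 (s 0) (pm (η 1) (s 1) τ) * Wg (η 1) (pm (η 1) (s 1) τ)) *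
        (Ffun (K + 2) (fun a => η (a + 1)) l' (sPerm (K + 2) (fun a => η (a + 1))
            (tw (fun a => η (a + 1)) (fun a => s (a + 1)) τ)
          (Fin.cons (α := fun a : Fin (K + 1) => Equiv.Perm (Fin (η (a + 1)))) 1 σ'')) *
        ∏ a ∈ Finset.Ico 1 (K + 1), Wg (η (a + 1)) (sPerm (K + 2) (fun a => η (a + 1))
            (tw (fun a => η (a + 1)) (fun a => s (a + 1)) τ)
          (Fin.cons (α := fun a : Fin (K + 1) => Equiv.Perm (Fin (η (a + 1)))) 1 σ'') a)) := by
      intro l0 l' τ σ''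
      have e0 := sPerm_cons_zero K η s 1
        (Fin.cons (α := fun a : Fin (K + 1) => Equiv.Perm (Fin (η (a + 1)))) τ σ'')
      rw [pm_one] at e0
      have e2 := sPerm_cons_succ K η s 1
        (Fin.cons (α := fun a : Fin (K + 1) => Equiv.Perm (Fin (η (a + 1)))) τ σ'')
      have e1 : sPerm (K + 3) η s (Fin.cons (α := fun a : Fin (K + 2) => Equiv.Perm (Fin (η a))) 1
            (Fin.cons (α := fun a : Fin (K + 1) => Equiv.Perm (Fin (η (a + 1)))) τ σ'')) 1
          = pm (η 1) (s 1) τ :=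
        (e2 0).trans (sPerm_zero K (fun a => η (a + 1)) (fun a => s (a + 1)) _)
      have e3 := sPerm_twist K (fun a => η (a + 1)) (fun a => s (a + 1)) τ σ''
      exact termR K η l0 l' _ _ _ _ e0 e1 (fun a => (e2 a).trans (congrFun e3 a))
    have main2 : ∀ (l0 : Fin (η 1) → Fin (η 0)),
        ∑ l' ∈ Finset.univ.filter (fun l' : (a : Fin K) → Fin (η ((a : ℕ) + 1 + 1)) →
            Fin (η ((a : ℕ) + 1)) => ∀ a, StrictMono (l' a)),
        ∑ σ' : (a : Fin (K + 1)) → Equiv.Perm (Fin (η (a + 1))),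
        Ffun (K + 3) η
          (Fin.cons (α := fun a : Fin (K + 1) => Fin (η ((a : ℕ) + 1)) → Fin (η (a : ℕ))) l0 l')
          (sPerm (K + 3) η s
          (Fin.cons (α := fun a : Fin (K + 2) => Equiv.Perm (Fin (η a))) 1 σ')) *
        ∏ a ∈ Finset.Ico 1 (K + 2), Wg (η a) (sPerm (K + 3) η s
          (Fin.cons (α := fun a : Fin (K + 2) => Equiv.Perm (Fin (η a))) 1 σ') a) =
        (∑ τ : Equiv.Perm (Fin (η 1)),
          F1 (η 0) (η 1) l0 (s 0) (pm (η 1) (s 1) τ) * Wg (η 1) (pm (η 1) (s 1) τ)) *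
        ∏ a ∈ Finset.range K, GG (VV η s (a + 2)) (VV η s (a + 1)) := by
      intro l0
      rw [Finset.sum_mul]
      have step : ∀ (l' : (a : Fin K) → Fin (η ((a : ℕ) + 1 + 1)) → Fin (η ((a : ℕ) + 1))),
          ∑ σ' : (a : Fin (K + 1)) → Equiv.Perm (Fin (η (a + 1))),
          Ffun (K + 3) η
            (Fin.cons (α := fun a : Fin (K + 1) => Fin (η ((a : ℕ) + 1)) → Fin (η (a : ℕ))) l0 l')
            (sPerm (K + 3) η s
            (Fin.cons (α := fun a : Fin (K + 2) => Equiv.Perm (Fin (η a))) 1 σ')) *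
          ∏ a ∈ Finset.Ico 1 (K + 2), Wg (η a) (sPerm (K + 3) η s
            (Fin.cons (α := fun a : Fin (K + 2) => Equiv.Perm (Fin (η a))) 1 σ') a) = ∑ τ : Equiv.Perm (Fin (η 1)), ∑ σ'' : (a : Fin K) → Equiv.Perm (Fin (η (a + 1 + 1))),
        (F1 (η 0) (η 1) l0 (s 0) (pm (η 1) (s 1) τ) * Wg (η 1) (pm (η 1) (s 1) τ)) *
        (Ffun (K + 2) (fun a => η (a + 1)) l' (sPerm (K + 2) (fun a => η (a + 1))
            (tw (fun a => η (a + 1)) (fun a => s (a + 1)) τ)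
          (Fin.cons (α := fun a : Fin (K + 1) => Equiv.Perm (Fin (η (a + 1)))) 1 σ'')) *
        ∏ a ∈ Finset.Ico 1 (K + 1), Wg (η (a + 1)) (sPerm (K + 2) (fun a => η (a + 1))
            (tw (fun a => η (a + 1)) (fun a => s (a + 1)) τ)
          (Fin.cons (α := fun a : Fin (K + 1) => Equiv.Perm (Fin (η (a + 1)))) 1 σ'') a)) := by
        intro l'
        rw [← (Fin.consEquiv (fun a : Fin (K + 1) => Equiv.Perm (Fin (η (a + 1))))).sum_comp,
          Fintype.sum_prod_type]
        exact Finset.sum_congr rfl fun τ _ => Finset.sum_congr rfl fun σ'' _ => main l0 l' τ σ''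
      refine (Finset.sum_congr rfl (fun l' _ => step l')).trans ?_
      rw [Finset.sum_comm]
      refine Finset.sum_congr rfl fun τ _ => ?_
      have h := ih' τ
      simp only [VV_tw] at h
      refine Eq.trans ?_ (congrArg (fun z => (F1 (η 0) (η 1) l0 (s 0) (pm (η 1) (s 1) τ) *
        Wg (η 1) (pm (η 1) (s 1) τ)) * z) h)
      simp only [Finset.mul_sum]
    have fin : ∑ l0 ∈ Finset.univ.filter (fun l0 : Fin (η 1) → Fin (η 0) => StrictMono l0),
        (∑ τ : Equiv.Perm (Fin (η 1)),
          F1 (η 0) (η 1) l0 (s 0) (pm (η 1) (s 1) τ) * Wg (η 1) (pm (η 1) (s 1) τ)) *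
        ∏ a ∈ Finset.range K, GG (VV η s (a + 2)) (VV η s (a + 1)) =
        ∏ a ∈ Finset.range (K + 1), GG (VV η s (a + 1)) (VV η s a) := by
      rw [← Finset.sum_mul, Finset.prod_range_succ', mul_comm]
      congr 1
      have hR := RCore (η 0) (η 1) (s 0) (fun i => s 1 i) (inj_fin _ _ (hinj 1 (by omega)))
        (hinj 0 (by omega)) (fun i hi j => hcross 0 (by omega) j j.2 i hi)
      rw [fin_image] at hR
      refine Eq.trans ?_ hR
      rw [Finset.sum_comm]
      refine Finset.sum_congr rfl fun τ _ => ?_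
      rw [← Finset.sum_mul]
      rw [Wg_congr _ _ _ (fun i hi => pm_ex (η 1) (s 1) τ hi)]
      congr 1
      unfold Fs
      refine Finset.sum_congr rfl fun l0 _ => ?_
      exact F1_congr _ _ _ _ _ _ _ (fun _ _ => rfl) (fun i hi => pm_ex (η 1) (s 1) τ hi)
    refine (Finset.sum_congr rfl (fun l0 _ => Eq.trans
      (Finset.sum_congr (filter_inst _ _ _ _) (fun _ _ => rfl)) (main2 l0))).trans ?_
    exact (Finset.sum_congr (filter_inst _ _ _ _) (fun _ _ => rfl)).trans fin

/-- Lemma FlY: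
`(1/η^{N−1}!) · ∏_{a=1}^{N−2} 1/(η^a − η^{a+1})! · S̄ym^η_s(Y_η(s)) = ∑_l S̄ym^{η̈}_{s̈}(F_l(s))`,
the sum over all collections `l` with `1 ≤ l^a_1 < … < l^a_{η^{a+1}} ≤ η^a`.
Here `S̄ym^η_s` sums over all tuples of permutations of the `N−1` groups of variables, with
weight `∏_a W_{η^a}`, and `S̄ym^{η̈}_{s̈}` only over the groups `a = 2, …, N−1`
(encoded by requiring the first permutation to be the identity), with weight
`∏_{a≥2} W_{η^a}`. -/
theorem FlY_identity (N : ℕ) (hN : 2 ≤ N) (η : ℕ → ℕ)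
    (hmono : ∀ a, a + 1 < N - 1 → η (a + 1) ≤ η a)
    (s : ℕ → ℕ → ℂ)
    (hinj : ∀ a < N - 1, ∀ i < η a, ∀ j < η a, i ≠ j → s a i ≠ s a j)
    (hcross : ∀ a, 1 ≤ a → a < N - 1 → ∀ i < η a, ∀ j < η (a - 1), s a i ≠ s (a - 1) j) :
    (1 / (Nat.factorial (η (N - 2)) : ℂ)) *
      (∏ a ∈ Finset.range (N - 2), (1 / (Nat.factorial (η a - η (a + 1)) : ℂ))) *
      (∑ σ : (a : Fin (N - 1)) → Equiv.Perm (Fin (η a)),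
        Yfun N η (sPerm N η s σ) *
          ∏ a ∈ Finset.range (N - 1), Wg (η a) (fun i => sPerm N η s σ a i)) =
    ∑ l ∈ Finset.univ.filter
        (fun l : (a : Fin (N - 1 - 1)) → Fin (η ((a : ℕ) + 1)) → Fin (η (a : ℕ)) =>
          ∀ a, StrictMono (l a)),
      ∑ σ ∈ Finset.univ.filter
          (fun σ : (a : Fin (N - 1)) → Equiv.Perm (Fin (η a)) =>
            σ ⟨0, by omega⟩ = 1),
        Ffun N η l (sPerm N η s σ) *
          ∏ a ∈ Finset.Ico 1 (N - 1), Wg (η a) (fun i => sPerm N η s σ a i) := by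
  obtain ⟨K, rfl⟩ : ∃ K, N = K + 2 := ⟨N - 2, by omega⟩
  have hL := LHS_eq K η s (fun a ha => hmono a (by omega)) (fun a ha => hinj a (by omega))
    (fun a ha i hi j hj => hcross (a + 1) (by omega) (by omega) i hi j hj)
  have hR := RHS_eq K η s (fun a ha => hinj a (by omega))
    (fun a ha i hi j hj => hcross (a + 1) (by omega) (by omega) i hi j hj)
  have hL' : (1 / (Nat.factorial (η K) : ℂ)) *
      (∏ a ∈ Finset.range K, (1 / (Nat.factorial (η a - η (a + 1)) : ℂ))) *
      ((η K).factorial * ∏ a ∈ Finset.range K,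
      ((η a - η (a + 1)).factorial * GG (VV η s (a + 1)) (VV η s a))) =
      ∏ a ∈ Finset.range K, GG (VV η s (a + 1)) (VV η s a) := by
    have h1 : ((η K).factorial : ℂ) ≠ 0 := Nat.cast_ne_zero.2 (Nat.factorial_ne_zero _)
    have h2 : ∀ A B : ℂ, 1 / ((η K).factorial : ℂ) * A * ((η K).factorial * B) = A * B := by
      intro A B; field_simp
    rw [h2, ← Finset.prod_mul_distrib]
    refine Finset.prod_congr rfl fun a _ => ?_
    have h3 : ((η a - η (a + 1)).factorial : ℂ) ≠ 0 := Nat.cast_ne_zero.2 (Nat.factorial_ne_zero _)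
    field_simp
  rw [← hL, ← hR] at hL'
  refine Eq.trans ?_ (hL'.trans ?_)
  · rfl
  · refine Finset.sum_congr rfl fun l _ => ?_
    refine Eq.trans (sum_filter_one (K := K) (fun a : Fin (K + 1) => Equiv.Perm (Fin (η a))) 1
      (fun σ => Ffun (K + 2) η l (sPerm (K + 2) η s σ) *
          ∏ a ∈ Finset.Ico 1 (K + 1), Wg (η a) (sPerm (K + 2) η s σ a))).symm
      (Finset.sum_congr (filter_inst _ _ _ _) (fun _ _ => rfl))
end
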